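/- arXiv:2110.15908 — 3 statements merged into one kernel-verified Lean document; each statement's English description precedes it below -/
import Mathlib

section
/- Let X be a smooth extremal surface of degree d = q+1 in ℙ³(k). Then any three pairwise skew lines on X are contained in exactly one quadric configuration on X: for pairwise skew lines L₁, L₂, L₃ on X there exists a unique quadric configuration on X containing L₁, L₂ and L₃ among its 2d lines. -/
open Module

/-! Basic setup: `k` is an algebraically closed field of characteristic `p > 0`,
`q = p^e`.  We model ℙ³(k) via linear subspaces of `k⁴ = Fin 4 → k`:
points, lines and planes of ℙ³(k) are subspaces of dimension 1, 2 and 3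
respectively.  A hypersurface cut out by a homogeneous form is recorded by its
affine cone in `k⁴`. -/

/-- The Frobenius form in 4 variables determined by a 4×4 matrix `A`:
`∑ i j, A i j * x i ^ q * x j`, a homogeneous form of degree `q+1`. -/
def frobForm {k : Type*} [Field k] (q : ℕ) (A : Matrix (Fin 4) (Fin 4) k)
    (x : Fin 4 → k) : k :=
  ∑ i, ∑ j, A i j * x i ^ q * x j

/-- The affine cone in `k⁴` of the extremal surface in ℙ³(k) cut out by the
Frobenius form with matrix `A`; a point of ℙ³(k) lies on the surface iff its
homogeneous coordinate representatives lie in this set. -/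
def extremalCone (k : Type*) [Field k] (q : ℕ) (A : Matrix (Fin 4) (Fin 4) k) :
    Set (Fin 4 → k) :=
  {x | frobForm q A x = 0}

/-- A point of ℙ³(k): a 1-dimensional subspace of `k⁴`. -/
def IsPoint {k : Type*} [Field k] (c : Submodule k (Fin 4 → k)) : Prop :=
  finrank k c = 1

/-- A line of ℙ³(k): a 2-dimensional subspace of `k⁴`. -/
def IsLine {k : Type*} [Field k] (L : Submodule k (Fin 4 → k)) : Prop :=
  finrank k L = 2

/-- A plane of ℙ³(k): a 3-dimensional subspace of `k⁴`. -/
def IsPlane {k : Type*} [Field k] (H : Submodule k (Fin 4 → k)) : Prop :=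
  finrank k H = 3

/-- `L` is a line lying on the surface with affine cone `X`. -/
def IsLineOn {k : Type*} [Field k] (X : Set (Fin 4 → k))
    (L : Submodule k (Fin 4 → k)) : Prop :=
  IsLine L ∧ (L : Set (Fin 4 → k)) ⊆ X

/-- Two lines of ℙ³(k) meet iff the corresponding subspaces of `k⁴` intersect
nontrivially. -/
def MeetsLine {k : Type*} [Field k] (L M : Submodule k (Fin 4 → k)) : Prop :=
  L ⊓ M ≠ ⊥

/-- Two lines of ℙ³(k) are skew iff the corresponding subspaces of `k⁴`
intersect trivially. -/
def SkewLine {k : Type*} [Field k] (L M : Submodule k (Fin 4 → k)) : Prop :=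
  L ⊓ M = ⊥

/-- `IsStarAt q X S c`: `S` is a star on the surface with affine cone `X`,
centered at the point `c`, i.e. a set of `q+1` distinct lines on the surface
all passing through `c`. -/
def IsStarAt {k : Type*} [Field k] (q : ℕ) (X : Set (Fin 4 → k))
    (S : Set (Submodule k (Fin 4 → k))) (c : Submodule k (Fin 4 → k)) : Prop :=
  IsPoint c ∧ S.ncard = q + 1 ∧ ∀ L ∈ S, IsLineOn X L ∧ c ≤ L

/-- `S` is a star on the surface with affine cone `X`. -/
def IsStar {k : Type*} [Field k] (q : ℕ) (X : Set (Fin 4 → k))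
    (S : Set (Submodule k (Fin 4 → k))) : Prop :=
  ∃ c, IsStarAt q X S c

/-- `c` is a star point of the surface with affine cone `X`. -/
def IsStarPoint {k : Type*} [Field k] (q : ℕ) (X : Set (Fin 4 → k))
    (c : Submodule k (Fin 4 → k)) : Prop :=
  ∃ S, IsStarAt q X S c

/-- `H` is a star plane of the surface with affine cone `X`, centered at `c`:
the plane section `X ∩ H` is the union of a star centered at `c`. -/
def IsStarPlaneAt {k : Type*} [Field k] (q : ℕ) (X : Set (Fin 4 → k))
    (H c : Submodule k (Fin 4 → k)) : Prop :=
  IsPlane H ∧ ∃ S, IsStarAt q X S c ∧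
    X ∩ (H : Set (Fin 4 → k)) = ⋃ L ∈ S, (L : Set (Fin 4 → k))

/-- An element of `Aut(X)`: since every projective linear automorphism of
ℙ³(k) is represented by an invertible linear map of `k⁴` (uniquely up to
scalars, which act trivially on subspaces and preserve every cone), `g ∈
PGL(4,k)` with `g(X) = X` corresponds to a linear automorphism of `k⁴`
mapping the affine cone `X` onto itself. -/
def PreservesCone {k : Type*} [Field k] (X : Set (Fin 4 → k))
    (g : (Fin 4 → k) ≃ₗ[k] (Fin 4 → k)) : Prop :=
  (⇑g) '' X = X

/-- A quadric configuration on the surface with affine cone `X` (of degree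
`d`): a set of `2d` lines on the surface that is the union of two sets of `d`
pairwise skew lines such that every line of either set meets every line of
the other set. -/
def IsQuadricConfig {k : Type*} [Field k] (d : ℕ) (X : Set (Fin 4 → k))
    (S : Set (Submodule k (Fin 4 → k))) : Prop :=
  S.ncard = 2 * d ∧ (∀ L ∈ S, IsLineOn X L) ∧
  ∃ ℒ ℳ : Set (Submodule k (Fin 4 → k)),
    S = ℒ ∪ ℳ ∧ ℒ.ncard = d ∧ ℳ.ncard = d ∧
    (∀ L ∈ ℒ, ∀ M ∈ ℒ, L ≠ M → SkewLine L M) ∧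
    (∀ L ∈ ℳ, ∀ M ∈ ℳ, L ≠ M → SkewLine L M) ∧
    (∀ L ∈ ℒ, ∀ M ∈ ℳ, MeetsLine L M)

section helpers

variable {k : Type*} [Field k]

/-- The sesquilinear pairing attached to a matrix. -/
def FB {n : ℕ} (q : ℕ) (A : Matrix (Fin n) (Fin n) k) (x y : Fin n → k) : k :=
  ∑ i, ∑ j, A i j * x i ^ q * y j

lemma FB_add_left {n q : ℕ} (hf : ∀ x y : k, (x + y) ^ q = x ^ q + y ^ q)
    (A : Matrix (Fin n) (Fin n) k) (x x' y : Fin n → k) :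
    FB q A (x + x') y = FB q A x y + FB q A x' y := by
  simp only [FB, Pi.add_apply, hf, mul_add, add_mul, Finset.sum_add_distrib]

lemma FB_add_right {n q : ℕ}
    (A : Matrix (Fin n) (Fin n) k) (x y y' : Fin n → k) :
    FB q A x (y + y') = FB q A x y + FB q A x y' := by
  simp only [FB, Pi.add_apply, mul_add, Finset.sum_add_distrib]

lemma FB_smul_left {n q : ℕ}
    (A : Matrix (Fin n) (Fin n) k) (c : k) (x y : Fin n → k) :
    FB q A (c • x) y = c ^ q * FB q A x y := by
  simp only [FB, Pi.smul_apply, smul_eq_mul, mul_pow, Finset.mul_sum]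
  refine Finset.sum_congr rfl fun i _ => Finset.sum_congr rfl fun j _ => by ring

lemma FB_smul_right {n q : ℕ}
    (A : Matrix (Fin n) (Fin n) k) (c : k) (x y : Fin n → k) :
    FB q A x (c • y) = c * FB q A x y := by
  simp only [FB, Pi.smul_apply, smul_eq_mul, Finset.mul_sum]
  refine Finset.sum_congr rfl fun i _ => Finset.sum_congr rfl fun j _ => by ring

lemma exists_pow_ne [Infinite k] (q : ℕ) (hq : 2 ≤ q) : ∃ t : k, t ^ q ≠ t := by
  classical
  by_contra! h
  have hne : (Polynomial.X ^ q - Polynomial.X : Polynomial k) ≠ 0 := by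
    intro h0
    have := congrArg (fun f => Polynomial.coeff f q) h0
    simp [Polynomial.coeff_X, show (1:ℕ) ≠ q by omega] at this
  apply hne
  apply Polynomial.funext
  intro r
  simp [h r]

lemma lin_frob_zero [Infinite k] (q : ℕ) (hq : 2 ≤ q) (c d : k)
    (h : ∀ t : k, t * c + t ^ q * d = 0) : c = 0 ∧ d = 0 := by
  obtain ⟨t, ht⟩ := exists_pow_ne (k := k) q hq
  have h1 := h 1
  have h2 := h t
  simp only [one_mul, one_pow] at h1
  have hd : d = 0 := by
    have : (t ^ q - t) * d = 0 := by linear_combination h2 - t * h1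
    exact (mul_eq_zero.mp this).resolve_left (sub_ne_zero.mpr ht)
  exact ⟨by simpa [hd] using h1, hd⟩

lemma isotropic [Infinite k] {q : ℕ} (hq : 2 ≤ q)
    (hf : ∀ x y : k, (x + y) ^ q = x ^ q + y ^ q)
    {A : Matrix (Fin 4) (Fin 4) k} {L : Submodule k (Fin 4 → k)}
    (h : (L : Set (Fin 4 → k)) ⊆ extremalCone k q A) {x y : Fin 4 → k}
    (hx : x ∈ L) (hy : y ∈ L) : FB q A x y = 0 := by
  have h0 : ∀ z ∈ L, FB q A z z = 0 := fun z hz => h hz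
  refine (lin_frob_zero q hq (FB q A x y) (FB q A y x) fun t => ?_).1
  have := h0 (x + t • y) (L.add_mem hx (L.smul_mem t hy))
  simp only [FB_add_left hf, FB_add_right, FB_smul_left, FB_smul_right, h0 x hx, h0 y hy] at this
  linear_combination this

/-- The area form on k². -/
def D2 (u v : Fin 2 → k) : k := u 0 * v 1 - u 1 * v 0

lemma exists_D2 {u : Fin 2 → k} (hu : u ≠ 0) : ∃ v, D2 u v ≠ 0 := by
  by_cases h : u 0 = 0
  · refine ⟨![1, 0], ?_⟩
    have : u 1 ≠ 0 := by
      intro h1; apply hu; ext i; fin_cases i <;> simp [h, h1]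
    simpa [D2] using this
  · exact ⟨![0, 1], by simpa [D2] using h⟩

lemma D2_decomp {u v : Fin 2 → k} (h : D2 u v ≠ 0) (w : Fin 2 → k) :
    w = (D2 w v / D2 u v) • u + (D2 u w / D2 u v) • v := by
  ext i
  simp only [Pi.add_apply, Pi.smul_apply, smul_eq_mul]
  field_simp
  fin_cases i <;> simp [D2] <;> ring

lemma D2_zero {u v : Fin 2 → k} (hu : u ≠ 0) (h : D2 u v = 0) : ∃ c : k, v = c • u := by
  obtain ⟨w, hw⟩ := exists_D2 hu
  refine ⟨D2 v w / D2 u w, ?_⟩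
  have := D2_decomp hw v
  rw [h] at this
  simpa using this

lemma D2_swap (u v : Fin 2 → k) : D2 u v = - D2 v u := by simp [D2]; ring

/-- Bilinear map k² × k² → k⁴. -/
abbrev BM (k : Type*) [Field k] := (Fin 2 → k) →ₗ[k] (Fin 2 → k) →ₗ[k] (Fin 4 → k)

/-- nondegeneracy in one variable -/
def NDG (T : BM k) : Prop :=
  ∀ a b, D2 a b ≠ 0 → ∀ u v, T a u + T b v = 0 → u = 0 ∧ v = 0

/-- Family of lines. -/
def fam (q : ℕ) (T : BM k) (R : Matrix (Fin 2) (Fin 2) k) : Set (Submodule k (Fin 4 → k)) :=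
  {N | ∃ a, a ≠ 0 ∧ FB q R a a = 0 ∧ N = LinearMap.range (T a)}

lemma NDG.inj {T : BM k} (hT : NDG T) {a : Fin 2 → k} (ha : a ≠ 0) {u : Fin 2 → k}
    (h : T a u = 0) : u = 0 := by
  obtain ⟨b, hb⟩ := exists_D2 ha
  exact (hT a b hb u 0 (by simp [h])).1

lemma NDG.finrank {T : BM k} (hT : NDG T) {a : Fin 2 → k} (ha : a ≠ 0) :
    finrank k (LinearMap.range (T a)) = 2 := by
  rw [LinearMap.finrank_range_of_inj]
  · simp
  · rw [← LinearMap.ker_eq_bot, LinearMap.ker_eq_bot']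
    exact fun u hu => hT.inj ha hu

lemma NDG.skew {T : BM k} (hT : NDG T) {a b : Fin 2 → k} (h : D2 a b ≠ 0) :
    LinearMap.range (T a) ⊓ LinearMap.range (T b) = ⊥ := by
  rw [Submodule.eq_bot_iff]
  rintro x ⟨⟨u, rfl⟩, ⟨v, hv⟩⟩
  have := (hT a b h u (-v) (by simp [hv])).1
  simp [this]

lemma range_smul_le (T : BM k) (a : Fin 2 → k) (c : k) :
    LinearMap.range (T (c • a)) ≤ LinearMap.range (T a) := by
  rintro _ ⟨u, rfl⟩
  exact ⟨c • u, by simp⟩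

lemma NDG.range_eq {T : BM k} (hT : NDG T) {a b : Fin 2 → k} (ha : a ≠ 0) (hb : b ≠ 0)
    (h : D2 a b = 0) : LinearMap.range (T a) = LinearMap.range (T b) := by
  obtain ⟨c, rfl⟩ := D2_zero ha h
  refine (Submodule.eq_of_le_of_finrank_eq (range_smul_le T a c) ?_).symm
  rw [hT.finrank ha, hT.finrank hb]

lemma line_ne_bot {L : Submodule k (Fin 4 → k)} (h : finrank k L = 2) : L ≠ ⊥ := by
  rintro rfl; simp at h

lemma NDG.range_eq_iff {T : BM k} (hT : NDG T) {a b : Fin 2 → k} (ha : a ≠ 0) (hb : b ≠ 0) :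
    LinearMap.range (T a) = LinearMap.range (T b) ↔ D2 a b = 0 := by
  refine ⟨fun h => ?_, hT.range_eq ha hb⟩
  by_contra hD
  have := hT.skew hD
  rw [← h, inf_idem] at this
  exact line_ne_bot (hT.finrank ha) this

lemma fam_skew {q : ℕ} {T : BM k} (hT : NDG T) {R : Matrix (Fin 2) (Fin 2) k}
    {L M : Submodule k (Fin 4 → k)} (hL : L ∈ fam q T R) (hM : M ∈ fam q T R) (hne : L ≠ M) :
    SkewLine L M := by
  obtain ⟨a, ha, -, rfl⟩ := hL
  obtain ⟨b, hb, -, rfl⟩ := hM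
  exact hT.skew fun h => hne (hT.range_eq ha hb h)

lemma fam_meets {q : ℕ} {T : BM k} (hT : NDG T) {R P : Matrix (Fin 2) (Fin 2) k}
    {L M : Submodule k (Fin 4 → k)} (hL : L ∈ fam q T R) (hM : M ∈ fam q T.flip P) :
    MeetsLine L M := by
  obtain ⟨a, ha, -, rfl⟩ := hL
  obtain ⟨u, hu, -, rfl⟩ := hM
  intro h
  have : T a u ∈ LinearMap.range (T a) ⊓ LinearMap.range (T.flip u) := ⟨⟨u, rfl⟩, ⟨a, rfl⟩⟩
  rw [h, Submodule.mem_bot] at this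
  exact hu (hT.inj ha this)

lemma FB_expand (q : ℕ) (R : Matrix (Fin 2) (Fin 2) k) (a : Fin 2 → k) :
    FB q R a a = R 0 0 * a 0 ^ (q + 1) + R 0 1 * a 0 ^ q * a 1 + R 1 0 * a 1 ^ q * a 0
      + R 1 1 * a 1 ^ (q + 1) := by
  simp [FB, Fin.sum_univ_two]; ring

open Polynomial in
lemma card_roots_sep [IsAlgClosed k] (f : k[X]) (h0 : f ≠ 0)
    (h : ∀ x, f.eval x = 0 → (derivative f).eval x ≠ 0) :
    ∃ s : Finset k, s.card = f.natDegree ∧ ∀ x, x ∈ s ↔ f.eval x = 0 := by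
  classical
  refine ⟨f.roots.toFinset, ?_, fun x => by simp [h0]⟩
  have hnd : f.roots.Nodup := by
    rw [Multiset.nodup_iff_count_le_one]
    intro x
    rw [count_roots]
    by_contra hlt
    push Not at hlt
    have := (one_lt_rootMultiplicity_iff_isRoot h0).mp hlt
    exact h x this.1 this.2
  rw [Multiset.toFinset_card_of_nodup hnd]
  exact (IsAlgClosed.splits f).natDegree_eq_card_roots.symm

open Polynomial in
lemma fam_ncard [IsAlgClosed k] {q : ℕ} (hq : 2 ≤ q) (hqk : (q : k) = 0)
    {T : BM k} (hT : NDG T)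
    {R : Matrix (Fin 2) (Fin 2) k} (hR : R.det ≠ 0) : (fam q T R).ncard = q + 1 := by
  classical
  rw [Matrix.det_fin_two] at hR
  set f : k[X] := C (R 0 0) * X ^ (q + 1) + C (R 0 1) * X ^ q + C (R 1 0) * X + C (R 1 1) with hfdef
  have hev : ∀ x, f.eval x = FB q R ![x, 1] ![x, 1] := by
    intro x; rw [FB_expand]; simp [hfdef]
  have hder : ∀ x, (derivative f).eval x = R 0 0 * x ^ q + R 1 0 := by
    intro x; simp [hfdef, hqk, derivative_X_pow]
  have hsep : ∀ x, f.eval x = 0 → (derivative f).eval x ≠ 0 := by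
    intro x hx hd
    rw [hder] at hd
    have hx' : R 0 1 * x ^ q + R 1 1 = 0 := by
      have : f.eval x = x * (R 0 0 * x ^ q + R 1 0) + (R 0 1 * x ^ q + R 1 1) := by
        simp [hfdef]; ring
      rw [hx, hd] at this
      simpa using this.symm
    apply hR
    by_cases h0 : R 0 0 = 0
    · have h1 : R 1 0 = 0 := by simpa [h0] using hd
      simp [h0, h1]
    · have hzz : R 0 0 * (R 0 0 * R 1 1 - R 0 1 * R 1 0) = 0 := by
        linear_combination R 0 0 * R 0 0 * hx' - R 0 0 * R 0 1 * hd
      exact (mul_eq_zero.mp hzz).resolve_left h0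
  have hv : ∀ x : k, (![x, 1] : Fin 2 → k) ≠ 0 := fun x h => by
    have := congrFun h 1; simp at this
  have hinj : Function.Injective fun x : k => LinearMap.range (T ![x, 1]) := by
    intro x y hxy
    have := (hT.range_eq_iff (hv x) (hv y)).mp hxy
    simp [D2] at this
    exact sub_eq_zero.mp this
  have hv0 : (![1, 0] : Fin 2 → k) ≠ 0 := fun h => by
    have := congrFun h 0; simp at this
  have hcase : ∀ a : Fin 2 → k, a ≠ 0 → FB q R a a = 0 →
      (∃ x, f.eval x = 0 ∧ LinearMap.range (T a) = LinearMap.range (T ![x, 1])) ∨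
      (R 0 0 = 0 ∧ LinearMap.range (T a) = LinearMap.range (T ![1, 0])) := by
    intro a ha hz
    by_cases h1 : a 1 = 0
    · right
      have h0 : a 0 ≠ 0 := by
        intro h0; apply ha; ext i; fin_cases i <;> simp [h0, h1]
      constructor
      · rw [FB_expand] at hz
        simp [h1, show q ≠ 0 by omega] at hz
        exact hz.resolve_right h0
      · exact hT.range_eq ha hv0 (by simp [D2, h1])
    · left
      refine ⟨a 0 / a 1, ?_, hT.range_eq ha (hv _) (by simp [D2]; field_simp; simp)⟩
      have hs : (![a 0 / a 1, 1] : Fin 2 → k) = (a 1)⁻¹ • a := by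
        ext i; fin_cases i <;> simp [h1]; field_simp
      rw [hev, hs, FB_smul_left, FB_smul_right, hz]; simp
  by_cases h0 : R 0 0 = 0
  · have h01 : R 0 1 ≠ 0 := fun h => hR (by simp [h0, h])
    have hdeg : f.natDegree = q := by
      have : f = C (R 0 1) * X ^ q + (C (R 1 0) * X + C (R 1 1)) := by
        rw [hfdef, h0]; simp; ring
      rw [this, natDegree_add_eq_left_of_natDegree_lt]
      · exact natDegree_C_mul_X_pow q _ h01
      · rw [natDegree_C_mul_X_pow q _ h01]
        exact lt_of_le_of_lt natDegree_linear_le (by omega)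
    obtain ⟨s, hs, hs'⟩ := card_roots_sep f (by rintro h; rw [h] at hdeg; simp at hdeg; omega) hsep
    have : fam q T R = insert (LinearMap.range (T ![1, 0]))
        ((fun x : k => LinearMap.range (T ![x, 1])) '' (s : Set k)) := by
      ext N
      simp only [fam, Set.mem_ofPred_eq, Set.mem_insert_iff, Set.mem_image, Finset.mem_coe, hs']
      constructor
      · rintro ⟨a, ha, hz, rfl⟩
        rcases hcase a ha hz with ⟨x, hx, e⟩ | ⟨-, e⟩
        · exact Or.inr ⟨x, hx, e.symm⟩
        · exact Or.inl e
      · rintro (rfl | ⟨x, hx, rfl⟩)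
        · exact ⟨_, hv0, by rw [FB_expand]; simp [h0, show q ≠ 0 by omega], rfl⟩
        · exact ⟨_, hv x, by rw [← hev, hx], rfl⟩
    rw [this, Set.ncard_insert_of_notMem, Set.ncard_image_of_injective _ hinj,
      Set.ncard_coe_finset, hs, hdeg]
    · rintro ⟨x, -, hx⟩
      have := (hT.range_eq_iff (hv x) hv0).mp hx
      simp [D2] at this
  · have hdeg : f.natDegree = q + 1 := by
      have : f = C (R 0 0) * X ^ (q + 1) + (C (R 0 1) * X ^ q + (C (R 1 0) * X + C (R 1 1))) := by
        rw [hfdef]; ring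
      rw [this, natDegree_add_eq_left_of_natDegree_lt]
      · exact natDegree_C_mul_X_pow _ _ h0
      · rw [natDegree_C_mul_X_pow _ _ h0]
        refine lt_of_le_of_lt (natDegree_add_le _ _) (max_lt ?_ ?_)
        · exact lt_of_le_of_lt (natDegree_C_mul_X_pow_le _ _) (by omega)
        · exact lt_of_le_of_lt natDegree_linear_le (by omega)
    obtain ⟨s, hs, hs'⟩ := card_roots_sep f (by rintro h; rw [h] at hdeg; simp at hdeg) hsep
    have : fam q T R = ((fun x : k => LinearMap.range (T ![x, 1])) '' (s : Set k)) := by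
      ext N
      simp only [fam, Set.mem_ofPred_eq, Set.mem_image, Finset.mem_coe, hs']
      constructor
      · rintro ⟨a, ha, hz, rfl⟩
        rcases hcase a ha hz with ⟨x, hx, e⟩ | ⟨h, e⟩
        · exact ⟨x, hx, e.symm⟩
        · exact absurd h h0
      · rintro ⟨x, hx, rfl⟩
        exact ⟨_, hv x, by rw [← hev, hx], rfl⟩
    rw [this, Set.ncard_image_of_injective _ hinj, Set.ncard_coe_finset, hs, hdeg]

lemma exists_nonzero [Infinite k] {q : ℕ} (hq : 2 ≤ q) {R : Matrix (Fin 2) (Fin 2) k}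
    (hR : R.det ≠ 0) : ∃ a, FB q R a a ≠ 0 := by
  by_contra! h
  have h0 := h ![1, 0]
  have h1 := h ![0, 1]
  simp [FB_expand, show q ≠ 0 by omega] at h0 h1
  have := lin_frob_zero q hq (R 1 0) (R 0 1) fun t => by
    have := h ![t, 1]
    simp [FB_expand, h0, h1] at this
    linear_combination this
  apply hR
  simp [Matrix.det_fin_two, h0, this.1]

/-- The compatibility of the bilinear map with the form. -/
def Compat (q : ℕ) (A : Matrix (Fin 4) (Fin 4) k) (T : BM k) (R P : Matrix (Fin 2) (Fin 2) k) :
    Prop :=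
  ∀ a u b v, FB q A (T a u) (T b v) = FB q R a b * FB q P u v

lemma Compat.flip {q : ℕ} {A : Matrix (Fin 4) (Fin 4) k} {T : BM k}
    {R P : Matrix (Fin 2) (Fin 2) k} (h : Compat q A T R P) : Compat q A T.flip P R := by
  intro a u b v
  simp only [LinearMap.flip_apply, h u a v b, mul_comm]

lemma fam_on {q : ℕ} {A : Matrix (Fin 4) (Fin 4) k} {T : BM k} (hT : NDG T)
    {R P : Matrix (Fin 2) (Fin 2) k} (h : Compat q A T R P) {L : Submodule k (Fin 4 → k)}
    (hL : L ∈ fam q T R) : IsLineOn (extremalCone k q A) L := by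
  obtain ⟨a, ha, hz, rfl⟩ := hL
  refine ⟨hT.finrank ha, ?_⟩
  rintro _ ⟨u, rfl⟩
  change FB q A _ _ = 0
  rw [h, hz, zero_mul]

lemma mem_fam_flip [Infinite k] {q : ℕ} (hq : 2 ≤ q) {A : Matrix (Fin 4) (Fin 4) k} {T : BM k}
    (hT : NDG T) (hT' : NDG T.flip)
    {R P : Matrix (Fin 2) (Fin 2) k} (hR : R.det ≠ 0) (h : Compat q A T R P)
    {L₁ L₂ L₃ N : Submodule k (Fin 4 → k)} (h1 : L₁ ∈ fam q T R) (h2 : L₂ ∈ fam q T R)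
    (h3 : L₃ ∈ fam q T R) (h12 : L₁ ≠ L₂) (h13 : L₁ ≠ L₃) (h23 : L₂ ≠ L₃)
    (hN : IsLineOn (extremalCone k q A) N) (m1 : MeetsLine L₁ N) (m2 : MeetsLine L₂ N)
    (m3 : MeetsLine L₃ N) : N ∈ fam q T.flip P := by
  obtain ⟨a, ha, -, rfl⟩ := h1
  obtain ⟨b, hb, -, rfl⟩ := h2
  obtain ⟨c, hc, -, rfl⟩ := h3
  have dab : D2 a b ≠ 0 := fun h => h12 (hT.range_eq ha hb h)
  have dac : D2 a c ≠ 0 := fun h => h13 (hT.range_eq ha hc h)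
  have dbc : D2 b c ≠ 0 := fun h => h23 (hT.range_eq hb hc h)
  obtain ⟨_, ⟨⟨u, rfl⟩, hu⟩, hu0⟩ := Submodule.exists_mem_ne_zero_of_ne_bot m1
  obtain ⟨_, ⟨⟨v, rfl⟩, hv⟩, hv0⟩ := Submodule.exists_mem_ne_zero_of_ne_bot m2
  obtain ⟨_, ⟨⟨w, rfl⟩, hw⟩, hw0⟩ := Submodule.exists_mem_ne_zero_of_ne_bot m3
  have hu' : u ≠ 0 := by rintro rfl; simp at hu0
  have hv' : v ≠ 0 := by rintro rfl; simp at hv0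
  have hw' : w ≠ 0 := by rintro rfl; simp at hw0
  have hli : LinearIndependent k ![T a u, T b v] := by
    rw [LinearIndependent.pair_iff]
    intro s t hst
    have := hT a b dab (s • u) (t • v) (by simpa using hst)
    simpa [hu', hv'] using this
  have hspan : Submodule.span k (Set.range ![T a u, T b v]) = N := by
    apply Submodule.eq_of_le_of_finrank_eq
    · rw [Submodule.span_le]
      rintro _ ⟨i, rfl⟩
      fin_cases i
      · exact hu
      · exact hv
    · rw [finrank_span_eq_card hli, hN.1]; simp
  have hwN : T c w ∈ Submodule.span k (Set.range ![T a u, T b v]) := hspan ▸ hw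
  rw [Matrix.range_cons, Matrix.range_cons, Matrix.range_empty, Set.union_empty,
    Set.singleton_union, Submodule.mem_span_pair] at hwN
  obtain ⟨s, t, hst⟩ := hwN
  set α := D2 c b / D2 a b with hα
  set β := D2 a c / D2 a b with hβ
  have hα0 : α ≠ 0 := div_ne_zero (by rw [D2_swap]; simpa using dbc) dab
  have hβ0 : β ≠ 0 := div_ne_zero dac dab
  have hcd : c = α • a + β • b := D2_decomp dab c
  have key := hT a b dab (s • u - α • w) (t • v - β • w) (by
    have e : T c w = α • T a w + β • T b w := by rw [hcd]; simp
    rw [e] at hst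
    simp only [map_sub, map_smul]
    rw [sub_add_sub_comm, hst, sub_self])
  have hNle : N ≤ LinearMap.range (T.flip w) := by
    have k1 : T a w = (α⁻¹ * s) • T a u := by
      have : α • w = s • u := (sub_eq_zero.mp key.1).symm
      have : w = (α⁻¹ * s) • u := by rw [mul_smul, ← this, smul_smul, inv_mul_cancel₀ hα0, one_smul]
      rw [← map_smul, ← this]
    have k2 : T b w = (β⁻¹ * t) • T b v := by
      have : β • w = t • v := (sub_eq_zero.mp key.2).symm
      have : w = (β⁻¹ * t) • v := by rw [mul_smul, ← this, smul_smul, inv_mul_cancel₀ hβ0, one_smul]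
      rw [← map_smul, ← this]
    have n1 : α⁻¹ * s ≠ 0 := by
      intro h0; rw [h0, zero_smul] at k1; exact hw' (hT.inj ha k1)
    have n2 : β⁻¹ * t ≠ 0 := by
      intro h0; rw [h0, zero_smul] at k2; exact hw' (hT.inj hb k2)
    rw [← hspan, Submodule.span_le]
    rintro _ ⟨i, rfl⟩
    fin_cases i
    · refine ⟨(α⁻¹ * s)⁻¹ • a, ?_⟩
      simp only [map_smul, LinearMap.flip_apply, k1]
      rw [smul_smul, inv_mul_cancel₀ n1]; simp
    · refine ⟨(β⁻¹ * t)⁻¹ • b, ?_⟩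
      simp only [map_smul, LinearMap.flip_apply, k2]
      rw [smul_smul, inv_mul_cancel₀ n2]; simp
  have hNeq : N = LinearMap.range (T.flip w) :=
    Submodule.eq_of_le_of_finrank_eq hNle (by rw [hN.1, hT'.finrank hw'])
  refine ⟨w, hw', ?_, hNeq⟩
  obtain ⟨z, hz⟩ := exists_nonzero hq hR
  have : FB q A (T z w) (T z w) = 0 := hN.2 (by rw [hNeq]; exact ⟨z, rfl⟩)
  rw [h] at this
  exact (mul_eq_zero.mp this).resolve_left hz

/-- The bilinear map attached to four vectors. -/
noncomputable def mkT (e0 e1 f0 f1 : Fin 4 → k) : BM k :=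
  LinearMap.mk₂ k (fun a u => a 0 • (u 0 • e0 + u 1 • e1) + a 1 • (u 0 • f0 + u 1 • f1))
    (by intros; simp only [Pi.add_apply]; module)
    (by intros; simp only [Pi.smul_apply, smul_eq_mul]; module)
    (by intros; simp only [Pi.add_apply]; module)
    (by intros; simp only [Pi.smul_apply, smul_eq_mul]; module)

lemma mkT_apply (e0 e1 f0 f1 : Fin 4 → k) (a u : Fin 2 → k) :
    mkT e0 e1 f0 f1 a u = a 0 • (u 0 • e0 + u 1 • e1) + a 1 • (u 0 • f0 + u 1 • f1) := rfl

lemma cramer2 {a b c d x y : k} (h : a * d - b * c ≠ 0) (h1 : a * x + c * y = 0)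
    (h2 : b * x + d * y = 0) : x = 0 ∧ y = 0 := by
  constructor
  · have : (a * d - b * c) * x = 0 := by linear_combination d * h1 - c * h2
    exact (mul_eq_zero.mp this).resolve_left h
  · have : (a * d - b * c) * y = 0 := by linear_combination a * h2 - b * h1
    exact (mul_eq_zero.mp this).resolve_left h

lemma construct [Infinite k] {q : ℕ} (hq : 2 ≤ q)
    (hf : ∀ x y : k, (x + y) ^ q = x ^ q + y ^ q)
    {A : Matrix (Fin 4) (Fin 4) k} (hA : IsUnit A)
    {L₁ L₂ L₃ : Submodule k (Fin 4 → k)}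
    (h₁ : IsLineOn (extremalCone k q A) L₁)
    (h₂ : IsLineOn (extremalCone k q A) L₂)
    (h₃ : IsLineOn (extremalCone k q A) L₃)
    (h12 : SkewLine L₁ L₂) (h13 : SkewLine L₁ L₃) (h23 : SkewLine L₂ L₃) :
    ∃ (T : BM k) (R P : Matrix (Fin 2) (Fin 2) k), NDG T ∧ NDG T.flip ∧ R.det ≠ 0 ∧ P.det ≠ 0 ∧
      Compat q A T R P ∧ L₁ ∈ fam q T R ∧ L₂ ∈ fam q T R ∧ L₃ ∈ fam q T R := by
  have hq0 : q ≠ 0 := by omega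
  have htop : L₁ ⊔ L₂ = ⊤ := by
    apply Submodule.eq_top_of_finrank_eq
    have := Submodule.finrank_sup_add_finrank_inf_eq L₁ L₂
    rw [show L₁ ⊓ L₂ = ⊥ from h12, h₁.1, h₂.1] at this
    simpa using this
  have hd : ∀ x : Fin 4 → k, ∃ y ∈ L₁, ∃ z ∈ L₂, y + z = x := fun x =>
    Submodule.mem_sup.mp (htop ▸ Submodule.mem_top)
  have b := Module.finBasisOfFinrankEq k L₃ h₃.1
  obtain ⟨e0, he0, f0, hf0, hg0⟩ := hd (b 0)
  obtain ⟨e1, he1, f1, hf1, hg1⟩ := hd (b 1)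
  have m0 : e0 + f0 ∈ L₃ := hg0 ▸ (b 0).2
  have m1 : e1 + f1 ∈ L₃ := hg1 ▸ (b 1).2
  have hbi : ∀ s t : k, s • (e0 + f0) + t • (e1 + f1) = 0 → s = 0 ∧ t = 0 := by
    intro s t hst
    have hli := b.linearIndependent
    have e : (b : Fin 2 → L₃) = ![b 0, b 1] := by ext i; fin_cases i <;> rfl
    rw [e, LinearIndependent.pair_iff] at hli
    apply hli
    rw [hg0, hg1] at hst
    exact Subtype.ext (by simpa using hst)
  have hmem : ∀ s t : k, s • (e0 + f0) + t • (e1 + f1) ∈ L₃ := fun s t =>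
    L₃.add_mem (L₃.smul_mem _ m0) (L₃.smul_mem _ m1)
  have hme : ∀ s t : k, s • e0 + t • e1 ∈ L₁ := fun s t =>
    L₁.add_mem (L₁.smul_mem _ he0) (L₁.smul_mem _ he1)
  have hmf : ∀ s t : k, s • f0 + t • f1 ∈ L₂ := fun s t =>
    L₂.add_mem (L₂.smul_mem _ hf0) (L₂.smul_mem _ hf1)
  have disj : ∀ {K M : Submodule k (Fin 4 → k)}, SkewLine K M → ∀ x, x ∈ K → x ∈ M → x = 0 := by
    intro K M hKM x hx hy
    have : x ∈ K ⊓ M := ⟨hx, hy⟩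
    rw [show K ⊓ M = ⊥ from hKM] at this
    simpa using this
  have hei : ∀ s t : k, s • e0 + t • e1 = 0 → s = 0 ∧ t = 0 := by
    intro s t hst
    apply hbi
    have e : s • (e0 + f0) + t • (e1 + f1) = s • f0 + t • f1 := by
      rw [← zero_add (s • f0 + t • f1), ← hst]; module
    exact disj h23 _ (e ▸ hmf s t) (hmem s t)
  have hfi : ∀ s t : k, s • f0 + t • f1 = 0 → s = 0 ∧ t = 0 := by
    intro s t hst
    apply hbi
    have e : s • (e0 + f0) + t • (e1 + f1) = s • e0 + t • e1 := by
      rw [← add_zero (s • e0 + t • e1), ← hst]; module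
    exact disj h13 _ (e ▸ hme s t) (hmem s t)
  have h4 : ∀ s t s' t' : k, (s • e0 + t • e1) + (s' • f0 + t' • f1) = 0 →
      s = 0 ∧ t = 0 ∧ s' = 0 ∧ t' = 0 := by
    intro s t s' t' h
    have e : s • e0 + t • e1 = 0 := by
      apply disj h12 _ (hme s t)
      rw [eq_neg_of_add_eq_zero_left h]
      exact L₂.neg_mem (hmf s' t')
    have e' : s' • f0 + t' • f1 = 0 := by simpa [e] using h
    exact ⟨(hei _ _ e).1, (hei _ _ e).2, (hfi _ _ e').1, (hfi _ _ e').2⟩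
  set T := mkT e0 e1 f0 f1 with hTdef
  have hT : NDG T := by
    intro a c hac u v h
    rw [hTdef, mkT_apply, mkT_apply] at h
    obtain ⟨q1, q2, q3, q4⟩ := h4 (a 0 * u 0 + c 0 * v 0) (a 0 * u 1 + c 0 * v 1)
      (a 1 * u 0 + c 1 * v 0) (a 1 * u 1 + c 1 * v 1) (by rw [← h]; module)
    have r1 := cramer2 hac q1 q3
    have r2 := cramer2 hac q2 q4
    constructor
    · ext i; fin_cases i
      · exact r1.1
      · exact r2.1
    · ext i; fin_cases i
      · exact r1.2
      · exact r2.2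
  have hT' : NDG T.flip := by
    intro a c hac u v h
    rw [LinearMap.flip_apply, LinearMap.flip_apply, hTdef, mkT_apply, mkT_apply] at h
    obtain ⟨q1, q2, q3, q4⟩ := h4 (a 0 * u 0 + c 0 * v 0) (a 1 * u 0 + c 1 * v 0)
      (a 0 * u 1 + c 0 * v 1) (a 1 * u 1 + c 1 * v 1) (by rw [← h]; module)
    have r1 := cramer2 hac q1 q2
    have r2 := cramer2 hac q3 q4
    constructor
    · ext i; fin_cases i
      · exact r1.1
      · exact r2.1
    · ext i; fin_cases i
      · exact r1.2
      · exact r2.2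
  set P : Matrix (Fin 2) (Fin 2) k :=
    !![FB q A e0 f0, FB q A e0 f1; FB q A e1 f0, FB q A e1 f1] with hP
  set R : Matrix (Fin 2) (Fin 2) k := !![0, 1; -1, 0] with hR
  have hcomp : Compat q A T R P := by
    have i1 := fun {x y} => isotropic (x := x) (y := y) hq hf h₁.2
    have i2 := fun {x y} => isotropic (x := x) (y := y) hq hf h₂.2
    have i3 := fun {x y} => isotropic (x := x) (y := y) hq hf h₃.2
    have cross : ∀ {e f e' f'}, e ∈ L₁ → f ∈ L₂ → e' ∈ L₁ → f' ∈ L₂ → e + f ∈ L₃ → e' + f' ∈ L₃ →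
        FB q A f e' = - FB q A e f' := by
      intro e f e' f' ha hb hc hd' hx hy
      have := i3 hx hy
      rw [FB_add_left hf, FB_add_right, FB_add_right, i1 ha hc, i2 hb hd'] at this
      linear_combination this
    intro a u c v
    simp only [hTdef, mkT_apply, FB_add_left hf, FB_add_right, FB_smul_left, FB_smul_right,
      i1 he0 he0, i1 he0 he1, i1 he1 he0, i1 he1 he1, i2 hf0 hf0, i2 hf0 hf1, i2 hf1 hf0,
      i2 hf1 hf1, cross he0 hf0 he0 hf0 m0 m0, cross he0 hf0 he1 hf1 m0 m1,
      cross he1 hf1 he0 hf0 m1 m0, cross he1 hf1 he1 hf1 m1 m1]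
    have eR : FB q R a c = a 0 ^ q * c 1 - a 1 ^ q * c 0 := by
      simp [FB, Fin.sum_univ_two, hR]; ring
    have eP : FB q P u v = FB q A e0 f0 * u 0 ^ q * v 0 + FB q A e0 f1 * u 0 ^ q * v 1
        + FB q A e1 f0 * u 1 ^ q * v 0 + FB q A e1 f1 * u 1 ^ q * v 1 := by
      simp [FB, Fin.sum_univ_two, hP]; ring
    rw [eR, eP]
    ring
  have hne : ∀ a : Fin 2 → k, a 0 ≠ 0 ∨ a 1 ≠ 0 → a ≠ 0 := by
    rintro a h rfl; simp at h
  have hrange : ∀ {L : Submodule k (Fin 4 → k)} (a : Fin 2 → k), finrank k L = 2 → a ≠ 0 →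
      (∀ u, T a u ∈ L) → L = LinearMap.range (T a) := by
    intro L a hL ha hu
    refine (Submodule.eq_of_le_of_finrank_eq ?_ ?_).symm
    · rintro _ ⟨u, rfl⟩; exact hu u
    · rw [hL, hT.finrank ha]
  have n1 : (![1, 0] : Fin 2 → k) ≠ 0 := hne _ (by simp)
  have n2 : (![0, 1] : Fin 2 → k) ≠ 0 := hne _ (by simp)
  have n3 : (![1, 1] : Fin 2 → k) ≠ 0 := hne _ (by simp)
  have r1 : L₁ = LinearMap.range (T ![1, 0]) := hrange _ h₁.1 n1 fun u => by
    rw [hTdef, mkT_apply]; simpa using hme (u 0) (u 1)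
  have r2 : L₂ = LinearMap.range (T ![0, 1]) := hrange _ h₂.1 n2 fun u => by
    rw [hTdef, mkT_apply]; simpa using hmf (u 0) (u 1)
  have r3 : L₃ = LinearMap.range (T ![1, 1]) := hrange _ h₃.1 n3 fun u => by
    rw [hTdef, mkT_apply]
    have : (![1, 1] : Fin 2 → k) 0 • (u 0 • e0 + u 1 • e1) + (![1, 1] : Fin 2 → k) 1 • (u 0 • f0 + u 1 • f1)
      = u 0 • (e0 + f0) + u 1 • (e1 + f1) := by simp; module
    rw [this]; exact hmem _ _
  have hRdet : R.det ≠ 0 := by simp [hR]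
  refine ⟨T, R, P, hT, hT', hRdet, ?_, hcomp, ⟨_, n1, ?_, r1⟩, ⟨_, n2, ?_, r2⟩, ⟨_, n3, ?_, r3⟩⟩
  · intro hdet
    obtain ⟨v, hv0, hv⟩ := Matrix.exists_mulVec_eq_zero_iff.mpr hdet
    have hPv : ∀ u, FB q P u v = 0 := by
      intro u
      have w0 := congrFun hv 0
      have w1 := congrFun hv 1
      simp only [Matrix.mulVec, dotProduct, Fin.sum_univ_two, Pi.zero_apply] at w0 w1
      simp only [FB, Fin.sum_univ_two]
      linear_combination u 0 ^ q * w0 + u 1 ^ q * w1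
    have hall : ∀ x, FB q A x (T ![1, 0] v) = 0 := by
      intro x
      obtain ⟨y, hy, z, hz, rfl⟩ := hd x
      rw [r1] at hy
      rw [r2] at hz
      obtain ⟨y, rfl⟩ := hy
      obtain ⟨z, rfl⟩ := hz
      rw [FB_add_left hf, hcomp, hcomp, hPv, hPv]; simp
    have hAy : A.mulVec (T ![1, 0] v) = 0 := by
      ext i
      have := hall (Pi.single i 1)
      rw [FB, Finset.sum_eq_single i] at this
      · simpa [Matrix.mulVec, dotProduct] using this
      · intro j _ hj
        simp [hj, hq0]
      · simp
    have hy0 : T ![1, 0] v = 0 := by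
      apply Matrix.mulVec_injective_of_isUnit hA
      rw [hAy, Matrix.mulVec_zero]
    exact hv0 (hT.inj n1 hy0)
  · simp [FB_expand, hR, hq0]
  · simp [FB_expand, hR, hq0]
  · simp [FB_expand, hR]

lemma exists_three {α : Type*} {s : Set α} (h : 3 ≤ s.ncard) :
    ∃ x ∈ s, ∃ y ∈ s, ∃ z ∈ s, x ≠ y ∧ x ≠ z ∧ y ≠ z := by
  obtain ⟨x, y, z, hx, hy, hz, h⟩ := (Set.two_lt_ncard_iff
    (Set.finite_of_ncard_pos (by omega))).mp (show 2 < s.ncard by omega)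
  exact ⟨x, hx, y, hy, z, hz, h⟩

lemma MeetsLine.symm' {L M : Submodule k (Fin 4 → k)} (h : MeetsLine L M) : MeetsLine M L := by
  rwa [MeetsLine, inf_comm]

lemma uniq [IsAlgClosed k] {q : ℕ} (hq : 2 ≤ q) (hqk : (q : k) = 0)
    {A : Matrix (Fin 4) (Fin 4) k} {T : BM k} (hT : NDG T) (hT' : NDG T.flip)
    {R P : Matrix (Fin 2) (Fin 2) k} (hR : R.det ≠ 0) (hP : P.det ≠ 0) (hc : Compat q A T R P)
    {L₁ L₂ L₃ : Submodule k (Fin 4 → k)} (m1 : L₁ ∈ fam q T R) (m2 : L₂ ∈ fam q T R)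
    (m3 : L₃ ∈ fam q T R) (h12 : SkewLine L₁ L₂) (h13 : SkewLine L₁ L₃)
    (n12 : L₁ ≠ L₂) (n13 : L₁ ≠ L₃) (n23 : L₂ ≠ L₃)
    {ℒ ℳ : Set (Submodule k (Fin 4 → k))}
    (hon : ∀ L ∈ ℒ ∪ ℳ, IsLineOn (extremalCone k q A) L)
    (cL : ℒ.ncard = q + 1) (cM : ℳ.ncard = q + 1)
    (hmeet : ∀ L ∈ ℒ, ∀ M ∈ ℳ, MeetsLine L M)
    (i1 : L₁ ∈ ℒ) (i2 : L₂ ∈ ℒ ∪ ℳ) (i3 : L₃ ∈ ℒ ∪ ℳ) :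
    ℒ = fam q T R ∧ ℳ = fam q T.flip P := by
  haveI : Infinite k := IsAlgClosed.instInfinite
  have j2 : L₂ ∈ ℒ := i2.resolve_right fun h => hmeet _ i1 _ h h12
  have j3 : L₃ ∈ ℒ := i3.resolve_right fun h => hmeet _ i1 _ h h13
  have c1 := fam_ncard hq hqk hT hR
  have c2 := fam_ncard hq hqk hT' hP
  have hM : ℳ = fam q T.flip P := by
    apply Set.eq_of_subset_of_ncard_le
    · intro N hN
      exact mem_fam_flip hq hT hT' hR hc m1 m2 m3 n12 n13 n23 (hon N (Or.inr hN))
        (hmeet _ i1 _ hN) (hmeet _ j2 _ hN) (hmeet _ j3 _ hN)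
    · omega
    · exact Set.finite_of_ncard_pos (by omega)
  refine ⟨?_, hM⟩
  obtain ⟨x, hx, y, hy, z, hz, nxy, nxz, nyz⟩ := exists_three (s := ℳ) (by omega)
  apply Set.eq_of_subset_of_ncard_le
  · intro N hN
    have := mem_fam_flip hq hT' (by simpa using hT) hP hc.flip (hM ▸ hx) (hM ▸ hy) (hM ▸ hz) nxy nxz nyz
      (hon N (Or.inl hN)) (hmeet _ hN _ hx).symm' (hmeet _ hN _ hy).symm' (hmeet _ hN _ hz).symm'
    simpa using this
  · omega
  · exact Set.finite_of_ncard_pos (by omega)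

end helpers

/-- On a smooth extremal surface `X` of degree `d = q+1`,
any three pairwise skew lines on `X` are contained in exactly one quadric
configuration on `X`. -/
theorem triple_skew_in_unique_quadric_config {k : Type*} [Field k] [IsAlgClosed k]
    (p e q : ℕ) (hp : p.Prime) (hchar : CharP k p) (he : 1 ≤ e) (hq : q = p ^ e)
    (A : Matrix (Fin 4) (Fin 4) k) (hA : IsUnit A)
    (L₁ L₂ L₃ : Submodule k (Fin 4 → k))
    (h₁ : IsLineOn (extremalCone k q A) L₁)
    (h₂ : IsLineOn (extremalCone k q A) L₂)
    (h₃ : IsLineOn (extremalCone k q A) L₃)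
    (h12 : SkewLine L₁ L₂) (h13 : SkewLine L₁ L₃) (h23 : SkewLine L₂ L₃) :
    ∃! S : Set (Submodule k (Fin 4 → k)),
      IsQuadricConfig (q + 1) (extremalCone k q A) S ∧ L₁ ∈ S ∧ L₂ ∈ S ∧ L₃ ∈ S := by
  haveI : Infinite k := IsAlgClosed.instInfinite
  haveI := hchar
  haveI : Fact p.Prime := ⟨hp⟩
  have hq2 : 2 ≤ q := by
    rw [hq]; exact hp.two_le.trans (Nat.le_self_pow (by omega) p)
  have hf : ∀ x y : k, (x + y) ^ q = x ^ q + y ^ q := by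
    intro x y; rw [hq]; exact add_pow_char_pow x y p e
  have hqk : (q : k) = 0 := by
    rw [CharP.cast_eq_zero_iff k p, hq]; exact dvd_pow_self p (by omega)
  obtain ⟨T, R, P, hT, hT', hR, hP, hc, m1, m2, m3⟩ :=
    construct hq2 hf hA h₁ h₂ h₃ h12 h13 h23
  have skne : ∀ {K M : Submodule k (Fin 4 → k)}, finrank k K = 2 → SkewLine K M → K ≠ M := by
    rintro K M hK hs rfl
    exact line_ne_bot hK (by simpa [SkewLine] using hs)
  have n12 := skne h₁.1 h12
  have n13 := skne h₁.1 h13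
  have n23 := skne h₂.1 h23
  have c1 := fam_ncard hq2 hqk hT hR
  have c2 := fam_ncard hq2 hqk hT' hP
  have hdisj : Disjoint (fam q T R) (fam q T.flip P) := by
    rw [Set.disjoint_left]
    intro N hN hN'
    by_cases hN1 : L₁ = N
    · have : L₂ ≠ N := fun h => n12 (hN1.trans h.symm)
      exact fam_meets hT m2 hN' (fam_skew hT m2 hN this)
    · exact fam_meets hT m1 hN' (fam_skew hT m1 hN hN1)
  refine ⟨fam q T R ∪ fam q T.flip P, ⟨⟨?_, ?_, fam q T R, fam q T.flip P, rfl, c1, c2, ?_, ?_, ?_⟩,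
    Or.inl m1, Or.inl m2, Or.inl m3⟩, ?_⟩
  · rw [Set.ncard_union_eq hdisj (Set.finite_of_ncard_pos (by omega))
      (Set.finite_of_ncard_pos (by omega)), c1, c2]
    ring
  · rintro L (hL | hL)
    · exact fam_on hT hc hL
    · exact fam_on hT' hc.flip hL
  · exact fun L hL M hM h => fam_skew hT hL hM h
  · exact fun L hL M hM h => fam_skew hT' hL hM h
  · exact fun L hL M hM => fam_meets hT hL hM
  · rintro S ⟨⟨-, hon, ℒ, ℳ, rfl, cL, cM, -, -, hmeet⟩, i1, i2, i3⟩
    rcases i1 with i1 | i1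
    · obtain ⟨e1, e2⟩ := uniq hq2 hqk hT hT' hR hP hc m1 m2 m3 h12 h13 n12 n13 n23 hon cL cM hmeet
        i1 i2 i3
      rw [e1, e2]
    · rw [Set.union_comm] at hon i2 i3
      obtain ⟨e1, e2⟩ := uniq hq2 hqk hT hT' hR hP hc m1 m2 m3 h12 h13 n12 n13 n23 hon cM cL
        (fun L hL M hM => (hmeet M hM L hL).symm') i1 i2 i3
      rw [e1, e2, Set.union_comm]
end

section
/- Let X be a smooth extremal surface of degree q+1 in ℙ³(k). Then Aut(X) acts transitively on the set of ordered triples of pairwise skew lines on X: for any pairwise skew lines L₁, L₂, L₃ on X and any pairwise skew lines M₁, M₂, M₃ on X, there exists g ∈ Aut(X) with g(Lᵢ) = Mᵢ for i = 1, 2, 3. -/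
open Module

section Helpers

variable {k : Type*} [Field k]

/-- The sesquilinear form attached to `A`. -/
def sesq (q : ℕ) (A : Matrix (Fin 4) (Fin 4) k) (x y : Fin 4 → k) : k :=
  ∑ i, ∑ j, A i j * x i ^ q * y j

lemma sesq_self (q : ℕ) (A : Matrix (Fin 4) (Fin 4) k) (x : Fin 4 → k) :
    sesq q A x x = frobForm q A x := rfl

lemma sesq_add_right (q : ℕ) (A : Matrix (Fin 4) (Fin 4) k) (x y z : Fin 4 → k) :
    sesq q A x (y + z) = sesq q A x y + sesq q A x z := by
  simp only [sesq, Pi.add_apply, mul_add, Finset.sum_add_distrib]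

lemma sesq_smul_right (q : ℕ) (A : Matrix (Fin 4) (Fin 4) k) (t : k) (x y : Fin 4 → k) :
    sesq q A x (t • y) = t * sesq q A x y := by
  simp only [sesq, Pi.smul_apply, smul_eq_mul, Finset.mul_sum]
  refine Finset.sum_congr rfl fun i _ => Finset.sum_congr rfl fun j _ => by ring

lemma sesq_smul_left (q : ℕ) (A : Matrix (Fin 4) (Fin 4) k) (t : k) (x y : Fin 4 → k) :
    sesq q A (t • x) y = t ^ q * sesq q A x y := by
  simp only [sesq, Pi.smul_apply, smul_eq_mul, Finset.mul_sum]
  refine Finset.sum_congr rfl fun i _ => Finset.sum_congr rfl fun j _ => by ring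

lemma sesq_add_left (q : ℕ) (hadd : ∀ x y : k, (x + y) ^ q = x ^ q + y ^ q)
    (A : Matrix (Fin 4) (Fin 4) k) (x y z : Fin 4 → k) :
    sesq q A (x + y) z = sesq q A x z + sesq q A y z := by
  simp only [sesq, Pi.add_apply, hadd, mul_add, add_mul, Finset.sum_add_distrib]

lemma sesq_nondeg (q : ℕ) (hq : q ≠ 0) (A : Matrix (Fin 4) (Fin 4) k) (hA : IsUnit A)
    (y : Fin 4 → k) (h : ∀ x, sesq q A x y = 0) : y = 0 := by
  have h1 : A.mulVec y = 0 := by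
    funext i
    have := h (Pi.single i 1)
    simp only [sesq] at this
    rw [Finset.sum_eq_single i] at this
    · simpa [Matrix.mulVec, dotProduct] using this
    · intro b _ hb
      simp [hb, hq]
    · simp
  have := Matrix.mulVec_injective_of_isUnit hA
  exact this (by simpa using h1)

/-- A line on the surface is totally isotropic. -/
lemma sesq_isotropic [Infinite k] (q : ℕ) (hq : 2 ≤ q)
    (hadd : ∀ x y : k, (x + y) ^ q = x ^ q + y ^ q)
    (A : Matrix (Fin 4) (Fin 4) k) (L : Submodule k (Fin 4 → k))
    (hL : (L : Set (Fin 4 → k)) ⊆ extremalCone k q A) (x y : Fin 4 → k)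
    (hx : x ∈ L) (hy : y ∈ L) : sesq q A x y = 0 := by
  have h0 : ∀ z ∈ L, sesq q A z z = 0 := fun z hz => hL hz
  have key : ∀ t : k, t * sesq q A x y + t ^ q * sesq q A y x = 0 := by
    intro t
    have h := h0 (x + t • y) (L.add_mem hx (L.smul_mem t hy))
    simp only [sesq_add_right, sesq_add_left q hadd, sesq_smul_left, sesq_smul_right,
      h0 x hx, h0 y hy] at h
    linear_combination h
  obtain ⟨t, ht⟩ : ∃ t : k, t ^ q - t ≠ 0 := by
    by_contra! hc
    have hne : (Polynomial.X ^ q - Polynomial.X : Polynomial k) ≠ 0 :=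
      FiniteField.X_pow_card_sub_X_ne_zero k (by omega)
    exact hne (Polynomial.funext fun t => by simpa using hc t)
  have h1 := key 1
  have h2 := key t
  simp only [one_pow, one_mul] at h1
  have : (t ^ q - t) * sesq q A x y = 0 := by linear_combination t ^ q * h1 - h2
  exact (mul_eq_zero.1 this).resolve_left ht

lemma exists_root_top [IsAlgClosed k] (q : ℕ) (hq : 2 ≤ q) (a b c d : k) (ha : a ≠ 0) :
    ∃ r : k, a * r ^ (q + 1) + b * r ^ q + c * r + d = 0 := by
  open Polynomial in
  let P : k[X] := C a * X ^ (q + 1) + (C b * X ^ q + C c * X + C d)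
  have h1 : (C a * X ^ (q + 1) : Polynomial k).degree = ((q + 1 : ℕ) : WithBot ℕ) :=
    Polynomial.degree_C_mul_X_pow _ ha
  have h2 : (C b * X ^ q + C c * X + C d : Polynomial k).degree ≤ (q : WithBot ℕ) := by
    compute_degree
    all_goals exact max_le (le_refl _) (by exact_mod_cast (by omega : 1 ≤ q))
  have hP : P.degree = ((q + 1 : ℕ) : WithBot ℕ) := by
    rw [← h1]
    apply Polynomial.degree_add_eq_left_of_degree_lt
    rw [h1]
    exact lt_of_le_of_lt h2 (by exact_mod_cast Nat.lt_succ_self q)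
  obtain ⟨r, hr⟩ := IsAlgClosed.exists_root P (by rw [hP]; exact_mod_cast Nat.succ_ne_zero q)
  refine ⟨r, ?_⟩
  simp only [P, Polynomial.IsRoot.def, Polynomial.eval_add, Polynomial.eval_mul,
    Polynomial.eval_C, Polynomial.eval_pow, Polynomial.eval_X] at hr
  linear_combination hr

/-- Normal form of nondegenerate Frobenius forms in two variables. -/
lemma binary_normal_form [IsAlgClosed k] (q : ℕ) (hq : 2 ≤ q)
    (hadd : ∀ x y : k, (x + y) ^ q = x ^ q + y ^ q)
    (a b c d : k) (hdet : a * d - b * c ≠ 0)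
    (g : k → k → k → k → k)
    (hg : ∀ x1 x2 y1 y2, g x1 x2 y1 y2 =
      a * x1 ^ q * y1 + b * x1 ^ q * y2 + c * x2 ^ q * y1 + d * x2 ^ q * y2) :
    ∃ x1 x2 y1 y2 : k, g x1 x2 x1 x2 = 0 ∧ g y1 y2 y1 y2 = 0 ∧ g x1 x2 y1 y2 = 1 ∧
      g y1 y2 x1 x2 = 1 := by
  have hq0 : q ≠ 0 := by omega
  obtain ⟨x1, x2, w1, w2, hxx, hxw, hwx⟩ : ∃ x1 x2 w1 w2 : k,
      g x1 x2 x1 x2 = 0 ∧ g x1 x2 w1 w2 ≠ 0 ∧ g w1 w2 x1 x2 ≠ 0 := by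
    by_cases ha : a = 0
    · refine ⟨1, 0, 0, 1, ?_, ?_, ?_⟩ <;> simp only [hg] <;> simp [hq0, ha]
      · rintro rfl; simp [ha] at hdet
      · rintro rfl; simp [ha] at hdet
    · obtain ⟨r, hr⟩ := exists_root_top q hq a b c d ha
      refine ⟨r, 1, 1, 0, ?_, ?_, ?_⟩ <;> simp only [hg] <;> simp [hq0]
      · linear_combination hr
      · intro h
        apply hdet
        linear_combination a * hr - (a * r + b) * h
      · intro h
        apply hdet
        linear_combination a * hr - (a * r ^ q + c) * h
  obtain ⟨t, ht⟩ : ∃ t : k, g x1 x2 w1 w2 * t ^ q + g w1 w2 x1 x2 * t + g w1 w2 w1 w2 = 0 := by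
    obtain ⟨q', rfl⟩ : ∃ q', q = q' + 1 := ⟨q - 1, by omega⟩
    rcases Nat.lt_or_ge q' 2 with h | h
    · obtain rfl : q' = 1 := by omega
      obtain ⟨r, hr⟩ := IsAlgClosed.exists_root
        (Polynomial.C (g x1 x2 w1 w2) * Polynomial.X ^ 2 +
          Polynomial.C (g w1 w2 x1 x2) * Polynomial.X + Polynomial.C (g w1 w2 w1 w2))
        (by rw [Polynomial.degree_quadratic hxw]; decide)
      refine ⟨r, ?_⟩
      simpa using hr
    · obtain ⟨r, hr⟩ := exists_root_top q' h _ 0 (g w1 w2 x1 x2) (g w1 w2 w1 w2) hxw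
      exact ⟨r, by linear_combination hr⟩
  set β := g x1 x2 w1 w2 with hβ
  set γ := g w1 w2 x1 x2 with hγ
  obtain ⟨s, hs⟩ := IsAlgClosed.exists_pow_nat_eq (γ * (β ^ q)⁻¹) (n := q * q - 1)
    (by have := Nat.mul_le_mul hq hq; omega)
  have hs0 : s ≠ 0 := by
    rintro rfl
    have := Nat.mul_le_mul hq hq
    rw [zero_pow (by omega)] at hs
    exact mul_ne_zero hwx (inv_ne_zero (pow_ne_zero q hxw)) hs.symm
  have hsq : (s ^ q) ^ q = γ * (β ^ q)⁻¹ * s := by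
    rw [← hs, ← pow_mul, ← pow_succ]
    congr 1
    have := Nat.mul_le_mul hq hq; omega
  obtain ⟨m, hm⟩ : ∃ m, m = (β * s ^ q)⁻¹ := ⟨_, rfl⟩
  have hm1 : s ^ q * m * β = 1 := by
    rw [hm]; field_simp
  have hm2 : m ^ q * s * γ = 1 := by
    rw [hm, inv_pow, mul_pow, hsq]
    field_simp
  rw [hg] at hβ hγ hxx
  rw [hg w1 w2 w1 w2] at ht
  refine ⟨s * x1, s * x2, m * (t * x1 + w1), m * (t * x2 + w2), ?_, ?_, ?_, ?_⟩ <;>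
    simp only [hg, mul_pow, hadd]
  · linear_combination s ^ q * s * hxx
  · linear_combination m ^ q * m * ht + m ^ q * m * t ^ q * t * hxx -
      m ^ q * m * t ^ q * hβ - m ^ q * m * t * hγ
  · linear_combination s ^ q * m * t * hxx - s ^ q * m * hβ + hm1
  · linear_combination m ^ q * s * t ^ q * hxx - m ^ q * s * hγ + hm2


lemma sup_top_of_skew (L M : Submodule k (Fin 4 → k)) (hL : IsLine L) (hM : IsLine M)
    (h : SkewLine L M) : L ⊔ M = ⊤ := by
  apply Submodule.eq_top_of_finrank_eq
  have := Submodule.finrank_sup_add_finrank_inf_eq L M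
  unfold IsLine at hL hM
  unfold SkewLine at h
  rw [h, hL, hM, finrank_bot] at this
  simpa using this

lemma eq_span_pair (L : Submodule k (Fin 4 → k)) (hL : IsLine L) (x y : Fin 4 → k)
    (hx : x ∈ L) (hy : y ∈ L) (hxy : LinearIndependent k ![x, y]) :
    Submodule.span k {x, y} = L := by
  apply Submodule.eq_of_le_of_finrank_eq
  · rw [Submodule.span_le]
    rintro z (rfl | rfl) <;> assumption
  · have := finrank_span_eq_card hxy
    rw [Matrix.range_cons_cons_empty] at this
    rw [this, hL]
    simp

/-- The standard Gram matrix. -/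
def gramJ : Matrix (Fin 4) (Fin 4) k :=
  !![0, 0, 0, 1; 0, 0, 1, 0; 0, -1, 0, 0; -1, 0, 0, 0]

lemma sesq_sum_right (q : ℕ) (A : Matrix (Fin 4) (Fin 4) k) (x : Fin 4 → k)
    (c : Fin 4 → k) (b : Fin 4 → Fin 4 → k) :
    sesq q A x (∑ i, c i • b i) = ∑ i, c i * sesq q A x (b i) := by
  simp only [Fin.sum_univ_four, sesq_add_right, sesq_smul_right]

lemma sesq_sum_left (q : ℕ) (hadd : ∀ x y : k, (x + y) ^ q = x ^ q + y ^ q)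
    (A : Matrix (Fin 4) (Fin 4) k) (x : Fin 4 → k)
    (c : Fin 4 → k) (b : Fin 4 → Fin 4 → k) :
    sesq q A (∑ i, c i • b i) x = ∑ i, c i ^ q * sesq q A (b i) x := by
  simp only [Fin.sum_univ_four, sesq_add_left q hadd, sesq_smul_left]

/-- Normal form of a triple of skew lines on the surface. -/
lemma skew_normal_form [IsAlgClosed k] (q : ℕ) (hq : 2 ≤ q)
    (hadd : ∀ x y : k, (x + y) ^ q = x ^ q + y ^ q)
    (A : Matrix (Fin 4) (Fin 4) k) (hA : IsUnit A)
    (L₁ L₂ L₃ : Submodule k (Fin 4 → k))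
    (hL₁ : IsLineOn (extremalCone k q A) L₁)
    (hL₂ : IsLineOn (extremalCone k q A) L₂)
    (hL₃ : IsLineOn (extremalCone k q A) L₃)
    (hL12 : SkewLine L₁ L₂) (hL13 : SkewLine L₁ L₃) (hL23 : SkewLine L₂ L₃) :
    ∃ b : Basis (Fin 4) k (Fin 4 → k), (∀ i j, sesq q A (b i) (b j) = gramJ i j) ∧
      Submodule.span k {b 0, b 1} = L₁ ∧ Submodule.span k {b 2, b 3} = L₂ ∧
      Submodule.span k {b 0 + b 2, b 1 + b 3} = L₃ := by
  have : Infinite k := IsAlgClosed.instInfinite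
  have i1 := sesq_isotropic q hq hadd A L₁ hL₁.2
  have i2 := sesq_isotropic q hq hadd A L₂ hL₂.2
  have i3 := sesq_isotropic q hq hadd A L₃ hL₃.2
  have t12 := sup_top_of_skew L₁ L₂ hL₁.1 hL₂.1 hL12
  have t23 := sup_top_of_skew L₂ L₃ hL₂.1 hL₃.1 hL23
  have hφ : ∀ x : Fin 4 → k, ∃ y ∈ L₂, x + y ∈ L₃ := by
    intro x
    have hx : x ∈ L₂ ⊔ L₃ := by rw [t23]; trivial
    obtain ⟨y, hy, z, hz, rfl⟩ := Submodule.mem_sup.1 hx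
    exact ⟨-y, L₂.neg_mem hy, by simpa [add_assoc, add_comm] using hz⟩
  have hf : finrank k L₁ = 2 := hL₁.1
  let B := finBasisOfFinrankEq k L₁ hf
  obtain ⟨a1, ha1⟩ : ∃ a1, a1 = (B 0 : Fin 4 → k) := ⟨_, rfl⟩
  obtain ⟨a2, ha2⟩ : ∃ a2, a2 = (B 1 : Fin 4 → k) := ⟨_, rfl⟩
  have m1 : a1 ∈ L₁ := ha1 ▸ (B 0).2
  have m2 : a2 ∈ L₁ := ha2 ▸ (B 1).2
  have hrep : ∀ x ∈ L₁, ∃ s t : k, x = s • a1 + t • a2 := by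
    intro x hx
    refine ⟨B.repr ⟨x, hx⟩ 0, B.repr ⟨x, hx⟩ 1, ?_⟩
    have := congrArg Subtype.val (B.sum_repr ⟨x, hx⟩)
    rw [Fin.sum_univ_two] at this
    rw [ha1, ha2]
    exact this.symm
  have hind : ∀ s t : k, s • a1 + t • a2 = 0 → s = 0 ∧ t = 0 := by
    have h := B.linearIndependent
    rw [Fintype.linearIndependent_iff] at h
    intro s t hst
    have := h ![s, t] (by
      apply Subtype.ext
      rw [ha1, ha2] at hst
      simpa [Fin.sum_univ_two] using hst)
    exact ⟨this 0, this 1⟩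
  obtain ⟨c1, n1, l1⟩ := hφ a1
  obtain ⟨c2, n2, l2⟩ := hφ a2
  have anti : ∀ x x' y y', x ∈ L₁ → x' ∈ L₁ → y ∈ L₂ → y' ∈ L₂ → x + y ∈ L₃ → x' + y' ∈ L₃ →
      sesq q A y x' = - sesq q A x y' := by
    intro x x' y y' hx hx' hy hy' h h'
    have := i3 _ _ h h'
    rw [sesq_add_left q hadd, sesq_add_right, sesq_add_right, i1 x x' hx hx',
      i2 y y' hy hy'] at this
    linear_combination this
  have hdet : sesq q A a1 c1 * sesq q A a2 c2 - sesq q A a1 c2 * sesq q A a2 c1 ≠ 0 := by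
    intro h0
    obtain ⟨y1, y2, hy, e1, e2⟩ : ∃ y1 y2 : k, ¬ (y1 = 0 ∧ y2 = 0) ∧
        y1 * sesq q A a1 c1 + y2 * sesq q A a1 c2 = 0 ∧
        y1 * sesq q A a2 c1 + y2 * sesq q A a2 c2 = 0 := by
      by_cases h : sesq q A a1 c1 = 0 ∧ sesq q A a1 c2 = 0
      · by_cases h' : sesq q A a2 c1 = 0 ∧ sesq q A a2 c2 = 0
        · exact ⟨1, 0, by simp, by simp [h], by simp [h']⟩
        · refine ⟨sesq q A a2 c2, - sesq q A a2 c1, ?_, by simp [h], by ring⟩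
          rintro ⟨u, v⟩
          exact h' ⟨by simpa using v, u⟩
      · refine ⟨sesq q A a1 c2, - sesq q A a1 c1, ?_, by ring, by linear_combination -h0⟩
        rintro ⟨u, v⟩
        exact h ⟨by simpa using v, u⟩
    have hm : y1 • c1 + y2 • c2 ∈ L₂ := L₂.add_mem (L₂.smul_mem _ n1) (L₂.smul_mem _ n2)
    have hz : y1 • c1 + y2 • c2 = 0 := by
      apply sesq_nondeg q (by omega) A hA
      intro x
      have hx : x ∈ L₁ ⊔ L₂ := by rw [t12]; trivial
      obtain ⟨u, hu, v, hv, rfl⟩ := Submodule.mem_sup.1 hx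
      obtain ⟨s, t, rfl⟩ := hrep u hu
      rw [sesq_add_left q hadd, i2 v _ hv hm]
      simp only [sesq_add_left q hadd, sesq_add_right, sesq_smul_left, sesq_smul_right]
      linear_combination s ^ q * e1 + t ^ q * e2
    have h3 : y1 • (a1 + c1) + y2 • (a2 + c2) ∈ L₃ :=
      L₃.add_mem (L₃.smul_mem _ l1) (L₃.smul_mem _ l2)
    have e3 : y1 • (a1 + c1) + y2 • (a2 + c2) = y1 • a1 + y2 • a2 := by
      rw [smul_add, smul_add, add_add_add_comm, hz, add_zero]
    rw [e3] at h3
    have h4 : y1 • a1 + y2 • a2 ∈ L₁ ⊓ L₃ :=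
      ⟨L₁.add_mem (L₁.smul_mem _ m1) (L₁.smul_mem _ m2), h3⟩
    rw [show L₁ ⊓ L₃ = ⊥ from hL13, Submodule.mem_bot] at h4
    exact hy (hind _ _ h4)
  obtain ⟨x1, x2, y1, y2, hxx, hyy, hxy, hyx⟩ := binary_normal_form q hq hadd _ _ _ _ hdet
    (fun x1 x2 y1 y2 => sesq q A (x1 • a1 + x2 • a2) (y1 • c1 + y2 • c2)) (by
      intro x1 x2 y1 y2
      simp only [sesq_add_left q hadd, sesq_add_right, sesq_smul_left, sesq_smul_right]
      ring)
  obtain ⟨u, hu⟩ : ∃ u, u = x1 • a1 + x2 • a2 := ⟨_, rfl⟩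
  obtain ⟨v, hv⟩ : ∃ v, v = y1 • a1 + y2 • a2 := ⟨_, rfl⟩
  obtain ⟨u', hu'⟩ : ∃ u, u = x1 • c1 + x2 • c2 := ⟨_, rfl⟩
  obtain ⟨v', hv'⟩ : ∃ v, v = y1 • c1 + y2 • c2 := ⟨_, rfl⟩
  simp only [← hu, ← hv, ← hu', ← hv'] at hxx hyy hxy hyx
  have mu : u ∈ L₁ := hu ▸ L₁.add_mem (L₁.smul_mem _ m1) (L₁.smul_mem _ m2)
  have mv : v ∈ L₁ := hv ▸ L₁.add_mem (L₁.smul_mem _ m1) (L₁.smul_mem _ m2)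
  have mu' : u' ∈ L₂ := hu' ▸ L₂.add_mem (L₂.smul_mem _ n1) (L₂.smul_mem _ n2)
  have mv' : v' ∈ L₂ := hv' ▸ L₂.add_mem (L₂.smul_mem _ n1) (L₂.smul_mem _ n2)
  have mu3 : u + u' ∈ L₃ := by
    have : u + u' = x1 • (a1 + c1) + x2 • (a2 + c2) := by
      rw [hu, hu', smul_add, smul_add, add_add_add_comm]
    exact this ▸ L₃.add_mem (L₃.smul_mem _ l1) (L₃.smul_mem _ l2)
  have mv3 : v + v' ∈ L₃ := by
    have : v + v' = y1 • (a1 + c1) + y2 • (a2 + c2) := by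
      rw [hv, hv', smul_add, smul_add, add_add_add_comm]
    exact this ▸ L₃.add_mem (L₃.smul_mem _ l1) (L₃.smul_mem _ l2)
  have huu : sesq q A u' u = 0 := by
    rw [anti u u u' u' mu mu mu' mu' mu3 mu3, hxx, neg_zero]
  have huv : sesq q A u' v = -1 := by
    rw [anti u v u' v' mu mv mu' mv' mu3 mv3, hxy]
  have hvu : sesq q A v' u = -1 := by
    rw [anti v u v' u' mv mu mv' mu' mv3 mu3, hyx]
  have hvv : sesq q A v' v = 0 := by
    rw [anti v v v' v' mv mv mv' mv' mv3 mv3, hyy, neg_zero]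
  have hgram : ∀ i j, sesq q A (![u, v, u', v'] i) (![u, v, u', v'] j) = gramJ i j := by
    intro i j
    fin_cases i <;> fin_cases j <;>
      simp [gramJ, huu, huv, hvu, hvv, hxx, hxy, hyx, hyy, i1 u u mu mu, i1 u v mu mv,
        i1 v u mv mu, i1 v v mv mv, i2 u' u' mu' mu', i2 u' v' mu' mv', i2 v' u' mv' mu',
        i2 v' v' mv' mv']
  have hli : LinearIndependent k ![u, v, u', v'] := by
    rw [Fintype.linearIndependent_iff]
    intro r hr
    have hz : ∀ j, ∑ i, r i * gramJ j i = 0 := by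
      intro j
      have h := sesq_sum_right q A (![u, v, u', v'] j) r ![u, v, u', v']
      rw [hr] at h
      simp only [hgram] at h
      rw [← h]
      simp [sesq]
    have z0 := hz 0
    have z1 := hz 1
    have z2 := hz 2
    have z3 := hz 3
    simp [Fin.sum_univ_four, gramJ] at z0 z1 z2 z3
    intro i
    fin_cases i <;> assumption
  let b := basisOfLinearIndependentOfCardEqFinrank hli (by simp)
  have hb : ⇑b = ![u, v, u', v'] := coe_basisOfLinearIndependentOfCardEqFinrank _ _
  have hli' := Fintype.linearIndependent_iff.1 hli
  refine ⟨b, by rw [hb]; exact hgram, ?_, ?_, ?_⟩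
  · rw [hb]
    refine eq_span_pair L₁ hL₁.1 u v mu mv (LinearIndependent.pair_iff.2 fun s t h => ?_)
    have := hli' ![s, t, 0, 0] (by simpa [Fin.sum_univ_four] using h)
    exact ⟨this 0, this 1⟩
  · rw [hb]
    refine eq_span_pair L₂ hL₂.1 u' v' mu' mv' (LinearIndependent.pair_iff.2 fun s t h => ?_)
    have := hli' ![0, 0, s, t] (by simpa [Fin.sum_univ_four] using h)
    exact ⟨this 2, this 3⟩
  · rw [hb]
    refine eq_span_pair L₃ hL₃.1 (u + u') (v + v') mu3 mv3
      (LinearIndependent.pair_iff.2 fun s t h => ?_)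
    have := hli' ![s, t, s, t] (by
      simp only [Fin.sum_univ_four]
      rw [← h]
      simp only [Matrix.cons_val]
      module)
    exact ⟨this 0, this 1⟩

lemma sesq_basis_equiv (q : ℕ) (hadd : ∀ x y : k, (x + y) ^ q = x ^ q + y ^ q)
    (A : Matrix (Fin 4) (Fin 4) k) (b c : Basis (Fin 4) k (Fin 4 → k))
    (hb : ∀ i j, sesq q A (b i) (b j) = gramJ i j)
    (hc : ∀ i j, sesq q A (c i) (c j) = gramJ i j) (x : Fin 4 → k) :
    frobForm q A (b.equiv c (Equiv.refl _) x) = frobForm q A x := by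
  rw [← sesq_self, ← sesq_self]
  have h1 : b.equiv c (Equiv.refl _) x = ∑ i, b.repr x i • c i := by
    conv_lhs => rw [← b.sum_repr x]
    simp only [map_sum, map_smul, Basis.equiv_apply, Equiv.refl_apply]
  conv_rhs => rw [← b.sum_repr x]
  rw [h1]
  simp only [sesq_sum_left q hadd, sesq_sum_right, hb, hc]

end Helpers

/-- `Aut(X)` acts transitively on ordered triples of
pairwise skew lines on a smooth extremal surface `X` of degree `q+1`:
for pairwise skew lines `L₁, L₂, L₃` on `X` and pairwise skew lines
`M₁, M₂, M₃` on `X` there is `g ∈ Aut(X)` (represented by an invertible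
linear map of `k⁴` preserving the affine cone of `X`) with `g(Lᵢ) = Mᵢ`. -/
theorem aut_transitive_on_skew_triples {k : Type*} [Field k] [IsAlgClosed k]
    (p e q : ℕ) (hp : p.Prime) (hchar : CharP k p) (he : 1 ≤ e) (hq : q = p ^ e)
    (A : Matrix (Fin 4) (Fin 4) k) (hA : IsUnit A)
    (L₁ L₂ L₃ M₁ M₂ M₃ : Submodule k (Fin 4 → k))
    (hL₁ : IsLineOn (extremalCone k q A) L₁)
    (hL₂ : IsLineOn (extremalCone k q A) L₂)
    (hL₃ : IsLineOn (extremalCone k q A) L₃)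
    (hM₁ : IsLineOn (extremalCone k q A) M₁)
    (hM₂ : IsLineOn (extremalCone k q A) M₂)
    (hM₃ : IsLineOn (extremalCone k q A) M₃)
    (hL12 : SkewLine L₁ L₂) (hL13 : SkewLine L₁ L₃) (hL23 : SkewLine L₂ L₃)
    (hM12 : SkewLine M₁ M₂) (hM13 : SkewLine M₁ M₃) (hM23 : SkewLine M₂ M₃) :
    ∃ g : (Fin 4 → k) ≃ₗ[k] (Fin 4 → k),
      PreservesCone (extremalCone k q A) g ∧
        Submodule.map (g : (Fin 4 → k) →ₗ[k] (Fin 4 → k)) L₁ = M₁ ∧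
        Submodule.map (g : (Fin 4 → k) →ₗ[k] (Fin 4 → k)) L₂ = M₂ ∧
        Submodule.map (g : (Fin 4 → k) →ₗ[k] (Fin 4 → k)) L₃ = M₃ := by
  have : Fact p.Prime := ⟨hp⟩
  have hadd : ∀ x y : k, (x + y) ^ q = x ^ q + y ^ q := by
    intro x y
    rw [hq]
    exact add_pow_char_pow x y p e
  have hq2 : 2 ≤ q := by
    rw [hq]
    calc 2 ≤ p := hp.two_le
      _ = p ^ 1 := (pow_one p).symm
      _ ≤ p ^ e := Nat.pow_le_pow_right hp.pos he
  obtain ⟨b, hb, b1, b2, b3⟩ :=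
    skew_normal_form q hq2 hadd A hA L₁ L₂ L₃ hL₁ hL₂ hL₃ hL12 hL13 hL23
  obtain ⟨c, hc, c1, c2, c3⟩ :=
    skew_normal_form q hq2 hadd A hA M₁ M₂ M₃ hM₁ hM₂ hM₃ hM12 hM13 hM23
  have hpres := sesq_basis_equiv q hadd A b c hb hc
  have hg : ∀ i, b.equiv c (Equiv.refl _) (b i) = c i := by simp
  refine ⟨b.equiv c (Equiv.refl _), ?_, ?_, ?_, ?_⟩
  · unfold PreservesCone
    ext y
    constructor
    · rintro ⟨x, hx, rfl⟩
      exact (hpres x).trans hx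
    · intro hy
      refine ⟨(b.equiv c (Equiv.refl _)).symm y, ?_, LinearEquiv.apply_symm_apply _ _⟩
      have := hpres ((b.equiv c (Equiv.refl _)).symm y)
      rw [LinearEquiv.apply_symm_apply] at this
      exact this.symm.trans hy
  · rw [← b1, ← c1, Submodule.map_span, Set.image_pair]
    simp only [LinearEquiv.coe_coe, hg]
  · rw [← b2, ← c2, Submodule.map_span, Set.image_pair]
    simp only [LinearEquiv.coe_coe, hg]
  · rw [← b3, ← c3, Submodule.map_span, Set.image_pair]
    simp only [LinearEquiv.coe_coe, map_add, hg]
end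

section
/- Let X be a smooth extremal surface of degree d = q+1 in ℙ³(k). Then the number N of quadric configurations on X satisfies 2·N = (q³+1)(q²+1)q⁴; that is, X contains exactly ½(q³+1)(q²+1)q⁴ quadric configurations. -/
open Module

structure FrobQ (k : Type*) [Field k] (q : ℕ) : Prop where
  two_le : 2 ≤ q
  add_pow : ∀ a b : k, (a + b) ^ q = a ^ q + b ^ q
  cast_zero : (q : k) = 0

namespace FrobQ
variable {k : Type*} [Field k] {q : ℕ}

lemma zero_pow (h : FrobQ k q) : (0 : k) ^ q = 0 := _root_.zero_pow (by have := h.two_le; omega)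

lemma neg_pow (h : FrobQ k q) (a : k) : (-a) ^ q = -a ^ q := by
  have := h.add_pow a (-a)
  rw [add_neg_cancel, h.zero_pow] at this
  linear_combination -this

lemma sub_pow (h : FrobQ k q) (a b : k) : (a - b) ^ q = a ^ q - b ^ q := by
  rw [sub_eq_add_neg, h.add_pow, h.neg_pow, sub_eq_add_neg]

lemma inj (h : FrobQ k q) {a b : k} (hab : a ^ q = b ^ q) : a = b := by
  have : (a - b) ^ q = 0 := by rw [h.sub_pow, hab, sub_self]
  exact sub_eq_zero.mp (pow_eq_zero_iff (by have := h.two_le; omega) |>.mp this)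

lemma sq (h : FrobQ k q) : FrobQ k (q ^ 2) where
  two_le := by have := h.two_le; nlinarith
  add_pow a b := by rw [pow_two, pow_mul, pow_mul, pow_mul, h.add_pow, h.add_pow]
  cast_zero := by push_cast; rw [h.cast_zero]; simp

end FrobQ

section roots
open Polynomial
variable {k : Type*} [Field k] [IsAlgClosed k] {q : ℕ}

lemma ncard_roots (P : k[X]) (hP : P.Separable) :
    {z : k | P.eval z = 0}.ncard = P.natDegree := by
  classical
  have h1 : {z : k | P.eval z = 0} = (P.roots.toFinset : Set k) := by
    ext z; simp [hP.ne_zero]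
  rw [h1, Set.ncard_coe_finset, Multiset.toFinset_card_of_nodup (nodup_roots hP)]
  exact (IsAlgClosed.splits P).natDegree_eq_card_roots.symm

lemma ncard_pow_eq (h : FrobQ k q) {c : k} (hc : c ≠ 0) :
    {z : k | z ^ q = c * z}.ncard = q := by
  have h2 := h.two_le
  have hs : (X ^ q - C c * X : k[X]).Separable := by
    refine ⟨0, C (-c⁻¹), ?_⟩
    have : derivative (X ^ q - C c * X : k[X]) = - C c := by
      simp [derivative_X_pow, h.cast_zero]
    rw [this, zero_mul, zero_add, mul_neg, ← C_mul, ← C_neg]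
    simp [hc]
  have hd : (X ^ q - C c * X : k[X]).natDegree = q := by
    rw [natDegree_sub_eq_left_of_natDegree_lt]
    · simp
    · rw [natDegree_C_mul_X _ hc, natDegree_X_pow]; omega
  have h3 := ncard_roots _ hs
  rw [hd] at h3
  refine Eq.trans ?_ h3
  congr 1
  ext z; simp [sub_eq_zero]

lemma exists_pow_sub (h : FrobQ k q) (b c : k) : ∃ t : k, t ^ q + b * t + c = 0 := by
  have h2 := h.two_le
  have hd : (X ^ q + (C b * X + C c) : k[X]).natDegree = q := by
    rw [natDegree_add_eq_left_of_natDegree_lt]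
    · simp
    · rw [natDegree_X_pow]; exact lt_of_le_of_lt natDegree_linear_le (by omega)
  obtain ⟨t, ht⟩ := IsAlgClosed.exists_root (X ^ q + (C b * X + C c) : k[X]) (by
    intro h0
    have h1 := natDegree_eq_of_degree_eq_some h0
    rw [hd] at h1
    change q = 0 at h1
    omega)
  refine ⟨t, ?_⟩
  simp [IsRoot] at ht
  linear_combination ht

open Classical in
/-- number of affine zeros of the binary form -/
lemma ncard_binary (h : FrobQ k q) {a b d : k} (hdet : a * d + b ^ (q + 1) ≠ 0) :
    {t : k | a + b * t + t ^ q * (-b ^ q + d * t) = 0}.ncard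
      = if d = 0 then q else q + 1 := by
  have h2 := h.two_le
  set P : k[X] := C d * X ^ (q + 1) + (C (-b ^ q) * X ^ q + (C b * X + C a)) with hP
  have hev : {t : k | a + b * t + t ^ q * (-b ^ q + d * t) = 0} = {t | P.eval t = 0} := by
    ext t; simp only [hP, Set.mem_ofPred_eq, eval_add, eval_mul, eval_C, eval_pow, eval_X]
    constructor <;> intro H <;> linear_combination H
  have hder : derivative P = C d * X ^ q + C b := by
    rw [hP]
    simp only [derivative_add, derivative_mul, derivative_C, derivative_X_pow, derivative_X,
      Nat.cast_add, h.cast_zero]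
    simp
  have hs : P.Separable := by
    set D := a * d + b ^ (q + 1) with hD
    have hDC : (C D⁻¹ : k[X]) * C D = 1 := by rw [← C_mul, inv_mul_cancel₀ hdet, C_1]
    have hDe : (C D : k[X]) = C a * C d + C b ^ (q + 1) := by simp [hD]
    refine ⟨C D⁻¹ * C d, C D⁻¹ * (C b ^ q - C d * X), ?_⟩
    rw [hder, ← hDC, hDe, hP]
    simp only [C_neg, C_pow]
    ring
  rw [hev, ncard_roots P hs]
  split_ifs with hd
  · have hb : b ≠ 0 := by
      rintro rfl; apply hdet; simp [hd]
    rw [hP, hd]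
    simp only [C_0, zero_mul, zero_add]
    rw [natDegree_add_eq_left_of_natDegree_lt]
    · exact natDegree_C_mul_X_pow _ _ (neg_ne_zero.mpr (pow_ne_zero _ hb))
    · rw [natDegree_C_mul_X_pow _ _ (neg_ne_zero.mpr (pow_ne_zero _ hb))]
      exact lt_of_le_of_lt natDegree_linear_le (by omega)
  · rw [hP, natDegree_add_eq_left_of_natDegree_lt]
    · exact natDegree_C_mul_X_pow _ _ hd
    · rw [natDegree_C_mul_X_pow _ _ hd]
      refine lt_of_le_of_lt (natDegree_add_le _ _) (max_lt ?_ ?_)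
      · exact lt_of_le_of_lt (natDegree_C_mul_X_pow_le _ _) (by omega)
      · exact lt_of_le_of_lt natDegree_linear_le (by omega)

end roots

section fix
open Polynomial
variable {k : Type*} [Field k] {Q : ℕ}

/-- auxiliary polynomials for the theorem of Lang -/
noncomputable def langPoly (Q : ℕ) (c : ℕ → k) : ℕ → k[X]
  | 0 => C (c 0) * X ^ Q
  | i + 1 => langPoly Q c i ^ Q + C (c (i + 1)) * X ^ Q

lemma langPoly_dvd (hQ : 2 ≤ Q) (c : ℕ → k) (i : ℕ) : X ^ 2 ∣ langPoly Q c i := by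
  induction i with
  | zero => exact Dvd.dvd.mul_left (pow_dvd_pow _ hQ) _
  | succ i ih =>
    exact dvd_add (dvd_pow ih (by omega)) (Dvd.dvd.mul_left (pow_dvd_pow _ hQ) _)

lemma langPoly_eq_zero (hQ : 2 ≤ Q) (c : ℕ → k) (i : ℕ) (h : langPoly Q c i = 0) :
    ∀ j ≤ i, c j = 0 := by
  induction i with
  | zero =>
    intro j hj
    obtain rfl : j = 0 := by omega
    simpa [langPoly] using h
  | succ i ih =>
    rw [langPoly] at h
    have h0 : langPoly Q c i = 0 := by
      by_contra hne
      obtain ⟨G, hG⟩ := langPoly_dvd hQ c i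
      have h1 : langPoly Q c i ^ Q = - (C (c (i + 1)) * X ^ Q) := by linear_combination h
      have h2 := congrArg natDegree h1
      rw [natDegree_pow, natDegree_neg] at h2
      have h3 := natDegree_C_mul_X_pow_le (c (i + 1)) Q
      have hG0 : G ≠ 0 := by rintro rfl; simp at hG; exact hne hG
      have h4 : 2 ≤ (langPoly Q c i).natDegree := by
        rw [hG, natDegree_mul (by simp) hG0]; simp
      nlinarith
    intro j hj
    rcases Nat.lt_or_ge j (i + 1) with hj' | hj'
    · exact ih h0 j (by omega)
    · obtain rfl : j = i + 1 := by omega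
      rw [h0, _root_.zero_pow (by omega)] at h
      simpa using h

lemma exists_fixed [IsAlgClosed k] {V : Type*} [AddCommGroup V] [Module k V] [FiniteDimensional k V]
    (hQ : 2 ≤ Q) (φ : V → V) (hadd : ∀ x y, φ (x + y) = φ x + φ y)
    (hsmul : ∀ (c : k) x, φ (c • x) = c ^ Q • φ x) (hinj : ∀ x, φ x = 0 → x = 0)
    (W : Submodule k V) (hW : ∀ x ∈ W, φ x ∈ W) {v : V} (hv : v ∈ W) (hv0 : v ≠ 0) :
    ∃ w ∈ W, w ≠ 0 ∧ φ w = w := by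
  classical
  set f : ℕ → V := fun i => φ^[i] v with hf
  have hfs : ∀ i, f (i + 1) = φ (f i) := fun i => Function.iterate_succ_apply' _ _ _
  have hfW : ∀ i, f i ∈ W := by
    intro i
    induction i with
    | zero => exact hv
    | succ i ih => rw [hfs]; exact hW _ ih
  have hf0 : ∀ i, f i ≠ 0 := by
    intro i
    induction i with
    | zero => exact hv0
    | succ i ih => rw [hfs]; exact fun h => ih (hinj _ h)
  have hex : ∃ n, f n ∈ Submodule.span k (f '' (Finset.range n : Set ℕ)) := by
    by_contra hcon
    push Not at hcon
    have hli : LinearIndependent k f := by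
      rw [linearIndependent_iff']
      intro s
      induction s using Finset.induction_on_max with
      | empty => simp
      | insert a s has ih =>
        intro g hg
        have hna : a ∉ s := fun h => lt_irrefl _ (has a h)
        rw [Finset.sum_insert hna] at hg
        have hga : g a = 0 := by
          by_contra hga
          apply hcon a
          have : f a = -(g a)⁻¹ • ∑ i ∈ s, g i • f i := by
            rw [eq_neg_of_add_eq_zero_right hg, neg_smul, smul_neg, neg_neg, smul_smul, inv_mul_cancel₀ hga, one_smul]
          rw [this]
          refine Submodule.smul_mem _ _ (Submodule.sum_mem _ fun i hi => Submodule.smul_mem _ _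
            (Submodule.subset_span ⟨i, by simpa using has i hi, rfl⟩))
        rw [hga, zero_smul, zero_add] at hg
        intro i hi
        rcases Finset.mem_insert.mp hi with rfl | hi
        · exact hga
        · exact ih g hg i hi
    have := hli.finite
    exact not_finite ℕ
  set n := Nat.find hex with hn
  have hspec := Nat.find_spec hex
  have hmin : ∀ m < n, f m ∉ Submodule.span k (f '' (Finset.range m : Set ℕ)) :=
    fun m hm => Nat.find_min hex hm
  rw [← hn] at hspec
  obtain ⟨c, hc⟩ : ∃ c : ℕ → k, ∑ i ∈ Finset.range n, c i • f i = f n := by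
    rw [Submodule.mem_span_image_finset_iff_exists_fun] at hspec
    obtain ⟨c, hc⟩ := hspec
    refine ⟨fun i => if h : i ∈ Finset.range n then c ⟨i, h⟩ else 0, ?_⟩
    rw [← hc, ← Finset.sum_coe_sort]
    refine Finset.sum_congr rfl fun i _ => ?_
    beta_reduce
    rw [dif_pos i.2]
  obtain ⟨m, hm⟩ : ∃ m, n = m + 1 := by
    apply Nat.exists_eq_succ_of_ne_zero
    intro h0
    rw [h0] at hc
    exact hf0 0 (by simpa using hc.symm)
  have hF : langPoly Q c m ≠ 0 := by
    intro h0
    have := langPoly_eq_zero hQ c m h0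
    apply hf0 n
    rw [← hc]
    refine Finset.sum_eq_zero fun i hi => ?_
    rw [this i (by simp at hi; omega), zero_smul]
  obtain ⟨G, hG⟩ := langPoly_dvd hQ c m
  have hG0 : G ≠ 0 := by rintro rfl; simp at hG; exact hF hG
  obtain ⟨T, hT⟩ := IsAlgClosed.exists_root (X * G + C (-1)) (by
    rw [degree_add_C]
    · rw [degree_mul, degree_X]
      intro h
      rw [degree_eq_natDegree hG0] at h
      norm_cast at h; omega
    · rw [degree_mul, degree_X, degree_eq_natDegree hG0]
      norm_cast; omega)
  simp [IsRoot] at hT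
  have hT0 : T ≠ 0 := by rintro rfl; simp at hT
  have hTe : (langPoly Q c m).eval T = T := by
    rw [hG]; simp; linear_combination T * hT
  set x : ℕ → k := fun i => (langPoly Q c i).eval T with hx
  have hx0 : x 0 = T ^ Q * c 0 := by simp [hx, langPoly]; ring
  have hxs : ∀ i, x (i + 1) = x i ^ Q + T ^ Q * c (i + 1) := by
    intro i; simp [hx, langPoly]; ring
  have hφ0 : φ 0 = 0 := by have := hadd 0 0; simpa using this
  have hsum : ∀ (s : Finset ℕ) (g : ℕ → V), φ (∑ i ∈ s, g i) = ∑ i ∈ s, φ (g i) := by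
    intro s g
    exact map_sum (⟨⟨φ, hφ0⟩, hadd⟩ : V →+ V) g s
  refine ⟨∑ i ∈ Finset.range (m + 1), x i • f i,
    Submodule.sum_mem _ fun i _ => Submodule.smul_mem _ _ (hfW i), ?_, ?_⟩
  · intro h0
    rw [Finset.sum_range_succ] at h0
    apply hmin m (by omega)
    have hxm : x m = T := hTe
    have : f m = -T⁻¹ • ∑ i ∈ Finset.range m, x i • f i := by
      rw [eq_neg_of_add_eq_zero_left h0, hxm, neg_smul, smul_neg, neg_neg, smul_smul,
        inv_mul_cancel₀ hT0, one_smul]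
    rw [this]
    refine Submodule.smul_mem _ _ (Submodule.sum_mem _ fun i hi => Submodule.smul_mem _ _
            (Submodule.subset_span ⟨i, by simpa using hi, rfl⟩))
  · rw [hsum]
    simp only [hsmul, ← hfs]
    rw [Finset.sum_range_succ, show x m = T from hTe, ← hm, ← hc, hm, Finset.smul_sum,
      Finset.sum_range_succ' (fun i => T ^ Q • c i • f i), ← add_assoc, ← Finset.sum_add_distrib,
      Finset.sum_range_succ' (fun i => x i • f i), hx0]
    congr 1
    · refine Finset.sum_congr rfl fun i _ => ?_
      rw [hxs, smul_smul, add_smul]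
    · rw [smul_smul]
end fix


structure SForm (k V : Type*) [Field k] [AddCommGroup V] [Module k V] (q : ℕ) where
  B : V → V → k
  add_left : ∀ x y z, B (x + y) z = B x z + B y z
  add_right : ∀ x y z, B x (y + z) = B x y + B x z
  smul_left : ∀ (c : k) x y, B (c • x) y = c ^ q * B x y
  smul_right : ∀ (c : k) x y, B x (c • y) = c * B x y
  nondeg_left : ∀ x, (∀ y, B x y = 0) → x = 0
  nondeg_right : ∀ y, (∀ x, B x y = 0) → y = 0
  φ : V → V
  hφ : ∀ x y, B y (φ x) = B x y ^ q

section linalg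
variable {k V : Type*} [Field k] [AddCommGroup V] [Module k V]

def Indep2 (k : Type*) {V : Type*} [Field k] [AddCommGroup V] [Module k V] (u w : V) : Prop :=
  ∀ a b : k, a • u + b • w = 0 → a = 0 ∧ b = 0

lemma Indep2.of_not_mem {u w : V} (hu : u ≠ 0) (hw : w ∉ Submodule.span k {u}) :
    Indep2 k u w := by
  intro a b hab
  have hb : b = 0 := by
    by_contra hb
    apply hw
    rw [Submodule.mem_span_singleton]
    refine ⟨-(b⁻¹ * a), ?_⟩
    have : b • w = - (a • u) := eq_neg_of_add_eq_zero_right hab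
    calc (-(b⁻¹ * a)) • u = b⁻¹ • (-(a • u)) := by rw [neg_smul, smul_neg, mul_smul]
      _ = w := by rw [← this, smul_smul, inv_mul_cancel₀ hb, one_smul]
  subst hb
  simp [hu] at hab
  exact ⟨hab, rfl⟩

lemma Indep2.ne_left {u w : V} (h : Indep2 k u w) : u ≠ 0 := by
  rintro rfl
  simpa using (h 1 0 (by simp)).1

lemma Indep2.ne_right {u w : V} (h : Indep2 k u w) : w ≠ 0 := by
  rintro rfl
  simpa using (h 0 1 (by simp)).2

lemma finrank_span2 {u w : V} (h : Indep2 k u w) :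
    finrank k (Submodule.span k {u, w}) = 2 := by
  have hli : LinearIndependent k ![u, w] := LinearIndependent.pair_iff.mpr h
  have := finrank_span_eq_card hli
  rw [Matrix.range_cons_cons_empty] at this
  simpa using this

lemma eq_span2 [FiniteDimensional k V] {u w : V} (h : Indep2 k u w) {L : Submodule k V}
    (hL : finrank k L = 2) (hu : u ∈ L) (hw : w ∈ L) : L = Submodule.span k {u, w} := by
  symm
  apply Submodule.eq_of_le_of_finrank_eq
  · rw [Submodule.span_le]; rintro x (rfl | rfl) <;> assumption
  · rw [finrank_span2 h, hL]

lemma exists_comb [FiniteDimensional k V] {u w : V} (h : Indep2 k u w) {L : Submodule k V}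
    (hL : finrank k L = 2) (hu : u ∈ L) (hw : w ∈ L) {x : V} (hx : x ∈ L) :
    ∃ a b : k, a • u + b • w = x := by
  rw [eq_span2 h hL hu hw] at hx
  exact Submodule.mem_span_pair.mp hx

lemma eq_of_two [FiniteDimensional k V] {u w : V} (h : Indep2 k u w) {L L' : Submodule k V}
    (hL : finrank k L = 2) (hL' : finrank k L' = 2) (hu : u ∈ L) (hw : w ∈ L)
    (hu' : u ∈ L') (hw' : w ∈ L') : L = L' := by
  rw [eq_span2 h hL hu hw, eq_span2 h hL' hu' hw']

lemma finrank_eq_two (L : Submodule k V) (α β : V →ₗ[k] k)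
    (hinj : ∀ v ∈ L, α v = 0 → β v = 0 → v = 0)
    (hsurj : ∀ s t : k, ∃ v ∈ L, α v = s ∧ β v = t) : finrank k L = 2 := by
  have e : L ≃ₗ[k] (k × k) := LinearEquiv.ofBijective ((α.prod β).comp L.subtype) (by
    constructor
    · rw [← LinearMap.ker_eq_bot, LinearMap.ker_eq_bot']
      rintro ⟨v, hv⟩ h
      simp at h
      simpa using hinj v hv h.1 h.2
    · rintro ⟨s, t⟩
      obtain ⟨v, hv, h1, h2⟩ := hsurj s t
      exact ⟨⟨v, hv⟩, by simp [h1, h2]⟩)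
  rw [e.finrank_eq]; simp

lemma exists_not_mem_span1 [FiniteDimensional k V] {L : Submodule k V} (hL : 2 ≤ finrank k L)
    (u : V) : ∃ w ∈ L, w ∉ Submodule.span k {u} := by
  by_contra! hcon
  have h1 := Submodule.finrank_mono (show L ≤ Submodule.span k {u} from hcon)
  have h2 := finrank_span_le_card (R := k) ({u} : Set V)
  simp at h2
  omega

lemma exists_not_mem_span2 [FiniteDimensional k V] {L : Submodule k V} (hL : 3 ≤ finrank k L)
    (u v : V) : ∃ w ∈ L, w ∉ Submodule.span k {u, v} := by
  classical
  by_contra! hcon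
  have h1 := Submodule.finrank_mono (show L ≤ Submodule.span k {u, v} from hcon)
  have h2 := finrank_span_finset_le_card (R := k) ({u, v} : Finset V)
  have h3 := Finset.card_le_two (a := u) (b := v)
  rw [Set.finrank, Finset.coe_pair] at h2
  omega

lemma finrank_ker_ge [FiniteDimensional k V] (f : V →ₗ[k] k) :
    finrank k V ≤ finrank k (LinearMap.ker f) + 1 := by
  have h1 := f.finrank_range_add_finrank_ker
  have h2 := Submodule.finrank_le (LinearMap.range f)
  simp at h2
  omega

end linalg

set_option linter.unusedSimpArgs false
set_option linter.unusedSectionVars false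

namespace SForm
variable {k V : Type*} [Field k] [AddCommGroup V] [Module k V] {q : ℕ}

def lin (S : SForm k V q) (x : V) : V →ₗ[k] k where
  toFun := S.B x
  map_add' := S.add_right x
  map_smul' c y := by simp [S.smul_right]

@[simp] lemma lin_apply (S : SForm k V q) (x y : V) : S.lin x y = S.B x y := rfl

lemma zero_right (S : SForm k V q) (x : V) : S.B x 0 = 0 := by
  rw [← lin_apply, map_zero]

lemma neg_right (S : SForm k V q) (x y : V) : S.B x (-y) = - S.B x y := by
  rw [← lin_apply, map_neg, lin_apply]

lemma sub_right (S : SForm k V q) (x y z : V) : S.B x (y - z) = S.B x y - S.B x z := by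
  rw [← lin_apply, map_sub, lin_apply, lin_apply]

lemma zero_left (S : SForm k V q) (y : V) : S.B 0 y = 0 := by
  have := S.add_left 0 0 y
  simpa using this

lemma ext_right (S : SForm k V q) {y z : V} (h : ∀ x, S.B x y = S.B x z) : y = z := by
  rw [← sub_eq_zero]
  exact S.nondeg_right _ fun x => by rw [S.sub_right, h, sub_self]

lemma φ_add (S : SForm k V q) (hq : FrobQ k q) (x y : V) : S.φ (x + y) = S.φ x + S.φ y :=
  S.ext_right fun z => by rw [S.add_right, S.hφ, S.hφ, S.hφ, S.add_left, hq.add_pow]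

lemma φ_smul (S : SForm k V q) (c : k) (x : V) : S.φ (c • x) = c ^ q ^ 2 • S.φ x :=
  S.ext_right fun z => by
    rw [S.smul_right, S.hφ, S.hφ, S.smul_left, mul_pow, ← pow_mul, pow_two]

lemma φ_inj (S : SForm k V q) (hq : FrobQ k q) (x : V) (h : S.φ x = 0) : x = 0 :=
  S.nondeg_left x fun y => by
    have := S.hφ x y
    rw [h, S.zero_right] at this
    have h2 := hq.two_le
    exact (pow_eq_zero_iff (by omega)).mp this.symm

lemma herm (S : SForm k V q) {e : V} (he : S.φ e = e) (y : V) : S.B y e = S.B e y ^ q := by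
  conv_lhs => rw [← he]
  exact S.hφ e y

def IsLn (S : SForm k V q) (L : Submodule k V) : Prop :=
  finrank k L = 2 ∧ ∀ x ∈ L, ∀ y ∈ L, S.B x y = 0

lemma isLn_iff [IsAlgClosed k] (S : SForm k V q) (hq : FrobQ k q) (L : Submodule k V) :
    S.IsLn L ↔ finrank k L = 2 ∧ ∀ x ∈ L, S.B x x = 0 := by
  refine ⟨fun h => ⟨h.1, fun x hx => h.2 x hx x hx⟩, fun h => ⟨h.1, fun x hx y hy => ?_⟩⟩
  obtain ⟨t, ht⟩ := exists_pow_sub hq (-1 : k) 1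
  have h1 := h.2 _ (L.add_mem hx hy)
  have h2 := h.2 _ (L.add_mem hx (L.smul_mem t hy))
  simp only [S.add_left, S.add_right, S.smul_left, S.smul_right, h.2 x hx, h.2 y hy] at h1 h2
  linear_combination (1) * h2 - t ^ q * h1 + ht * S.B x y

lemma isLn_span2 (S : SForm k V q) {u w : V} (hi : Indep2 k u w) (h1 : S.B u u = 0)
    (h2 : S.B u w = 0) (h3 : S.B w u = 0) (h4 : S.B w w = 0) :
    S.IsLn (Submodule.span k {u, w}) := by
  refine ⟨finrank_span2 hi, fun x hx y hy => ?_⟩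
  obtain ⟨a, b, rfl⟩ := Submodule.mem_span_pair.mp hx
  obtain ⟨c, d, rfl⟩ := Submodule.mem_span_pair.mp hy
  simp [S.add_left, S.add_right, S.smul_left, S.smul_right, h1, h2, h3, h4]

lemma exists_dual [IsAlgClosed k] (S : SForm k V q) (hq : FrobQ k q) {u w : V}
    (h : Indep2 k u w) : ∃ z, S.B u z = 0 ∧ S.B w z = 1 := by
  have h2 := hq.two_le
  by_contra! hcon
  have h0 : ∀ z, S.B u z = 0 → S.B w z = 0 := by
    intro z hz
    by_contra hne
    apply hcon ((S.B w z)⁻¹ • z)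
    · rw [S.smul_right, hz, mul_zero]
    · rw [S.smul_right, inv_mul_cancel₀ hne]
  obtain ⟨y, hy⟩ : ∃ y, S.B u y ≠ 0 := by
    by_contra! h'
    exact h.ne_left (S.nondeg_left u h')
  obtain ⟨s, hs⟩ := IsAlgClosed.exists_pow_nat_eq (S.B w y / S.B u y) (n := q) (by omega)
  have h3 : (-s) • u + (1 : k) • w = 0 := by
    apply S.nondeg_left
    intro z
    have := h0 (z - (S.B u z / S.B u y) • y) (by
      rw [S.sub_right, S.smul_right]; field_simp; ring)
    rw [S.sub_right, S.smul_right] at this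
    rw [S.add_left, S.smul_left, S.smul_left, hq.neg_pow, hs, one_pow]
    linear_combination this
  simpa using (h _ _ h3).2

lemma exists_dual_left [IsAlgClosed k] (S : SForm k V q) (hq : FrobQ k q) {u w : V}
    (h : Indep2 k u w) : ∃ z, S.B u z = 1 ∧ S.B w z = 0 := by
  obtain ⟨z, h1, h2⟩ := S.exists_dual hq (u := w) (w := u) (fun a b hab => by
    have := h b a (by rw [add_comm]; exact hab)
    exact ⟨this.2, this.1⟩)
  exact ⟨z, h2, h1⟩

variable [IsAlgClosed k] [FiniteDimensional k V]

lemma perp_mem (S : SForm k V q) (hq : FrobQ k q) (hV : finrank k V = 4)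
    {L : Submodule k V} (hL : S.IsLn L) {y : V} (hy : ∀ x ∈ L, S.B x y = 0) : y ∈ L := by
  obtain ⟨u, hu, hu0⟩ := exists_not_mem_span1 (k := k) hL.1.ge 0
  obtain ⟨w, hw, hw0⟩ := exists_not_mem_span1 (k := k) hL.1.ge u
  have hi : Indep2 k u w := Indep2.of_not_mem (by rintro rfl; simp at hu0) hw0
  obtain ⟨z1, h1, h2⟩ := S.exists_dual_left hq hi
  obtain ⟨z2, h3, h4⟩ := S.exists_dual hq hi
  set ψ : V →ₗ[k] k × k := (S.lin u).prod (S.lin w) with hψ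
  have hr : LinearMap.range ψ = ⊤ := by
    rw [LinearMap.range_eq_top]
    rintro ⟨a, b⟩
    exact ⟨a • z1 + b • z2, by simp [hψ, S.add_right, S.smul_right, h1, h2, h3, h4]⟩
  have hk := ψ.finrank_range_add_finrank_ker
  rw [hr, finrank_top, hV] at hk
  simp at hk
  have hle : L ≤ LinearMap.ker ψ := by
    intro x hx
    simp [hψ, hL.2 u hu x hx, hL.2 w hw x hx]
  have heq := Submodule.eq_of_le_of_finrank_eq hle (by rw [hL.1]; omega)
  rw [heq]
  simp [hψ, hy u hu, hy w hw]

lemma exists_fixed_basis (S : SForm k V q) (hq : FrobQ k q) (hV : finrank k V = 4)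
    {L : Submodule k V} (hL : S.IsLn L) :
    ∃ u ∈ L, ∃ w ∈ L, Indep2 k u w ∧ S.φ u = u ∧ S.φ w = w := by
  have hst : ∀ x ∈ L, S.φ x ∈ L := by
    intro x hx
    apply S.perp_mem hq hV hL
    intro y hy
    have h2 := hq.two_le
    rw [S.hφ, hL.2 x hx y hy, hq.zero_pow]
  obtain ⟨v, hv, hv0⟩ := exists_not_mem_span1 (k := k) hL.1.ge 0
  obtain ⟨u, hu, hu0, hφu⟩ := exists_fixed hq.sq.two_le S.φ (S.φ_add hq) S.φ_smul (S.φ_inj hq)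
    L hst hv (by rintro rfl; simp at hv0)
  obtain ⟨w, hw, hwu⟩ := exists_not_mem_span1 (k := k) hL.1.ge u
  have hi : Indep2 k u w := Indep2.of_not_mem hu0 hwu
  obtain ⟨b, a, hab⟩ := exists_comb hi hL.1 hu hw (hst w hw)
  have h4 := hq.sq.two_le
  have ha : a ≠ 0 := by
    rintro rfl
    obtain ⟨s, hs⟩ := IsAlgClosed.exists_pow_nat_eq b (n := q ^ 2) (by omega)
    have : (-s) • u + (1 : k) • w = 0 := by
      apply S.φ_inj hq
      rw [S.φ_add hq, S.φ_smul, S.φ_smul, hφu, ← hab, hq.sq.neg_pow, hs]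
      simp
    simpa using (hi _ _ this).2
  obtain ⟨c, hc⟩ := IsAlgClosed.exists_pow_nat_eq a⁻¹ (n := q ^ 2 - 1) (by omega)
  have hc0 : c ≠ 0 := by
    rintro rfl
    rw [zero_pow (by omega)] at hc
    exact inv_ne_zero ha hc.symm
  have hc' : c ^ q ^ 2 * a = c := by
    have : c ^ q ^ 2 = c ^ (q ^ 2 - 1) * c := by rw [← pow_succ]; congr 1; omega
    rw [this, hc]; field_simp
  obtain ⟨t, ht⟩ := exists_pow_sub hq.sq (-1 : k) (c ^ q ^ 2 * b)
  refine ⟨u, hu, t • u + c • w, L.add_mem (L.smul_mem _ hu) (L.smul_mem _ hw), ?_, hφu, ?_⟩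
  · intro x y hxy
    have := hi (x + y * t) (y * c) (by rw [← hxy]; module)
    have hy : y = 0 := by simpa [hc0] using this.2
    subst hy
    simpa using this.1
  · rw [S.φ_add hq, S.φ_smul, S.φ_smul, hφu, ← hab]
    have h5 : t ^ q ^ 2 = t - c ^ q ^ 2 * b := by linear_combination ht
    rw [smul_add, smul_smul, smul_smul, hc', h5]
    module

lemma exists_skew (S : SForm k V q) (hq : FrobQ k q) (hV : finrank k V = 4)
    {L : Submodule k V} (hL : S.IsLn L) : ∃ L', S.IsLn L' ∧ L ⊓ L' = ⊥ := by
  obtain ⟨e1, he1, e2, he2, hi, hf1, hf2⟩ := S.exists_fixed_basis hq hV hL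
  obtain ⟨f1, h11, h21⟩ := S.exists_dual_left hq hi
  obtain ⟨f2, h12, h22⟩ := S.exists_dual hq hi
  have g11 : S.B f1 e1 = 1 := by rw [S.herm hf1, h11, one_pow]
  have g12 : S.B f1 e2 = 0 := by rw [S.herm hf2, h21, hq.zero_pow]
  have g21 : S.B f2 e1 = 0 := by rw [S.herm hf1, h12, hq.zero_pow]
  have g22 : S.B f2 e2 = 1 := by rw [S.herm hf2, h22, one_pow]
  have i11 := hL.2 e1 he1 e1 he1
  have i12 := hL.2 e1 he1 e2 he2
  have i21 := hL.2 e2 he2 e1 he1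
  have i22 := hL.2 e2 he2 e2 he2
  obtain ⟨a, ha⟩ := exists_pow_sub hq (1 : k) (S.B f1 f1)
  obtain ⟨d, hd⟩ := exists_pow_sub hq (1 : k) (S.B f2 f2)
  obtain ⟨b, hb⟩ := exists_pow_sub hq.sq (-1 : k) (S.B f1 f2 ^ q - S.B f2 f1)
  have hc : (- S.B f1 f2 - b ^ q) ^ q = - S.B f1 f2 ^ q - b ^ q ^ 2 := by
    rw [hq.sub_pow, hq.neg_pow, ← pow_mul, pow_two]
  set c := - S.B f1 f2 - b ^ q with hcd
  have hval : ∀ s t : k, S.B e1 (s • (f1 + a • e1 + b • e2) + t • (f2 + c • e1 + d • e2)) = s ∧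
      S.B e2 (s • (f1 + a • e1 + b • e2) + t • (f2 + c • e1 + d • e2)) = t := by
    intro s t
    simp [S.add_right, S.smul_right, *]
  have hi' : Indep2 k (f1 + a • e1 + b • e2) (f2 + c • e1 + d • e2) := by
    intro s t hst
    have := hval s t
    rw [hst, S.zero_right, S.zero_right] at this
    exact ⟨this.1.symm, this.2.symm⟩
  refine ⟨_, S.isLn_span2 hi' ?_ ?_ ?_ ?_, ?_⟩
  · simp only [S.add_left, S.add_right, S.smul_left, S.smul_right, h11, h12, h21, h22, g11, g12,
      g21, g22, i11, i12, i21, i22]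
    linear_combination ha
  · simp only [S.add_left, S.add_right, S.smul_left, S.smul_right, h11, h12, h21, h22, g11, g12,
      g21, g22, i11, i12, i21, i22]
    rw [hcd]; ring
  · simp only [S.add_left, S.add_right, S.smul_left, S.smul_right, h11, h12, h21, h22, g11, g12,
      g21, g22, i11, i12, i21, i22, hc]
    linear_combination -hb
  · simp only [S.add_left, S.add_right, S.smul_left, S.smul_right, h11, h12, h21, h22, g11, g12,
      g21, g22, i11, i12, i21, i22]
    linear_combination hd
  · rw [eq_bot_iff]
    rintro v ⟨hv1, hv2⟩
    obtain ⟨s, t, rfl⟩ := Submodule.mem_span_pair.mp hv2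
    have h1 := hL.2 e1 he1 _ hv1
    have h2 := hL.2 e2 he2 _ hv1
    rw [(hval s t).1] at h1
    rw [(hval s t).2] at h2
    simp [h1, h2]

lemma exists_fixed_isotropic (S : SForm k V q) (hq : FrobQ k q) (hV : finrank k V = 4) :
    ∃ v, v ≠ 0 ∧ S.φ v = v ∧ S.B v v = 0 := by
  have hq2 := hq.two_le
  obtain ⟨v, -, hv0⟩ := exists_not_mem_span1 (k := k) (V := V) (L := ⊤) (by simp [hV]) 0
  obtain ⟨u, -, hu0, hφu⟩ := exists_fixed hq.sq.two_le S.φ (S.φ_add hq) S.φ_smul (S.φ_inj hq)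
    ⊤ (by simp) (v := v) (by simp) (by rintro rfl; simp at hv0)
  by_cases huu : S.B u u = 0
  · exact ⟨u, hu0, hφu, huu⟩
  have hk := finrank_ker_ge (S.lin u)
  obtain ⟨v', hv', hv0'⟩ := exists_not_mem_span1 (k := k) (L := LinearMap.ker (S.lin u))
    (by omega) 0
  obtain ⟨w, hw, hw0, hφw⟩ := exists_fixed hq.sq.two_le S.φ (S.φ_add hq) S.φ_smul (S.φ_inj hq)
    (LinearMap.ker (S.lin u)) (by
      intro x hx
      simp only [LinearMap.mem_ker, lin_apply] at hx ⊢
      rw [S.hφ, S.herm hφu, hx, hq.zero_pow, hq.zero_pow]) hv' (by rintro rfl; simp at hv0')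
  by_cases hww : S.B w w = 0
  · exact ⟨w, hw0, hφw, hww⟩
  have huw : S.B u w = 0 := by simpa using hw
  have hwu : S.B w u = 0 := by rw [S.herm hφu, huw, hq.zero_pow]
  obtain ⟨t, ht⟩ := IsAlgClosed.exists_pow_nat_eq (-(S.B u u / S.B w w)) (n := q + 1) (by omega)
  have ht0 : t ≠ 0 := by
    rintro rfl
    rw [zero_pow (by omega)] at ht
    have := div_ne_zero huu hww
    exact this (by simpa using ht.symm)
  have htt : t ^ q ^ 2 = t := by
    have h1 : (t ^ (q + 1)) ^ q = t ^ (q + 1) := by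
      rw [ht, hq.neg_pow, div_pow, ← S.herm hφu, ← S.herm hφw]
    have h2 : t ^ q * (t ^ q ^ 2 - t) = 0 := by
      have : (t ^ (q + 1)) ^ q = t ^ q ^ 2 * t ^ q := by
        rw [← pow_mul, ← pow_add]; congr 1; ring
      rw [this, pow_succ] at h1
      linear_combination h1
    rcases mul_eq_zero.mp h2 with h | h
    · exact absurd h (pow_ne_zero _ ht0)
    · exact sub_eq_zero.mp h
  refine ⟨u + t • w, ?_, ?_, ?_⟩
  · intro h
    have := congrArg (S.B u) h
    rw [S.add_right, S.smul_right, huw, S.zero_right] at this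
    apply huu
    simpa using this
  · rw [S.φ_add hq, S.φ_smul, hφu, hφw, htt]
  · simp only [S.add_left, S.add_right, S.smul_left, S.smul_right, huw, hwu]
    have : t ^ q * t = -(S.B u u / S.B w w) := by rw [← pow_succ, ht]
    have h3 : S.B u u / S.B w w * S.B w w = S.B u u := div_mul_cancel₀ _ hww
    linear_combination S.B w w * this - h3

open Polynomial in
lemma exists_root_aux (a b c d : k) (ha : a ≠ 0) (hq2 : 2 ≤ q) :
    ∃ t : k, a * t ^ (q + 1) + b * t ^ q + c * t + d = 0 := by
  have hd : (C a * X ^ (q + 1) + (C b * X ^ q + (C c * X + C d)) : k[X]).natDegree = q + 1 := by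
    rw [natDegree_add_eq_left_of_natDegree_lt]
    · exact natDegree_C_mul_X_pow _ _ ha
    · rw [natDegree_C_mul_X_pow _ _ ha]
      refine lt_of_le_of_lt (natDegree_add_le _ _) (max_lt ?_ ?_)
      · exact lt_of_le_of_lt (natDegree_C_mul_X_pow_le _ _) (by omega)
      · exact lt_of_le_of_lt natDegree_linear_le (by omega)
  obtain ⟨t, ht⟩ := IsAlgClosed.exists_root
      (C a * X ^ (q + 1) + (C b * X ^ q + (C c * X + C d)) : k[X]) (by
    intro h0
    have h1 := natDegree_eq_of_degree_eq_some h0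
    rw [hd] at h1
    change q + 1 = 0 at h1
    omega)
  refine ⟨t, ?_⟩
  simp [IsRoot] at ht
  linear_combination ht

lemma exists_line (S : SForm k V q) (hq : FrobQ k q) (hV : finrank k V = 4) :
    ∃ L, S.IsLn L := by
  obtain ⟨v, hv0, hφv, hvv⟩ := S.exists_fixed_isotropic hq hV
  have hk := finrank_ker_ge (S.lin v)
  have hp : ∀ w ∈ LinearMap.ker (S.lin v), S.B w v = 0 ∧ S.B v w = 0 := by
    intro w hw
    simp only [LinearMap.mem_ker, lin_apply] at hw
    exact ⟨by rw [S.herm hφv, hw, hq.zero_pow], hw⟩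
  obtain ⟨w1, hw1, hn1⟩ := exists_not_mem_span1 (k := k) (L := LinearMap.ker (S.lin v))
    (by omega) v
  obtain ⟨w2, hw2, hn2⟩ := exists_not_mem_span2 (k := k) (L := LinearMap.ker (S.lin v))
    (by omega) v w1
  suffices h : ∃ w ∈ LinearMap.ker (S.lin v), w ∉ Submodule.span k {v} ∧ S.B w w = 0 by
    obtain ⟨w, hw, hn, hww⟩ := h
    exact ⟨_, S.isLn_span2 (Indep2.of_not_mem hv0 hn) hvv (hp w hw).2 (hp w hw).1 hww⟩
  by_cases h11 : S.B w1 w1 = 0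
  · exact ⟨w1, hw1, hn1, h11⟩
  obtain ⟨t, ht⟩ := exists_root_aux (S.B w1 w1) (S.B w1 w2) (S.B w2 w1) (S.B w2 w2) h11 hq.two_le
  refine ⟨w2 + t • w1, Submodule.add_mem _ hw2 (Submodule.smul_mem _ _ hw1), ?_, ?_⟩
  · intro h
    obtain ⟨s, hs⟩ := Submodule.mem_span_singleton.mp h
    apply hn2
    rw [Submodule.mem_span_pair]
    exact ⟨s, -t, by rw [hs]; module⟩
  · simp only [S.add_left, S.add_right, S.smul_left, S.smul_right]
    rw [pow_succ] at ht
    linear_combination ht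

end SForm

set_option linter.unusedSimpArgs false
set_option linter.unusedSectionVars false

structure Frame {k V : Type*} [Field k] [AddCommGroup V] [Module k V] {q : ℕ}
    (S : SForm k V q) where
  x1 : V →ₗ[k] k
  x2 : V →ₗ[k] k
  y1 : V →ₗ[k] k
  y2 : V →ₗ[k] k
  mk' : k → k → k → k → V
  x1_mk : ∀ a b c d, x1 (mk' a b c d) = a
  x2_mk : ∀ a b c d, x2 (mk' a b c d) = b
  y1_mk : ∀ a b c d, y1 (mk' a b c d) = c
  y2_mk : ∀ a b c d, y2 (mk' a b c d) = d
  ext0 : ∀ v, x1 v = 0 → x2 v = 0 → y1 v = 0 → y2 v = 0 → v = 0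
  hB : ∀ u v, S.B u v = x1 u ^ q * y1 v + x2 u ^ q * y2 v + y1 u ^ q * x1 v + y2 u ^ q * x2 v

namespace Frame
variable {k V : Type*} [Field k] [AddCommGroup V] [Module k V] {q : ℕ} {S : SForm k V q}

attribute [simp] x1_mk x2_mk y1_mk y2_mk

def Gr (F : Frame S) (a b c d : k) : Submodule k V :=
  LinearMap.ker (F.y1 - a • F.x1 - b • F.x2) ⊓ LinearMap.ker (F.y2 - c • F.x1 - d • F.x2)

lemma mem_Gr (F : Frame S) {a b c d : k} {v : V} : v ∈ F.Gr a b c d ↔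
    F.y1 v = a * F.x1 v + b * F.x2 v ∧ F.y2 v = c * F.x1 v + d * F.x2 v := by
  simp only [Gr, Submodule.mem_inf, LinearMap.mem_ker, LinearMap.sub_apply, LinearMap.smul_apply,
    smul_eq_mul, sub_sub, sub_eq_zero, LinearMap.add_apply]

def L1 (F : Frame S) : Submodule k V := F.Gr 0 0 0 0

lemma mem_L1 (F : Frame S) {v : V} : v ∈ F.L1 ↔ F.y1 v = 0 ∧ F.y2 v = 0 := by
  simp [L1, mem_Gr]

def L2 (F : Frame S) : Submodule k V := LinearMap.ker F.x1 ⊓ LinearMap.ker F.x2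

lemma mem_L2 (F : Frame S) {v : V} : v ∈ F.L2 ↔ F.x1 v = 0 ∧ F.x2 v = 0 := by
  simp [L2]

def Tr (F : Frame S) : Option k → Submodule k V
  | some t => LinearMap.ker (F.x2 - t • F.x1) ⊓ LinearMap.ker (F.y1 + t ^ q • F.y2)
  | none => LinearMap.ker F.x1 ⊓ LinearMap.ker F.y2

lemma mem_Tr_some (F : Frame S) {t : k} {v : V} : v ∈ F.Tr (some t) ↔
    F.x2 v = t * F.x1 v ∧ F.y1 v = - t ^ q * F.y2 v := by
  simp [Tr, sub_eq_zero, add_eq_zero_iff_eq_neg]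

lemma mem_Tr_none (F : Frame S) {v : V} : v ∈ F.Tr none ↔ F.x1 v = 0 ∧ F.y2 v = 0 := by
  simp [Tr]

lemma finrank_Gr (F : Frame S) (a b c d : k) : finrank k (F.Gr a b c d) = 2 := by
  apply finrank_eq_two _ F.x1 F.x2
  · intro v hv h1 h2
    rw [mem_Gr, h1, h2] at hv
    exact F.ext0 v h1 h2 (by simpa using hv.1) (by simpa using hv.2)
  · intro s t
    exact ⟨F.mk' s t (a * s + b * t) (c * s + d * t), by simp [mem_Gr], by simp, by simp⟩

lemma finrank_L2 (F : Frame S) : finrank k F.L2 = 2 := by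
  apply finrank_eq_two _ F.y1 F.y2
  · intro v hv h1 h2
    rw [mem_L2] at hv
    exact F.ext0 v hv.1 hv.2 h1 h2
  · intro s t
    exact ⟨F.mk' 0 0 s t, by simp [mem_L2], by simp, by simp⟩

lemma finrank_Tr (F : Frame S) (t : Option k) : finrank k (F.Tr t) = 2 := by
  cases t with
  | none =>
    apply finrank_eq_two _ F.x2 F.y1
    · intro v hv h1 h2
      rw [mem_Tr_none] at hv
      exact F.ext0 v hv.1 h1 h2 hv.2
    · intro s t
      exact ⟨F.mk' 0 s t 0, by simp [mem_Tr_none], by simp, by simp⟩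
  | some t =>
    apply finrank_eq_two _ F.x1 F.y2
    · intro v hv h1 h2
      rw [mem_Tr_some, h1, h2] at hv
      exact F.ext0 v h1 (by simpa using hv.1) (by simpa using hv.2) h2
    · intro r s
      exact ⟨F.mk' r (t * r) (-t ^ q * s) s, by simp [mem_Tr_some], by simp, by simp⟩

lemma isLn_Gr (F : Frame S) (hq : FrobQ k q) (a b c d : k) : S.IsLn (F.Gr a b c d) ↔
    a ^ q = -a ∧ c = - b ^ q ∧ b ^ q ^ 2 = b ∧ d ^ q = -d := by
  have h0 := hq.zero_pow
  constructor
  · intro h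
    have hu : F.mk' 1 0 a c ∈ F.Gr a b c d := by simp [mem_Gr]
    have hw : F.mk' 0 1 b d ∈ F.Gr a b c d := by simp [mem_Gr]
    have h1 := h.2 _ hu _ hu
    have h2 := h.2 _ hu _ hw
    have h3 := h.2 _ hw _ hu
    have h4 := h.2 _ hw _ hw
    simp [F.hB, h0] at h1 h2 h3 h4
    have hc : c = - b ^ q := by linear_combination h3
    refine ⟨by linear_combination h1, hc, ?_, by linear_combination h4⟩
    rw [hc, hq.neg_pow, ← pow_mul, ← pow_two] at h2
    linear_combination -h2
  · rintro ⟨ha, rfl, hb, hd⟩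
    refine ⟨F.finrank_Gr _ _ _ _, fun u hu v hv => ?_⟩
    rw [mem_Gr] at hu hv
    rw [F.hB, hu.1, hu.2, hv.1, hv.2, hq.add_pow, hq.add_pow]
    simp only [mul_pow, hq.neg_pow, ha, hd, ← pow_mul]
    rw [← pow_two, hb]
    ring

lemma isLn_L2 (F : Frame S) (hq : FrobQ k q) : S.IsLn F.L2 := by
  refine ⟨F.finrank_L2, fun u hu v hv => ?_⟩
  rw [mem_L2] at hu hv
  rw [F.hB, hu.1, hu.2, hv.1, hv.2, hq.zero_pow]
  ring

lemma isLn_L1 (F : Frame S) (hq : FrobQ k q) : S.IsLn F.L1 := by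
  rw [L1, F.isLn_Gr hq]
  have h2 := hq.sq.zero_pow
  simp [hq.zero_pow, h2]

lemma isLn_Tr_none (F : Frame S) (hq : FrobQ k q) : S.IsLn (F.Tr none) := by
  refine ⟨F.finrank_Tr _, fun u hu v hv => ?_⟩
  rw [mem_Tr_none] at hu hv
  rw [F.hB, hu.1, hu.2, hv.1, hv.2, hq.zero_pow]
  ring

lemma isLn_Tr_some (F : Frame S) (hq : FrobQ k q) (t : k) :
    S.IsLn (F.Tr (some t)) ↔ t ^ q ^ 2 = t := by
  constructor
  · intro h
    have hu : F.mk' 1 t 0 0 ∈ F.Tr (some t) := by simp [mem_Tr_some]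
    have hw : F.mk' 0 0 (-t ^ q) 1 ∈ F.Tr (some t) := by simp [mem_Tr_some]
    have h1 := h.2 _ hw _ hu
    simp [F.hB, hq.zero_pow, hq.neg_pow, ← pow_mul, ← pow_two] at h1
    linear_combination -h1
  · intro ht
    refine ⟨F.finrank_Tr _, fun u hu v hv => ?_⟩
    rw [mem_Tr_some] at hu hv
    rw [F.hB, hu.1, hu.2, hv.1, hv.2]
    simp only [mul_pow, hq.neg_pow, ← pow_mul]
    rw [← pow_two, ht]
    ring

lemma Gr_inf_L2 (F : Frame S) (a b c d : k) : F.Gr a b c d ⊓ F.L2 = ⊥ := by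
  rw [eq_bot_iff]
  rintro v ⟨h1, h2⟩
  rw [SetLike.mem_coe, mem_Gr] at h1
  rw [SetLike.mem_coe, mem_L2] at h2
  rw [h2.1, h2.2] at h1
  exact F.ext0 v h2.1 h2.2 (by simpa using h1.1) (by simpa using h1.2)

lemma Gr_inf_L1 (F : Frame S) (a b c d : k) : F.Gr a b c d ⊓ F.L1 = ⊥ ↔ a * d - b * c ≠ 0 := by
  constructor
  · intro h hdet
    have key : ∀ s t : k, a * s + b * t = 0 → c * s + d * t = 0 → s = 0 ∧ t = 0 := by
      intro s t h1 h2
      have : F.mk' s t 0 0 ∈ F.Gr a b c d ⊓ F.L1 := by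
        refine ⟨?_, ?_⟩
        · rw [SetLike.mem_coe, mem_Gr]; simp [h1, h2]
        · rw [SetLike.mem_coe, mem_L1]; simp
      rw [h, Submodule.mem_bot] at this
      have h3 := congrArg F.x1 this
      have h4 := congrArg F.x2 this
      simp at h3 h4
      exact ⟨h3, h4⟩
    have e1 := key d (-c) (by linear_combination hdet) (by ring)
    have e2 := key b (-a) (by ring) (by linear_combination -hdet)
    have ha : a = 0 := by simpa using e2.2
    have hc : c = 0 := by simpa using e1.2
    have := key 1 0 (by simp [ha]) (by simp [hc])
    exact one_ne_zero this.1
  · intro hdet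
    rw [eq_bot_iff]
    rintro v ⟨h1, h2⟩
    rw [SetLike.mem_coe, mem_Gr] at h1
    rw [SetLike.mem_coe, mem_L1] at h2
    rw [h2.1, h2.2] at h1
    have e1 : (a * d - b * c) * F.x1 v = 0 := by linear_combination b * h1.2 - d * h1.1
    have e2 : (a * d - b * c) * F.x2 v = 0 := by linear_combination c * h1.1 - a * h1.2
    simp only [mul_eq_zero, hdet, false_or] at e1 e2
    exact F.ext0 v e1 e2 h2.1 h2.2

lemma Gr_inj (F : Frame S) {a b c d a' b' c' d' : k} (h : F.Gr a b c d = F.Gr a' b' c' d') :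
    a = a' ∧ b = b' ∧ c = c' ∧ d = d' := by
  have hu : F.mk' 1 0 a c ∈ F.Gr a' b' c' d' := by rw [← h]; simp [mem_Gr]
  have hw : F.mk' 0 1 b d ∈ F.Gr a' b' c' d' := by rw [← h]; simp [mem_Gr]
  simp [mem_Gr] at hu hw
  exact ⟨hu.1, hw.1, hu.2, hw.2⟩

lemma exists_Gr [FiniteDimensional k V] (F : Frame S) {L : Submodule k V} (hL : finrank k L = 2)
    (h : L ⊓ F.L2 = ⊥) : ∃ a b c d, L = F.Gr a b c d := by
  have hz : ∀ v ∈ L, F.x1 v = 0 → F.x2 v = 0 → v = 0 := by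
    intro v hv h1 h2
    have : v ∈ L ⊓ F.L2 := ⟨hv, F.mem_L2.mpr ⟨h1, h2⟩⟩
    rwa [h, Submodule.mem_bot] at this
  have hinj : Function.Injective ((F.x1.prod F.x2).comp L.subtype) := by
    rw [← LinearMap.ker_eq_bot, LinearMap.ker_eq_bot']
    rintro ⟨v, hv⟩ h
    simp at h
    simpa using hz v hv h.1 h.2
  have hs := (LinearMap.injective_iff_surjective_of_finrank_eq_finrank (by rw [hL]; simp)).mp hinj
  obtain ⟨⟨u, hu⟩, hu'⟩ := hs (1, 0)
  obtain ⟨⟨w, hw⟩, hw'⟩ := hs (0, 1)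
  simp at hu' hw'
  refine ⟨F.y1 u, F.y1 w, F.y2 u, F.y2 w, ?_⟩
  apply Submodule.eq_of_le_of_finrank_eq
  · intro v hv
    have := hz (v - (F.x1 v • u + F.x2 v • w))
      (L.sub_mem hv (L.add_mem (L.smul_mem _ hu) (L.smul_mem _ hw)))
      (by simp [hu', hw']) (by simp [hu', hw'])
    rw [sub_eq_zero] at this
    rw [mem_Gr]
    have h1 := congrArg F.y1 this
    have h2 := congrArg F.y2 this
    simp only [map_add, map_smul, smul_eq_mul] at h1 h2
    exact ⟨by rw [h1]; ring, by rw [h2]; ring⟩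
  · rw [hL, finrank_Gr]

lemma Tr_inf_Tr (F : Frame S) {s t : Option k} (hst : s ≠ t) (hq : FrobQ k q) :
    F.Tr s ⊓ F.Tr t = ⊥ := by
  have key1 : ∀ t : k, F.Tr (some t) ⊓ F.Tr none = ⊥ := by
    intro t
    rw [eq_bot_iff]
    rintro v ⟨h1, h2⟩
    rw [SetLike.mem_coe, mem_Tr_some] at h1
    rw [SetLike.mem_coe, mem_Tr_none] at h2
    rw [h2.1, h2.2] at h1
    exact F.ext0 v h2.1 (by simpa using h1.1) (by simpa using h1.2) h2.2
  cases s with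
  | none =>
    cases t with
    | none => exact absurd rfl hst
    | some t => rw [inf_comm]; exact key1 t
  | some s =>
    cases t with
    | none => exact key1 s
    | some t =>
      have hne : s - t ≠ 0 := fun h => hst (by rw [sub_eq_zero.mp h])
      have hne' : s ^ q - t ^ q ≠ 0 := fun h => hst (by rw [hq.inj (sub_eq_zero.mp h)])
      rw [eq_bot_iff]
      rintro v ⟨h1, h2⟩
      rw [SetLike.mem_coe, mem_Tr_some] at h1 h2
      have e1 : (s - t) * F.x1 v = 0 := by linear_combination h2.1 - h1.1
      have e2 : (s ^ q - t ^ q) * F.y2 v = 0 := by linear_combination h1.2 - h2.2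
      simp only [mul_eq_zero, hne, hne', false_or] at e1 e2
      rw [e1, e2] at h1
      exact F.ext0 v e1 (by simpa using h1.1) (by simpa using h1.2) e2

lemma ne_bot_of (L : Submodule k V) (v : V) (hv : v ∈ L) (hv0 : v ≠ 0) : L ≠ ⊥ := by
  rintro rfl
  exact hv0 (by simpa using hv)

lemma Tr_inf_L1 (F : Frame S) (t : Option k) : F.Tr t ⊓ F.L1 ≠ ⊥ := by
  cases t with
  | none =>
    refine ne_bot_of _ (F.mk' 0 1 0 0) ⟨?_, ?_⟩ fun h => ?_
    · rw [SetLike.mem_coe, mem_Tr_none]; simp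
    · rw [SetLike.mem_coe, mem_L1]; simp
    · simpa using congrArg F.x2 h
  | some t =>
    refine ne_bot_of _ (F.mk' 1 t 0 0) ⟨?_, ?_⟩ fun h => ?_
    · rw [SetLike.mem_coe, mem_Tr_some]; simp
    · rw [SetLike.mem_coe, mem_L1]; simp
    · simpa using congrArg F.x1 h

lemma Tr_inf_L2 (F : Frame S) (t : Option k) : F.Tr t ⊓ F.L2 ≠ ⊥ := by
  cases t with
  | none =>
    refine ne_bot_of _ (F.mk' 0 0 1 0) ⟨?_, ?_⟩ fun h => ?_
    · rw [SetLike.mem_coe, mem_Tr_none]; simp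
    · rw [SetLike.mem_coe, mem_L2]; simp
    · simpa using congrArg F.y1 h
  | some t =>
    refine ne_bot_of _ (F.mk' 0 0 (-t ^ q) 1) ⟨?_, ?_⟩ fun h => ?_
    · rw [SetLike.mem_coe, mem_Tr_some]; simp
    · rw [SetLike.mem_coe, mem_L2]; simp
    · simpa using congrArg F.y2 h

lemma Tr_none_inf_Gr (F : Frame S) (a b c d : k) : F.Tr none ⊓ F.Gr a b c d ≠ ⊥ ↔ d = 0 := by
  constructor
  · intro h
    obtain ⟨v, ⟨h1, h2⟩, hv0⟩ := Submodule.exists_mem_ne_zero_of_ne_bot h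
    rw [SetLike.mem_coe, mem_Tr_none] at h1
    rw [SetLike.mem_coe, mem_Gr, h1.1, h1.2] at h2
    by_contra hd
    have hx2 : F.x2 v = 0 := by
      have : d * F.x2 v = 0 := by linear_combination -h2.2
      simpa [hd] using this
    rw [hx2] at h2
    exact hv0 (F.ext0 v h1.1 hx2 (by simpa using h2.1) h1.2)
  · rintro rfl
    refine ne_bot_of _ (F.mk' 0 1 b 0) ⟨?_, ?_⟩ fun h => ?_
    · rw [SetLike.mem_coe, mem_Tr_none]; simp
    · rw [SetLike.mem_coe, mem_Gr]; simp
    · simpa using congrArg F.x2 h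

lemma Tr_some_inf_Gr (F : Frame S) (a b c d t : k) : F.Tr (some t) ⊓ F.Gr a b c d ≠ ⊥ ↔
    a + b * t + t ^ q * (c + d * t) = 0 := by
  constructor
  · intro h
    obtain ⟨v, ⟨h1, h2⟩, hv0⟩ := Submodule.exists_mem_ne_zero_of_ne_bot h
    rw [SetLike.mem_coe, mem_Tr_some] at h1
    rw [SetLike.mem_coe, mem_Gr] at h2
    have hx1 : F.x1 v ≠ 0 := by
      intro h0
      have h3 : F.x2 v = 0 := by rw [h1.1, h0, mul_zero]
      rw [h0, h3] at h2
      exact hv0 (F.ext0 v h0 h3 (by simpa using h2.1) (by simpa using h2.2))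
    have : (a + b * t + t ^ q * (c + d * t)) * F.x1 v = 0 := by
      have h3 := h1.1
      have h4 := h1.2
      have h5 := h2.1
      have h6 := h2.2
      rw [h3] at h5 h6
      rw [h6] at h4
      linear_combination h4 - h5
    simpa [hx1] using this
  · intro h
    refine ne_bot_of _ (F.mk' 1 t (a + b * t) (c + d * t)) ⟨?_, ?_⟩ fun h => ?_
    · rw [SetLike.mem_coe, mem_Tr_some]; simp; linear_combination h
    · rw [SetLike.mem_coe, mem_Gr]; simp
    · simpa using congrArg F.x1 h

lemma L1_inf_L2 (F : Frame S) : F.L1 ⊓ F.L2 = ⊥ := F.Gr_inf_L2 _ _ _ _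

lemma exists_Tr [FiniteDimensional k V] (F : Frame S) (hq : FrobQ k q) {L : Submodule k V}
    (hL : S.IsLn L) (h1 : L ⊓ F.L1 ≠ ⊥) (h2 : L ⊓ F.L2 ≠ ⊥) : ∃ t, L = F.Tr t := by
  obtain ⟨u, ⟨hu, hu1⟩, hu0⟩ := Submodule.exists_mem_ne_zero_of_ne_bot h1
  obtain ⟨w, ⟨hw, hw2⟩, hw0⟩ := Submodule.exists_mem_ne_zero_of_ne_bot h2
  rw [SetLike.mem_coe] at hu hw
  rw [SetLike.mem_coe, mem_L1] at hu1
  rw [SetLike.mem_coe, mem_L2] at hw2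
  have hi : Indep2 k u w := by
    intro a b hab
    constructor
    · by_contra ha
      apply hu0
      have e1 := congrArg F.x1 hab
      have e2 := congrArg F.x2 hab
      simp [hw2, ha] at e1 e2
      exact F.ext0 u e1 e2 hu1.1 hu1.2
    · by_contra ha
      apply hw0
      have e1 := congrArg F.y1 hab
      have e2 := congrArg F.y2 hab
      simp [hu1, ha] at e1 e2
      exact F.ext0 w hw2.1 hw2.2 e1 e2
  have hB := hL.2 u hu w hw
  rw [F.hB, hu1.1, hu1.2, hw2.1, hw2.2] at hB
  simp only [mul_zero, add_zero] at hB
  by_cases hx : F.x1 u = 0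
  · refine ⟨none, eq_of_two hi hL.1 (F.finrank_Tr _) hu hw ?_ ?_⟩
    · rw [mem_Tr_none]; exact ⟨hx, hu1.2⟩
    · rw [mem_Tr_none]
      refine ⟨hw2.1, ?_⟩
      rw [hx, hq.zero_pow, zero_mul, zero_add] at hB
      rcases mul_eq_zero.mp hB with h | h
      · have := (pow_eq_zero_iff (by have := hq.two_le; omega)).mp h
        exact absurd (F.ext0 u hx this hu1.1 hu1.2) hu0
      · exact h
  · refine ⟨some (F.x2 u / F.x1 u), eq_of_two hi hL.1 (F.finrank_Tr _) hu hw ?_ ?_⟩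
    · rw [mem_Tr_some, hu1.1, hu1.2]
      exact ⟨by field_simp, by simp⟩
    · rw [mem_Tr_some, hw2.1, hw2.2]
      refine ⟨by simp, ?_⟩
      rw [div_pow]
      have : F.x1 u ^ q ≠ 0 := pow_ne_zero _ hx
      field_simp
      linear_combination hB

end Frame

namespace SForm
variable {k V : Type*} [Field k] [AddCommGroup V] [Module k V] {q : ℕ}
variable [IsAlgClosed k] [FiniteDimensional k V]

lemma exists_frame (S : SForm k V q) (hq : FrobQ k q) (hV : finrank k V = 4)
    {L L' : Submodule k V} (hL : S.IsLn L) (hL' : S.IsLn L') (hs : L ⊓ L' = ⊥) :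
    ∃ F : Frame S, F.L1 = L ∧ F.L2 = L' := by
  obtain ⟨e1, he1, e2, he2, hi, hf1, hf2⟩ := S.exists_fixed_basis hq hV hL
  have hinj : Function.Injective (((S.lin e1).prod (S.lin e2)).comp L'.subtype) := by
    rw [← LinearMap.ker_eq_bot, LinearMap.ker_eq_bot']
    rintro ⟨v, hv⟩ h
    simp at h
    have : v ∈ L ⊓ L' := by
      refine ⟨S.perp_mem hq hV hL fun x hx => ?_, hv⟩
      obtain ⟨a, b, rfl⟩ := exists_comb hi hL.1 he1 he2 hx
      simp [S.add_left, S.smul_left, h.1, h.2]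
    rw [hs, Submodule.mem_bot] at this
    simpa using this
  have hsj := (LinearMap.injective_iff_surjective_of_finrank_eq_finrank
    (by rw [hL'.1]; simp)).mp hinj
  obtain ⟨⟨f1, hF1⟩, hf1'⟩ := hsj (1, 0)
  obtain ⟨⟨f2, hF2⟩, hf2'⟩ := hsj (0, 1)
  simp at hf1' hf2'
  obtain ⟨h11, h21⟩ := hf1'
  obtain ⟨h12, h22⟩ := hf2'
  have g11 : S.B f1 e1 = 1 := by rw [S.herm hf1, h11, one_pow]
  have g12 : S.B f1 e2 = 0 := by rw [S.herm hf2, h21, hq.zero_pow]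
  have g21 : S.B f2 e1 = 0 := by rw [S.herm hf1, h12, hq.zero_pow]
  have g22 : S.B f2 e2 = 1 := by rw [S.herm hf2, h22, one_pow]
  have i11 := hL.2 e1 he1 e1 he1
  have i12 := hL.2 e1 he1 e2 he2
  have i21 := hL.2 e2 he2 e1 he1
  have i22 := hL.2 e2 he2 e2 he2
  have j11 := hL'.2 f1 hF1 f1 hF1
  have j12 := hL'.2 f1 hF1 f2 hF2
  have j21 := hL'.2 f2 hF2 f1 hF1
  have j22 := hL'.2 f2 hF2 f2 hF2
  set M : (k × k) × (k × k) →ₗ[k] V :=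
    { toFun := fun c => c.1.1 • e1 + c.1.2 • e2 + c.2.1 • f1 + c.2.2 • f2
      map_add' := by intro x y; simp only [Prod.fst_add, Prod.snd_add]; module
      map_smul' := by
        intro c x
        simp only [Prod.smul_fst, Prod.smul_snd, smul_eq_mul, RingHom.id_apply]; module } with hM
  have hMa : ∀ a b c d, M ((a, b), (c, d)) = a • e1 + b • e2 + c • f1 + d • f2 := fun _ _ _ _ => rfl
  have cx1 : ∀ a b c d, S.B f1 (M ((a, b), (c, d))) = a := by
    intro a b c d
    simp [hMa, S.add_right, S.smul_right, *]
  have cx2 : ∀ a b c d, S.B f2 (M ((a, b), (c, d))) = b := by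
    intro a b c d
    simp [hMa, S.add_right, S.smul_right, *]
  have cy1 : ∀ a b c d, S.B e1 (M ((a, b), (c, d))) = c := by
    intro a b c d
    simp [hMa, S.add_right, S.smul_right, *]
  have cy2 : ∀ a b c d, S.B e2 (M ((a, b), (c, d))) = d := by
    intro a b c d
    simp [hMa, S.add_right, S.smul_right, *]
  have hMi : Function.Injective M := by
    rw [← LinearMap.ker_eq_bot, LinearMap.ker_eq_bot']
    rintro ⟨⟨a, b⟩, ⟨c, d⟩⟩ h
    have e1 := cx1 a b c d
    have e2 := cx2 a b c d
    have e3 := cy1 a b c d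
    have e4 := cy2 a b c d
    rw [h, S.zero_right] at e1 e2 e3 e4
    simp [← e1, ← e2, ← e3, ← e4]
  have hMs := (LinearMap.injective_iff_surjective_of_finrank_eq_finrank
    (by rw [hV]; simp)).mp hMi
  let F : Frame S :=
    { x1 := S.lin f1, x2 := S.lin f2, y1 := S.lin e1, y2 := S.lin e2
      mk' := fun a b c d => M ((a, b), (c, d))
      x1_mk := cx1, x2_mk := cx2, y1_mk := cy1, y2_mk := cy2
      ext0 := by
        intro v h1 h2 h3 h4
        obtain ⟨⟨⟨a, b⟩, ⟨c, d⟩⟩, rfl⟩ := hMs v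
        rw [lin_apply] at h1 h2 h3 h4
        rw [cx1] at h1
        rw [cx2] at h2
        rw [cy1] at h3
        rw [cy2] at h4
        subst h1 h2 h3 h4
        simp [hMa]
      hB := by
        intro u v
        obtain ⟨⟨⟨a, b⟩, ⟨c, d⟩⟩, rfl⟩ := hMs u
        simp only [lin_apply, cx1, cx2, cy1, cy2]
        rw [hMa]
        simp only [S.add_left, S.smul_left] }
  refine ⟨F, ?_, ?_⟩
  · symm
    apply Submodule.eq_of_le_of_finrank_eq
    · intro v hv
      rw [F.mem_L1]
      exact ⟨hL.2 e1 he1 v hv, hL.2 e2 he2 v hv⟩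
    · rw [hL.1, (F.isLn_L1 hq).1]
  · symm
    apply Submodule.eq_of_le_of_finrank_eq
    · intro v hv
      rw [F.mem_L2]
      exact ⟨hL'.2 f1 hF1 v hv, hL'.2 f2 hF2 v hv⟩
    · rw [hL'.1, F.finrank_L2]
end SForm

set_option linter.unusedSimpArgs false
set_option linter.unusedSectionVars false

namespace Frame
variable {k V : Type*} [Field k] [AddCommGroup V] [Module k V] {q : ℕ} {S : SForm k V q}
variable [IsAlgClosed k] [FiniteDimensional k V]

lemma ncard_neg (hq : FrobQ k q) : {z : k | z ^ q = -z}.ncard = q := by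
  have := ncard_pow_eq hq (c := (-1 : k)) (by simp)
  simpa using this

lemma ncard_sq (hq : FrobQ k q) : {z : k | z ^ q ^ 2 = z}.ncard = q ^ 2 := by
  have := ncard_pow_eq hq.sq (c := (1 : k)) (by simp)
  simpa using this

def par (k : Type*) [Field k] (q : ℕ) : Set (k × k × k) :=
  {z : k | z ^ q = -z} ×ˢ {z : k | z ^ q ^ 2 = z} ×ˢ {z : k | z ^ q = -z}

lemma ncard_par (hq : FrobQ k q) : (par k q).ncard = q ^ 4 := by
  rw [par, Set.ncard_prod, Set.ncard_prod, ncard_neg hq, ncard_sq hq]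
  ring

lemma par_finite (hq : FrobQ k q) : (par k q).Finite := by
  apply Set.finite_of_ncard_pos
  rw [ncard_par hq]
  have := hq.two_le
  positivity

def gmap (F : Frame S) (z : k × k × k) : Submodule k V := F.Gr z.1 z.2.1 (- z.2.1 ^ q) z.2.2

lemma gmap_inj (F : Frame S) : Function.Injective F.gmap := by
  rintro ⟨a, b, d⟩ ⟨a', b', d'⟩ h
  obtain ⟨h1, h2, -, h3⟩ := F.Gr_inj h
  simp_all

lemma skew_L2_eq (F : Frame S) (hq : FrobQ k q) :
    {L | S.IsLn L ∧ L ⊓ F.L2 = ⊥} = F.gmap '' par k q := by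
  ext L
  constructor
  · rintro ⟨hL, h⟩
    obtain ⟨a, b, c, d, rfl⟩ := F.exists_Gr hL.1 h
    obtain ⟨h1, h2, h3, h4⟩ := (F.isLn_Gr hq _ _ _ _).mp hL
    exact ⟨(a, b, d), ⟨h1, h3, h4⟩, by rw [h2]; rfl⟩
  · rintro ⟨⟨a, b, d⟩, ⟨h1, h3, h4⟩, rfl⟩
    exact ⟨(F.isLn_Gr hq _ _ _ _).mpr ⟨h1, rfl, h3, h4⟩, F.Gr_inf_L2 _ _ _ _⟩

lemma ncard_skew_L2 (F : Frame S) (hq : FrobQ k q) :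
    {L | S.IsLn L ∧ L ⊓ F.L2 = ⊥}.ncard = q ^ 4 := by
  rw [skew_L2_eq F hq, Set.ncard_image_of_injective _ F.gmap_inj, ncard_par hq]

lemma ncard_det (hq : FrobQ k q) :
    {z ∈ par k q | z.1 * z.2.2 + z.2.1 ^ (q + 1) = 0}.ncard = (q - 1) * q ^ 2 + q := by
  have hq2 := hq.two_le
  have hfin : {z : k | z ^ q = -z}.Finite :=
    Set.finite_of_ncard_pos (by rw [ncard_neg hq]; omega)
  have hfin2 : {z : k | z ^ q ^ 2 = z}.Finite :=
    Set.finite_of_ncard_pos (by rw [ncard_sq hq]; positivity)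
  have heq : {z ∈ par k q | z.1 * z.2.2 + z.2.1 ^ (q + 1) = 0} =
      (fun p : k × k => (p.1, p.2, - p.2 ^ (q + 1) / p.1)) ''
        (({z : k | z ^ q = -z} \ {0}) ×ˢ {z : k | z ^ q ^ 2 = z}) ∪
      (fun d : k => ((0 : k), (0 : k), d)) '' {z : k | z ^ q = -z} := by
    ext ⟨a, b, d⟩
    constructor
    · rintro ⟨⟨h1, h2, h3⟩, h4⟩
      simp only at h1 h2 h3 h4
      by_cases ha : a = 0
      · right
        subst ha
        rw [zero_mul, zero_add, pow_eq_zero_iff (by omega)] at h4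
        subst h4
        exact ⟨d, h3, rfl⟩
      · left
        refine ⟨(a, b), ⟨⟨h1, ha⟩, h2⟩, ?_⟩
        simp only [Prod.mk.injEq, true_and]
        field_simp
        linear_combination -h4
    · rintro (⟨⟨a', b'⟩, ⟨⟨h1, ha⟩, h2⟩, h⟩ | ⟨d', h1, h⟩)
      · simp only [Prod.mk.injEq] at h
        obtain ⟨rfl, rfl, rfl⟩ := h
        simp only at h1 h2
        have ha' : a' ≠ 0 := ha
        have h1' : a' ^ q = -a' := h1
        have h2' : b' ^ q ^ 2 = b' := h2
        refine ⟨⟨h1, h2, ?_⟩, ?_⟩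
        · change (-b' ^ (q + 1) / a') ^ q = -(-b' ^ (q + 1) / a')
          have : (b' ^ (q + 1)) ^ q = b' ^ (q + 1) := by
            rw [← pow_mul, show (q + 1) * q = q ^ 2 + q by ring, pow_add, h2']; ring
          rw [div_pow, hq.neg_pow, this, h1']
          field_simp
        · change a' * (-b' ^ (q + 1) / a') + b' ^ (q + 1) = 0
          field_simp
          ring
      · simp only [Prod.mk.injEq] at h
        obtain ⟨rfl, rfl, rfl⟩ := h
        refine ⟨⟨?_, ?_, h1⟩, ?_⟩
        · change (0 : k) ^ q = -0
          rw [hq.zero_pow, neg_zero]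
        · change (0 : k) ^ q ^ 2 = 0
          exact hq.sq.zero_pow
        · simp
  rw [heq, Set.ncard_union_eq ?_ (((hfin.subset Set.sdiff_subset).prod hfin2).image _)
    (hfin.image _), Set.ncard_image_of_injective, Set.ncard_image_of_injective,
    Set.ncard_prod, Set.ncard_sdiff_singleton_of_mem, ncard_neg hq, ncard_sq hq]
  · change (0 : k) ^ q = -0
    rw [hq.zero_pow, neg_zero]
  · intro x y h; simpa using h
  · rintro ⟨a, b⟩ ⟨a', b'⟩ h
    simp only [Prod.mk.injEq] at h ⊢
    exact ⟨h.1, h.2.1⟩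
  · rw [Set.disjoint_left]
    rintro _ ⟨⟨a, b⟩, ⟨⟨_, ha⟩, _⟩, rfl⟩ ⟨d, _, h⟩
    simp only [Prod.mk.injEq] at h
    exact ha h.1.symm

lemma ncard_skew_both (F : Frame S) (hq : FrobQ k q) :
    {L | S.IsLn L ∧ L ⊓ F.L1 = ⊥ ∧ L ⊓ F.L2 = ⊥}.ncard = q * (q - 1) * (q ^ 2 + 1) := by
  have heq : {L | S.IsLn L ∧ L ⊓ F.L1 = ⊥ ∧ L ⊓ F.L2 = ⊥} =
      F.gmap '' (par k q \ {z ∈ par k q | z.1 * z.2.2 + z.2.1 ^ (q + 1) = 0}) := by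
    ext L
    have h2 : (S.IsLn L ∧ L ⊓ F.L2 = ⊥) ↔ L ∈ F.gmap '' par k q := by
      rw [← F.skew_L2_eq hq]; rfl
    constructor
    · rintro ⟨hL, h1, h3⟩
      obtain ⟨⟨a, b, d⟩, hz, rfl⟩ := h2.mp ⟨hL, h3⟩
      refine ⟨_, ⟨hz, fun h => ?_⟩, rfl⟩
      refine (F.Gr_inf_L1 _ _ _ _).mp h1 ?_
      have := h.2
      simp only [pow_succ] at this ⊢
      linear_combination this
    · rintro ⟨⟨a, b, d⟩, ⟨hz, hn⟩, rfl⟩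
      obtain ⟨hL, h3⟩ := h2.mpr ⟨_, hz, rfl⟩
      refine ⟨hL, (F.Gr_inf_L1 _ _ _ _).mpr fun h => hn ⟨hz, ?_⟩, h3⟩
      simp only [pow_succ] at h ⊢
      linear_combination h
  have hsub : {z ∈ par k q | z.1 * z.2.2 + z.2.1 ^ (q + 1) = 0} ⊆ par k q := fun z hz => hz.1
  rw [heq, Set.ncard_image_of_injective _ F.gmap_inj,
    Set.ncard_sdiff hsub ((par_finite hq).subset hsub), ncard_par hq, ncard_det hq]
  obtain ⟨r, rfl⟩ : ∃ r, q = r + 1 := ⟨q - 1, by have := hq.two_le; omega⟩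
  rw [Nat.add_sub_cancel]
  apply Nat.sub_eq_of_eq_add
  ring

lemma Tr_inj (F : Frame S) (hq : FrobQ k q) : Function.Injective F.Tr := by
  intro s t h
  by_contra hne
  have h1 := F.Tr_inf_Tr hne hq
  rw [h, inf_idem] at h1
  have := F.finrank_Tr t
  rw [h1] at this
  simp at this

lemma ncard_meet_both (F : Frame S) (hq : FrobQ k q) :
    {L | S.IsLn L ∧ L ⊓ F.L1 ≠ ⊥ ∧ L ⊓ F.L2 ≠ ⊥}.ncard = q ^ 2 + 1 := by
  have hq2 := hq.two_le
  have heq : {L | S.IsLn L ∧ L ⊓ F.L1 ≠ ⊥ ∧ L ⊓ F.L2 ≠ ⊥} =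
      F.Tr '' (insert none (some '' {z : k | z ^ q ^ 2 = z})) := by
    ext L
    constructor
    · rintro ⟨hL, h1, h2⟩
      obtain ⟨t, rfl⟩ := F.exists_Tr hq hL h1 h2
      refine ⟨t, ?_, rfl⟩
      cases t with
      | none => left; rfl
      | some t => right; exact ⟨t, (F.isLn_Tr_some hq t).mp hL, rfl⟩
    · rintro ⟨t, ht, rfl⟩
      refine ⟨?_, F.Tr_inf_L1 t, F.Tr_inf_L2 t⟩
      rcases ht with rfl | ⟨t, ht, rfl⟩
      · exact F.isLn_Tr_none hq
      · exact (F.isLn_Tr_some hq t).mpr ht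
  have hfin2 : {z : k | z ^ q ^ 2 = z}.Finite :=
    Set.finite_of_ncard_pos (by rw [ncard_sq hq]; positivity)
  rw [heq, Set.ncard_image_of_injective _ (F.Tr_inj hq), Set.ncard_insert_of_notMem (by simp)
    (hfin2.image _), Set.ncard_image_of_injective _ (Option.some_injective _), ncard_sq hq]

/-- The key statement about triads, in a frame. -/
lemma triad_gr (F : Frame S) (hq : FrobQ k q) {a b d : k} (hz : (a, b, d) ∈ par k q)
    (hdet : a * d + b ^ (q + 1) ≠ 0) :
    ∃ T U : Set (Submodule k V),
      {L | S.IsLn L ∧ L ⊓ F.L1 ≠ ⊥ ∧ L ⊓ F.L2 ≠ ⊥ ∧ L ⊓ F.gmap (a, b, d) ≠ ⊥} = T ∧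
      T.ncard = q + 1 ∧ (∀ L ∈ T, ∀ M ∈ T, L ≠ M → L ⊓ M = ⊥) ∧
      U.ncard = q + 1 ∧ (∀ L ∈ U, S.IsLn L) ∧ F.L1 ∈ U ∧ F.L2 ∈ U ∧ F.gmap (a, b, d) ∈ U ∧
      (∀ L ∈ T, ∀ M ∈ U, L ⊓ M ≠ ⊥) := by
  classical
  have hq2 := hq.two_le
  obtain ⟨ha, hb, hd⟩ := hz
  change a ^ q = -a at ha
  change b ^ q ^ 2 = b at hb
  change d ^ q = -d at hd
  set R : Set (Option k) := {t | F.Tr t ⊓ F.gmap (a, b, d) ≠ ⊥} with hR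
  have hRn : none ∈ R ↔ d = 0 := F.Tr_none_inf_Gr _ _ _ _
  have hRs : ∀ t, some t ∈ R ↔ a + b * t + t ^ q * (-b ^ q + d * t) = 0 := fun t =>
    F.Tr_some_inf_Gr _ _ _ _ t
  have hrat : ∀ t, some t ∈ R → t ^ q ^ 2 = t := by
    intro t ht
    rw [hRs] at ht
    have h1 := congrArg (· ^ q) ht
    simp only [hq.add_pow, mul_pow, hq.neg_pow, ha, hd, ← pow_mul, hq.zero_pow] at h1
    rw [← pow_two, hb] at h1
    have h2 : (t - t ^ q ^ 2) * (b + d * t ^ q) = 0 := by linear_combination ht + h1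
    rcases mul_eq_zero.mp h2 with h | h
    · linear_combination -h
    · exfalso
      apply hdet
      rw [pow_succ]
      linear_combination d * ht + (b ^ q - d * t) * h
  have hTeq : {L | S.IsLn L ∧ L ⊓ F.L1 ≠ ⊥ ∧ L ⊓ F.L2 ≠ ⊥ ∧ L ⊓ F.gmap (a, b, d) ≠ ⊥} =
      F.Tr '' R := by
    ext L
    constructor
    · rintro ⟨hL, h1, h2, h3⟩
      obtain ⟨t, rfl⟩ := F.exists_Tr hq hL h1 h2
      exact ⟨t, h3, rfl⟩
    · rintro ⟨t, ht, rfl⟩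
      refine ⟨?_, F.Tr_inf_L1 t, F.Tr_inf_L2 t, ht⟩
      cases t with
      | none => exact F.isLn_Tr_none hq
      | some t => exact (F.isLn_Tr_some hq t).mpr (hrat t ht)
  have hRcard : R.ncard = q + 1 := by
    have hbin := ncard_binary hq hdet
    have hfin : {t : k | a + b * t + t ^ q * (-b ^ q + d * t) = 0}.Finite := by
      apply Set.finite_of_ncard_pos
      rw [hbin]; split_ifs <;> omega
    by_cases hd0 : d = 0
    · have : R = insert none (some '' {t : k | a + b * t + t ^ q * (-b ^ q + d * t) = 0}) := by
        ext t
        cases t with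
        | none => simp [hRn, hd0]
        | some t => rw [hRs]; simp
      rw [this, Set.ncard_insert_of_notMem (by simp) (hfin.image _),
        Set.ncard_image_of_injective _ (Option.some_injective _), hbin, if_pos hd0]
    · have : R = some '' {t : k | a + b * t + t ^ q * (-b ^ q + d * t) = 0} := by
        ext t
        cases t with
        | none => simp [hRn, hd0]
        | some t => rw [hRs]; simp
      rw [this, Set.ncard_image_of_injective _ (Option.some_injective _), hbin, if_neg hd0]
  have hfix : {z : k | z ^ q = z}.ncard = q := by
    have := ncard_pow_eq hq (c := (1 : k)) (by simp)
    simpa using this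
  have hfixfin : {z : k | z ^ q = z}.Finite :=
    Set.finite_of_ncard_pos (by rw [hfix]; omega)
  set ψ : k → Submodule k V := fun l => F.gmap (l * a, l * b, l * d) with hψ
  have hψinj : Function.Injective ψ := by
    intro l m h
    have h1 := F.gmap_inj h
    simp only [Prod.mk.injEq] at h1
    by_contra hne
    have key : ∀ x : k, l * x = m * x → x = 0 := by
      intro x hx
      have : (l - m) * x = 0 := by linear_combination hx
      simpa [sub_ne_zero.mpr hne] using this
    apply hdet
    rw [key a h1.1, key b h1.2.1]
    simp
  have hL1 : ψ 0 = F.L1 := by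
    simp only [hψ, zero_mul, gmap, L1, hq.zero_pow, neg_zero]
  have hψ1 : ψ 1 = F.gmap (a, b, d) := by simp [hψ]
  refine ⟨_, insert F.L2 (ψ '' {z : k | z ^ q = z}), rfl, ?_, ?_, ?_, ?_, ?_, ?_, ?_, ?_⟩
  · rw [hTeq, Set.ncard_image_of_injective _ (F.Tr_inj hq), hRcard]
  · rw [hTeq]
    rintro _ ⟨s, hs, rfl⟩ _ ⟨t, ht, rfl⟩ hne
    exact F.Tr_inf_Tr (fun h => hne (by rw [h])) hq
  · rw [Set.ncard_insert_of_notMem _ (hfixfin.image _), Set.ncard_image_of_injective _ hψinj, hfix]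
    rintro ⟨l, -, h⟩
    have h1 : ψ l ⊓ F.L2 = ⊥ := F.Gr_inf_L2 _ _ _ _
    have h2 := F.finrank_L2
    rw [h, inf_idem] at h1
    rw [h1] at h2
    simp at h2
  · rintro L (rfl | ⟨l, hl, rfl⟩)
    · exact F.isLn_L2 hq
    · change l ^ q = l at hl
      refine (F.isLn_Gr hq _ _ _ _).mpr ⟨?_, rfl, ?_, ?_⟩
      · simp only [mul_pow, hl, ha]; ring
      · simp only [mul_pow, hb]
        rw [pow_two, pow_mul, hl, hl]
      · simp only [mul_pow, hl, hd]; ring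
  · right
    exact ⟨0, hq.zero_pow, hL1⟩
  · left; rfl
  · right
    exact ⟨1, one_pow _, hψ1⟩
  · rw [hTeq]
    rintro _ ⟨t, ht, rfl⟩ M (rfl | ⟨l, hl, rfl⟩)
    · exact F.Tr_inf_L2 t
    · change l ^ q = l at hl
      cases t with
      | none =>
        refine (F.Tr_none_inf_Gr _ _ _ _).mpr ?_
        rw [hRn] at ht
        simp [ht]
      | some t =>
        refine (F.Tr_some_inf_Gr _ _ _ _ _).mpr ?_
        rw [hRs] at ht
        simp only [mul_pow, hl]
        linear_combination l * ht

end Frame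

namespace SForm
variable {k V : Type*} [Field k] [AddCommGroup V] [Module k V] {q : ℕ}
variable [IsAlgClosed k] [FiniteDimensional k V]

lemma triad (S : SForm k V q) (hq : FrobQ k q) (hV : finrank k V = 4)
    {L1 L2 L3 : Submodule k V} (h1 : S.IsLn L1) (h2 : S.IsLn L2) (h3 : S.IsLn L3)
    (h12 : L1 ⊓ L2 = ⊥) (h31 : L3 ⊓ L1 = ⊥) (h32 : L3 ⊓ L2 = ⊥) :
    ∃ T U : Set (Submodule k V),
      {L | S.IsLn L ∧ L ⊓ L1 ≠ ⊥ ∧ L ⊓ L2 ≠ ⊥ ∧ L ⊓ L3 ≠ ⊥} = T ∧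
      T.ncard = q + 1 ∧ (∀ L ∈ T, ∀ M ∈ T, L ≠ M → L ⊓ M = ⊥) ∧
      U.ncard = q + 1 ∧ (∀ L ∈ U, S.IsLn L) ∧ L1 ∈ U ∧ L2 ∈ U ∧ L3 ∈ U ∧
      (∀ L ∈ T, ∀ M ∈ U, L ⊓ M ≠ ⊥) := by
  obtain ⟨F, rfl, rfl⟩ := S.exists_frame hq hV h1 h2 h12
  have : L3 ∈ F.gmap '' Frame.par k q := by rw [← F.skew_L2_eq hq]; exact ⟨h3, h32⟩
  obtain ⟨⟨a, b, d⟩, hz, rfl⟩ := this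
  apply F.triad_gr hq hz
  intro h
  refine (F.Gr_inf_L1 _ _ _ _).mp h31 ?_
  simp only [pow_succ] at h ⊢
  linear_combination h

lemma ncard_skew (S : SForm k V q) (hq : FrobQ k q) (hV : finrank k V = 4)
    {L : Submodule k V} (hL : S.IsLn L) : {M | S.IsLn M ∧ M ⊓ L = ⊥}.ncard = q ^ 4 := by
  obtain ⟨L', hL', hs⟩ := S.exists_skew hq hV hL
  obtain ⟨F, -, rfl⟩ := S.exists_frame hq hV hL' hL (by rw [inf_comm]; exact hs)
  exact F.ncard_skew_L2 hq

lemma ncard_skew2 (S : SForm k V q) (hq : FrobQ k q) (hV : finrank k V = 4)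
    {L L' : Submodule k V} (hL : S.IsLn L) (hL' : S.IsLn L') (hs : L ⊓ L' = ⊥) :
    {M | S.IsLn M ∧ M ⊓ L = ⊥ ∧ M ⊓ L' = ⊥}.ncard = q * (q - 1) * (q ^ 2 + 1) := by
  obtain ⟨F, rfl, rfl⟩ := S.exists_frame hq hV hL hL' hs
  exact F.ncard_skew_both hq

lemma ncard_lines (S : SForm k V q) (hq : FrobQ k q) (hV : finrank k V = 4) :
    {M | S.IsLn M}.ncard = (q ^ 3 + 1) * (q + 1) := by
  have hq2 := hq.two_le
  obtain ⟨L, hL⟩ := S.exists_line hq hV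
  obtain ⟨L', hL', hs⟩ := S.exists_skew hq hV hL
  have c1 := S.ncard_skew hq hV hL
  have c2 := S.ncard_skew hq hV hL'
  have c3 := S.ncard_skew2 hq hV hL hL' hs
  have c4 : {M | S.IsLn M ∧ M ⊓ L ≠ ⊥ ∧ M ⊓ L' ≠ ⊥}.ncard = q ^ 2 + 1 := by
    obtain ⟨F, rfl, rfl⟩ := S.exists_frame hq hV hL hL' hs
    exact F.ncard_meet_both hq
  have f1 : {M | S.IsLn M ∧ M ⊓ L = ⊥}.Finite :=
    Set.finite_of_ncard_pos (by rw [c1]; positivity)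
  have f2 : {M | S.IsLn M ∧ M ⊓ L' = ⊥}.Finite :=
    Set.finite_of_ncard_pos (by rw [c2]; positivity)
  have f4 : {M | S.IsLn M ∧ M ⊓ L ≠ ⊥ ∧ M ⊓ L' ≠ ⊥}.Finite :=
    Set.finite_of_ncard_pos (by rw [c4]; positivity)
  have e1 : {M | S.IsLn M} = ({M | S.IsLn M ∧ M ⊓ L = ⊥} ∪ {M | S.IsLn M ∧ M ⊓ L' = ⊥}) ∪
      {M | S.IsLn M ∧ M ⊓ L ≠ ⊥ ∧ M ⊓ L' ≠ ⊥} := by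
    ext M
    simp only [Set.mem_ofPred_eq, Set.mem_union]
    tauto
  have e2 : {M | S.IsLn M ∧ M ⊓ L = ⊥} ∩ {M | S.IsLn M ∧ M ⊓ L' = ⊥} =
      {M | S.IsLn M ∧ M ⊓ L = ⊥ ∧ M ⊓ L' = ⊥} := by
    ext M
    simp only [Set.mem_ofPred_eq, Set.mem_inter_iff]
    tauto
  have h1 := Set.ncard_union_add_ncard_inter _ _ f1 f2
  rw [e2, c1, c2, c3] at h1
  rw [e1, Set.ncard_union_eq _ (f1.union f2) f4, c4]
  · obtain ⟨r, rfl⟩ : ∃ r, q = r + 1 := ⟨q - 1, by omega⟩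
    rw [Nat.add_sub_cancel] at h1
    nlinarith
  · rw [Set.disjoint_left]
    rintro M (hM | hM) hM'
    · exact hM'.2.1 hM.2
    · exact hM'.2.2 hM.2

end SForm


section comb
open Finset Classical
variable {α : Type*}

noncomputable def tri3 (sk : α → α → Prop) (X : Finset α) : Finset (α × α × α) :=
  (X ×ˢ X ×ˢ X).filter (fun t => sk t.1 t.2.1 ∧ sk t.2.2 t.1 ∧ sk t.2.2 t.2.1)

lemma mem_tri3 (sk : α → α → Prop) (X : Finset α) (x y z : α) :
    (x, y, z) ∈ tri3 sk X ↔ (x ∈ X ∧ y ∈ X ∧ z ∈ X) ∧ sk x y ∧ sk z x ∧ sk z y := by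
  simp [tri3]

lemma card_tri3 (sk : α → α → Prop) (X : Finset α) (a b : ℕ)
    (h1 : ∀ x ∈ X, #{y ∈ X | sk x y} = a)
    (h2 : ∀ x ∈ X, ∀ y ∈ X, sk x y → #{z ∈ X | sk z x ∧ sk z y} = b) :
    #(tri3 sk X) = #X * (a * b) := by
  rw [tri3, card_filter, sum_product, ← smul_eq_mul, ← sum_const]
  refine sum_congr rfl fun x hx => ?_
  rw [sum_product, ← h1 x hx, ← smul_eq_mul, ← sum_const, sum_filter]
  refine sum_congr rfl fun y hy => ?_
  by_cases h : sk x y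
  · simp only [h, true_and, if_true]
    rw [← h2 x hx y hy h, card_filter]
  · simp [h]

def IsConf (sk : α → α → Prop) (d : ℕ) (S : Finset α) : Prop :=
  #S = 2 * d ∧ ∃ A B : Finset α, S = A ∪ B ∧ #A = d ∧ #B = d ∧
    (∀ x ∈ A, ∀ y ∈ A, x ≠ y → sk x y) ∧ (∀ x ∈ B, ∀ y ∈ B, x ≠ y → sk x y) ∧
    (∀ x ∈ A, ∀ y ∈ B, ¬ sk x y)

variable (sk : α → α → Prop)

lemma three_of_card {T : Finset α} (h : 2 < #T) :
    ∃ a b c, a ∈ T ∧ b ∈ T ∧ c ∈ T ∧ a ≠ b ∧ a ≠ c ∧ b ≠ c := by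
  obtain ⟨a, b, c, h⟩ := two_lt_card_iff.mp h
  exact ⟨a, b, c, h⟩

lemma filt1 (symm : ∀ x y, sk x y → sk y x) {q : ℕ} {A B : Finset α}
    (irr : ∀ x ∈ A, ¬ sk x x)
    (hA : #A = q + 1) (sA : ∀ x ∈ A, ∀ y ∈ A, x ≠ y → sk x y)
    (m : ∀ x ∈ A, ∀ y ∈ B, ¬ sk x y) :
    (∀ x ∈ A, #{y ∈ A ∪ B | sk x y} = q) ∧
    (∀ x ∈ A, ∀ y ∈ A ∪ B, sk x y → #{z ∈ A ∪ B | sk z x ∧ sk z y} = q - 1) := by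
  constructor
  · intro x hx
    have : {y ∈ A ∪ B | sk x y} = A.erase x := by
      ext y
      simp only [mem_filter, mem_union, mem_erase]
      constructor
      · rintro ⟨h | h, hs⟩
        · exact ⟨by rintro rfl; exact irr _ h hs, h⟩
        · exact (m x hx y h hs).elim
      · rintro ⟨h, h'⟩
        exact ⟨Or.inl h', sA x hx y h' (Ne.symm h)⟩
    rw [this, card_erase_of_mem hx, hA]; rfl
  · intro x hx y hy hs
    have hy : y ∈ A := by
      rcases mem_union.mp hy with h | h
      · exact h
      · exact (m x hx y h hs).elim
    have hxy : x ≠ y := by rintro rfl; exact irr _ hx hs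
    have : {z ∈ A ∪ B | sk z x ∧ sk z y} = (A.erase x).erase y := by
      ext z
      simp only [mem_filter, mem_union, mem_erase]
      constructor
      · rintro ⟨h | h, hs, hs'⟩
        · exact ⟨by rintro rfl; exact irr _ h hs', by rintro rfl; exact irr _ h hs, h⟩
        · exact (m x hx z h (symm _ _ hs)).elim
      · rintro ⟨h, h', h''⟩
        exact ⟨Or.inl h'', sA z h'' x hx h', sA z h'' y hy h⟩
    rw [this, card_erase_of_mem (by simp [hy, Ne.symm hxy]), card_erase_of_mem hx, hA]; rfl

lemma conf_tri (symm : ∀ x y, sk x y → sk y x) {q : ℕ} {S : Finset α} (hS : IsConf sk (q + 1) S)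
    (irr : ∀ x ∈ S, ¬ sk x x) : #(tri3 sk S) = 2 * (q + 1) * (q * (q - 1)) := by
  obtain ⟨hc, A, B, rfl, hA, hB, sA, sB, m⟩ := hS
  have f1 := filt1 sk symm (fun x hx => irr x (mem_union_left _ hx)) hA sA m
  have f2 := filt1 sk symm (fun x hx => irr x (mem_union_right _ hx)) hB sB
    (fun x hx y hy h => m y hy x hx (symm _ _ h))
  rw [union_comm B A] at f2
  rw [card_tri3 sk _ q (q - 1), hc]
  · intro x hx
    rcases mem_union.mp hx with h | h
    · exact f1.1 x h
    · exact f2.1 x h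
  · intro x hx
    rcases mem_union.mp hx with h | h
    · exact f1.2 x h
    · exact f2.2 x h

/-- The hypothesis on triads. -/
def TriadProp (sk : α → α → Prop) (Λ : Finset α) (q : ℕ) : Prop :=
  ∀ x ∈ Λ, ∀ y ∈ Λ, ∀ z ∈ Λ, sk x y → sk z x → sk z y → ∃ U : Finset α, U ⊆ Λ ∧
    #{w ∈ Λ | ¬ sk w x ∧ ¬ sk w y ∧ ¬ sk w z} = q + 1 ∧
    (∀ u ∈ Λ, ∀ w ∈ Λ, (¬ sk u x ∧ ¬ sk u y ∧ ¬ sk u z) → (¬ sk w x ∧ ¬ sk w y ∧ ¬ sk w z) →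
      u ≠ w → sk u w) ∧ #U = q + 1 ∧ x ∈ U ∧ y ∈ U ∧ z ∈ U ∧
    (∀ w ∈ Λ, (¬ sk w x ∧ ¬ sk w y ∧ ¬ sk w z) → ∀ u ∈ U, ¬ sk w u)

lemma unique_conf (symm : ∀ x y, sk x y → sk y x) {q : ℕ} (hq : 2 ≤ q) {Λ : Finset α}
    (irr : ∀ x ∈ Λ, ¬ sk x x) (H : TriadProp sk Λ q) (x y z : α) (hx : x ∈ Λ) (hy : y ∈ Λ)
    (hz : z ∈ Λ) (hxy : sk x y) (hzx : sk z x) (hzy : sk z y) :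
    ∃! S, S ⊆ Λ ∧ IsConf sk (q + 1) S ∧ x ∈ S ∧ y ∈ S ∧ z ∈ S := by
  obtain ⟨U, hUΛ, hT, sT, hU, xU, yU, zU, mTU⟩ := H x hx y hy z hz hxy hzx hzy
  set T := {w ∈ Λ | ¬ sk w x ∧ ¬ sk w y ∧ ¬ sk w z} with hTdef
  have hTΛ : T ⊆ Λ := filter_subset _ _
  have sT' : ∀ u ∈ T, ∀ w ∈ T, u ≠ w → sk u w := fun u hu w hw =>
    sT u (hTΛ hu) w (hTΛ hw) (mem_filter.mp hu).2 (mem_filter.mp hw).2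
  have mTU' : ∀ w ∈ T, ∀ u ∈ U, ¬ sk w u := fun w hw =>
    mTU w (hTΛ hw) (mem_filter.mp hw).2
  obtain ⟨m1, m2, m3, hm1, hm2, hm3, n12, n13, n23⟩ := three_of_card (T := T) (by omega)
  obtain ⟨-, -, hV, sV, -, -, -, -, -⟩ := H m1 (hTΛ hm1) m2 (hTΛ hm2) m3 (hTΛ hm3)
    (sT' _ hm1 _ hm2 n12) (sT' _ hm3 _ hm1 n13.symm) (sT' _ hm3 _ hm2 n23.symm)
  set W := {w ∈ Λ | ¬ sk w m1 ∧ ¬ sk w m2 ∧ ¬ sk w m3} with hWdef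
  have key : ∀ A : Finset α, A ⊆ Λ → #A = q + 1 → (∀ t ∈ T, ∀ u ∈ A, ¬ sk t u) → A = W := by
    intro A hA hAc hm
    apply eq_of_subset_of_card_le
    · intro u hu
      exact mem_filter.mpr ⟨hA hu, fun h => hm m1 hm1 u hu (symm _ _ h),
        fun h => hm m2 hm2 u hu (symm _ _ h), fun h => hm m3 hm3 u hu (symm _ _ h)⟩
    · omega
  have hUW := key U hUΛ hU mTU'
  have sU : ∀ u ∈ U, ∀ w ∈ U, u ≠ w → sk u w := by
    intro u hu w hw
    have hu' : u ∈ W := hUW ▸ hu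
    have hw' : w ∈ W := hUW ▸ hw
    exact sV u (hUΛ hu) w (hUΛ hw) (mem_filter.mp hu').2 (mem_filter.mp hw').2
  have hdis : Disjoint U T := by
    rw [disjoint_left]
    intro u hu hut
    by_cases h : u = x
    · subst h; exact mTU' _ hut _ yU hxy
    · exact mTU' _ hut _ xU (sU u hu x xU h)
  have cand : ∀ A B : Finset α, A ∪ B ⊆ Λ → #A = q + 1 → #B = q + 1 →
      (∀ u ∈ A, ∀ w ∈ B, ¬ sk u w) → x ∈ A → y ∈ A → z ∈ A → A ∪ B = U ∪ T := by
    intro A B hAB hA hB m xA yA zA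
    have hBT : B = T := by
      apply eq_of_subset_of_card_le
      · intro u hu
        exact mem_filter.mpr ⟨hAB (mem_union_right _ hu), fun h => m x xA u hu (symm _ _ h),
          fun h => m y yA u hu (symm _ _ h), fun h => m z zA u hu (symm _ _ h)⟩
      · omega
    have hAW := key A (fun u hu => hAB (mem_union_left _ hu)) hA
      (fun t ht u hu h => m u hu t (hBT ▸ ht) (symm _ _ h))
    rw [hBT, hAW, hUW]
  refine ⟨U ∪ T, ⟨union_subset hUΛ hTΛ, ⟨?_, U, T, rfl, hU, hT, sU, sT', ?_⟩,
    mem_union_left _ xU, mem_union_left _ yU, mem_union_left _ zU⟩, ?_⟩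
  · rw [card_union_of_disjoint hdis, hU, hT]; ring
  · intro u hu t ht h
    exact mTU' t ht u hu (symm _ _ h)
  · rintro S ⟨hSΛ, ⟨hc, A, B, rfl, hA, hB, sA, sB, m⟩, xS, yS, zS⟩
    rcases mem_union.mp xS with hxA | hxB
    · have yA : y ∈ A := (mem_union.mp yS).resolve_right fun h => m x hxA y h hxy
      have zA : z ∈ A := (mem_union.mp zS).resolve_right fun h => m x hxA z h (symm _ _ hzx)
      exact cand A B hSΛ hA hB m hxA yA zA
    · have yA : y ∈ B := (mem_union.mp yS).resolve_left fun h => m y h x hxB (symm _ _ hxy)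
      have zA : z ∈ B := (mem_union.mp zS).resolve_left fun h => m z h x hxB hzx
      rw [union_comm] at hSΛ ⊢
      exact cand B A hSΛ hB hA (fun u hu w hw h => m w hw u hu (symm _ _ h)) hxB yA zA

lemma count_conf (symm : ∀ x y, sk x y → sk y x) {q : ℕ} (hq : 2 ≤ q) {Λ : Finset α}
    (irr : ∀ x ∈ Λ, ¬ sk x x) (H : TriadProp sk Λ q)
    (c0 : #Λ = (q ^ 3 + 1) * (q + 1)) (c1 : ∀ x ∈ Λ, #{y ∈ Λ | sk x y} = q ^ 4)
    (c2 : ∀ x ∈ Λ, ∀ y ∈ Λ, sk x y → #{z ∈ Λ | sk z x ∧ sk z y} = q * (q - 1) * (q ^ 2 + 1)) :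
    2 * #{S ∈ Λ.powerset | IsConf sk (q + 1) S} = (q ^ 3 + 1) * (q ^ 2 + 1) * q ^ 4 := by
  have h1 := card_tri3 sk Λ _ _ c1 c2
  have h2 := card_mul_eq_card_mul (s := {S ∈ Λ.powerset | IsConf sk (q + 1) S}) (t := tri3 sk Λ)
    (fun S t => t ∈ tri3 sk S) (m := 2 * (q + 1) * (q * (q - 1))) (n := 1) ?_ ?_
  · rw [h1, c0] at h2
    obtain ⟨r, rfl⟩ : ∃ r, q = r + 1 := ⟨q - 1, by omega⟩
    rw [Nat.add_sub_cancel] at h2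
    have hr : 0 < r := by omega
    have : 0 < (r + 1 + 1) * ((r + 1) * r) := by positivity
    refine Nat.eq_of_mul_eq_mul_right this ?_
    linarith
  · intro S hS
    rw [mem_filter, mem_powerset] at hS
    rw [← conf_tri sk symm hS.2 (fun x hx => irr x (hS.1 hx))]
    congr 1
    ext ⟨x, y, z⟩
    simp only [bipartiteAbove, mem_filter, mem_tri3]
    constructor
    · exact fun h => h.2
    · exact fun h => ⟨⟨⟨hS.1 h.1.1, hS.1 h.1.2.1, hS.1 h.1.2.2⟩, h.2⟩, h⟩
  · rintro ⟨x, y, z⟩ ht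
    rw [mem_tri3] at ht
    obtain ⟨⟨hx, hy, hz⟩, hxy, hzx, hzy⟩ := ht
    obtain ⟨S, ⟨hS1, hS2, hS3⟩, hu⟩ := unique_conf sk symm hq irr H x y z hx hy hz hxy hzx hzy
    rw [card_eq_one]
    refine ⟨S, ?_⟩
    ext S'
    simp only [bipartiteBelow, mem_filter, mem_tri3, mem_powerset, mem_singleton]
    constructor
    · rintro ⟨⟨h1, h2⟩, h3, h4⟩
      exact hu S' ⟨h1, h2, h3⟩
    · rintro rfl
      exact ⟨⟨hS1, hS2⟩, hS3, hxy, hzx, hzy⟩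

end comb

lemma frobQ_of_char {k : Type*} [Field k] (p e q : ℕ) (hp : p.Prime) (hchar : CharP k p)
    (he : 1 ≤ e) (hq : q = p ^ e) : FrobQ k q := by
  have := Fact.mk hp
  subst hq
  refine ⟨?_, fun a b => add_pow_char_pow a b p e, ?_⟩
  · exact hp.two_le.trans (Nat.le_self_pow (by omega) p)
  · rw [Nat.cast_pow, CharP.cast_eq_zero, zero_pow (by omega)]

lemma FrobQ.sum_pow {k : Type*} [Field k] {q : ℕ} (hq : FrobQ k q) {ι : Type*} (s : Finset ι)
    (f : ι → k) : (∑ i ∈ s, f i) ^ q = ∑ i ∈ s, f i ^ q := by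
  classical
  induction s using Finset.induction_on with
  | empty => simpa using hq.zero_pow
  | insert a s ha ih => rw [Finset.sum_insert ha, Finset.sum_insert ha, hq.add_pow, ih]

section inst
open Matrix
variable {k : Type*} [Field k] {q : ℕ}

def matB (q : ℕ) (A : Matrix (Fin 4) (Fin 4) k) (x y : Fin 4 → k) : k :=
  ∑ i, ∑ j, A i j * x i ^ q * y j

lemma matB_eq (A : Matrix (Fin 4) (Fin 4) k) (x y : Fin 4 → k) :
    matB q A x y = (fun i => x i ^ q) ⬝ᵥ (A *ᵥ y) := by
  simp only [matB, dotProduct, mulVec, Finset.mul_sum]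
  refine Finset.sum_congr rfl fun i _ => Finset.sum_congr rfl fun j _ => ?_
  ring

lemma matB_eq' (A : Matrix (Fin 4) (Fin 4) k) (x y : Fin 4 → k) :
    matB q A x y = ((fun i => x i ^ q) ᵥ* A) ⬝ᵥ y := by
  rw [matB_eq, dotProduct_mulVec]

lemma exists_sform [IsAlgClosed k] (hq : FrobQ k q) (A : Matrix (Fin 4) (Fin 4) k)
    (hA : IsUnit A) : ∃ S : SForm k (Fin 4 → k) q, S.B = matB q A := by
  have hq2 := hq.two_le
  have hdet : IsUnit A.det := (Matrix.isUnit_iff_isUnit_det A).mp hA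
  have hphi : ∀ x : Fin 4 → k, ∃ w : Fin 4 → k, ∀ y, matB q A y w = matB q A x y ^ q := by
    intro x
    refine ⟨A⁻¹ *ᵥ (fun j => ((fun i => x i ^ q) ᵥ* A) j ^ q), fun y => ?_⟩
    rw [matB_eq, mulVec_mulVec, Matrix.mul_nonsing_inv _ hdet, one_mulVec, matB_eq']
    simp only [dotProduct]
    rw [hq.sum_pow]
    refine Finset.sum_congr rfl fun i _ => ?_
    rw [mul_pow, mul_comm]
  choose φ hφ using hphi
  refine ⟨⟨matB q A, ?_, ?_, ?_, ?_, ?_, ?_, φ, fun x y => hφ x y⟩, rfl⟩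
  · intro x y z
    simp only [matB, Pi.add_apply, hq.add_pow, mul_add, add_mul, Finset.sum_add_distrib]
  · intro x y z
    simp only [matB, Pi.add_apply, mul_add, Finset.sum_add_distrib]
  · intro c x y
    simp only [matB, Pi.smul_apply, smul_eq_mul, mul_pow, Finset.mul_sum]
    refine Finset.sum_congr rfl fun i _ => Finset.sum_congr rfl fun j _ => ?_
    ring
  · intro c x y
    simp only [matB, Pi.smul_apply, smul_eq_mul, Finset.mul_sum]
    refine Finset.sum_congr rfl fun i _ => Finset.sum_congr rfl fun j _ => ?_
    ring
  · intro x h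
    have h1 : (fun i => x i ^ q) ᵥ* A = 0 := by
      apply dotProduct_eq_zero
      intro y
      rw [← matB_eq', h y]
    have h2 : (fun i => x i ^ q) = 0 := by
      have := congrArg (fun v => v ᵥ* A⁻¹) h1
      simpa [vecMul_vecMul, Matrix.mul_nonsing_inv _ hdet] using this
    funext i
    exact eq_zero_of_pow_eq_zero (n := q) (congrFun h2 i)
  · intro y h
    have h1 : A *ᵥ y = 0 := by
      funext j
      have := h (Pi.single j 1)
      rw [matB_eq] at this
      have h3 : (fun i => (Pi.single j (1 : k) : Fin 4 → k) i ^ q) = Pi.single j 1 := by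
        funext i
        by_cases hij : i = j
        · subst hij; simp
        · simp [Pi.single_eq_of_ne hij, hq.zero_pow]
      rw [h3] at this
      simpa using this
    have := congrArg (fun v => A⁻¹ *ᵥ v) h1
    simpa [mulVec_mulVec, Matrix.nonsing_inv_mul _ hdet] using this

end inst

namespace SForm
variable {k V : Type*} [Field k] [AddCommGroup V] [Module k V] {q : ℕ}
variable [IsAlgClosed k] [FiniteDimensional k V]

open Classical in
lemma count_fin (S : SForm k V q) (hq : FrobQ k q) (hV : finrank k V = 4)
    {Λ : Finset (Submodule k V)} (hΛ : ∀ L, L ∈ Λ ↔ S.IsLn L) :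
    2 * (Finset.card {X ∈ Λ.powerset | IsConf (fun L M : Submodule k V => L ⊓ M = ⊥) (q + 1) X})
      = (q ^ 3 + 1) * (q ^ 2 + 1) * q ^ 4 := by
  have hcast : ∀ P : Submodule k V → Prop,
      (Finset.card {M ∈ Λ | P M}) = {M | S.IsLn M ∧ P M}.ncard := by
    intro P
    rw [← Set.ncard_coe_finset]
    congr 1
    ext M
    simp [hΛ]
  have symm : ∀ L M : Submodule k V, L ⊓ M = ⊥ → M ⊓ L = ⊥ := fun L M h => by
    rw [inf_comm]; exact h
  have irr : ∀ L ∈ Λ, ¬ (L ⊓ L = ⊥) := by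
    intro L hL h
    rw [inf_idem] at h
    have := ((hΛ L).mp hL).1
    rw [h, finrank_bot] at this
    omega
  refine count_conf _ symm hq.two_le irr ?_ ?_ ?_ ?_
  · intro x hx y hy z hz hxy hzx hzy
    obtain ⟨T, U, rfl, cT, sT, cU, lU, xU, yU, zU, m⟩ :=
      S.triad hq hV ((hΛ x).mp hx) ((hΛ y).mp hy) ((hΛ z).mp hz) hxy hzx hzy
    have fU : U.Finite := Set.finite_of_ncard_pos (by omega)
    refine ⟨fU.toFinset, ?_, ?_, ?_, ?_, ?_, ?_, ?_, ?_⟩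
    · intro u hu
      exact (hΛ u).mpr (lU u (fU.mem_toFinset.mp hu))
    · rw [← cT]
      convert hcast (fun w => w ⊓ x ≠ ⊥ ∧ w ⊓ y ≠ ⊥ ∧ w ⊓ z ≠ ⊥)
    · intro u hu w hw h h' hne
      exact sT u ⟨(hΛ u).mp hu, h⟩ w ⟨(hΛ w).mp hw, h'⟩ hne
    · rw [← cU, Set.ncard_eq_toFinset_card _ fU]
    · exact fU.mem_toFinset.mpr xU
    · exact fU.mem_toFinset.mpr yU
    · exact fU.mem_toFinset.mpr zU
    · intro w hw h u hu
      exact m w ⟨(hΛ w).mp hw, h⟩ u (fU.mem_toFinset.mp hu)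
  · rw [← S.ncard_lines hq hV, ← Set.ncard_coe_finset]
    congr 1
    ext M
    simp [hΛ]
  · intro x hx
    rw [← S.ncard_skew hq hV ((hΛ x).mp hx), ← hcast]
    congr 1
    ext M
    simp [inf_comm]
  · intro x hx y hy hxy
    rw [← S.ncard_skew2 hq hV ((hΛ x).mp hx) ((hΛ y).mp hy) hxy]
    convert hcast (fun w => w ⊓ x = ⊥ ∧ w ⊓ y = ⊥)

end SForm

/-- A smooth extremal surface `X` of degree `d = q+1`
contains exactly `½(q³+1)(q²+1)q⁴` quadric configurations: twice the number
of quadric configurations on `X` equals `(q³+1)(q²+1)q⁴`. -/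
theorem count_quadric_configs {k : Type*} [Field k] [IsAlgClosed k]
    (p e q : ℕ) (hp : p.Prime) (hchar : CharP k p) (he : 1 ≤ e) (hq : q = p ^ e)
    (A : Matrix (Fin 4) (Fin 4) k) (hA : IsUnit A) :
    2 * {S : Set (Submodule k (Fin 4 → k)) |
        IsQuadricConfig (q + 1) (extremalCone k q A) S}.ncard
      = (q ^ 3 + 1) * (q ^ 2 + 1) * q ^ 4 := by
  classical
  have hF : FrobQ k q := frobQ_of_char p e q hp hchar he hq
  obtain ⟨S, hS⟩ := exists_sform hF A hA
  have hV : finrank k (Fin 4 → k) = 4 := by simp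
  have hq2 := hF.two_le
  have hline : ∀ L, IsLineOn (extremalCone k q A) L ↔ S.IsLn L := by
    intro L
    rw [S.isLn_iff hF, hS]
    rfl
  have hfin : {M | S.IsLn M}.Finite :=
    Set.finite_of_ncard_pos (by rw [S.ncard_lines hF hV]; positivity)
  have hΛ : ∀ L, L ∈ hfin.toFinset ↔ S.IsLn L := fun L => hfin.mem_toFinset
  rw [← S.count_fin hF hV hΛ, ← Set.ncard_coe_finset,
    ← Set.ncard_image_of_injective _ Finset.coe_injective]
  congr 2
  ext X
  constructor
  · rintro ⟨hc, hl, ℒ, ℳ, rfl, cL, cM, sL, sM, m⟩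
    have fL : ℒ.Finite := Set.finite_of_ncard_pos (by omega)
    have fM : ℳ.Finite := Set.finite_of_ncard_pos (by omega)
    refine ⟨fL.toFinset ∪ fM.toFinset, ?_, by simp⟩
    rw [Finset.mem_coe, Finset.mem_filter, Finset.mem_powerset]
    refine ⟨?_, ?_, fL.toFinset, fM.toFinset, rfl, ?_, ?_, ?_, ?_, ?_⟩
    · intro L hL
      rw [hΛ, ← hline]
      apply hl
      simpa using hL
    · rw [← hc, ← Set.ncard_coe_finset]
      congr 1
      simp
    · rw [← cL, Set.ncard_eq_toFinset_card _ fL]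
    · rw [← cM, Set.ncard_eq_toFinset_card _ fM]
    · intro L hL M hM
      exact sL L (fL.mem_toFinset.mp hL) M (fL.mem_toFinset.mp hM)
    · intro L hL M hM
      exact sM L (fM.mem_toFinset.mp hL) M (fM.mem_toFinset.mp hM)
    · intro L hL M hM
      exact m L (fL.mem_toFinset.mp hL) M (fM.mem_toFinset.mp hM)
  · rintro ⟨Y, hY, rfl⟩
    rw [Finset.mem_coe, Finset.mem_filter, Finset.mem_powerset] at hY
    obtain ⟨hsub, hc, ℒ, ℳ, rfl, cL, cM, sL, sM, m⟩ := hY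
    refine ⟨?_, ?_, (ℒ : Set _), (ℳ : Set _), by simp, ?_, ?_, ?_, ?_, ?_⟩
    · rw [Set.ncard_coe_finset, hc]
    · intro L hL
      rw [hline, ← hΛ]
      exact hsub hL
    · rw [Set.ncard_coe_finset, cL]
    · rw [Set.ncard_coe_finset, cM]
    · exact fun L hL M hM => sL L hL M hM
    · exact fun L hL M hM => sM L hL M hM
    · exact fun L hL M hM => m L hL M hM
end
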